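/- arXiv:1803.01882 — 6 statements merged into one kernel-verified Lean document; each statement's English description precedes it below -/
import Mathlib

section
/- Let p_1, …, p_k be real polynomials in l variables, each of total degree at most d, with d ≥ 1 and k ≥ l ≥ 1. Then the number of distinct sign vectors (sgn(p_1(x)), …, sgn(p_k(x))) ∈ {−1, 0, 1}^k realized as x ranges over ℝ^l is at most (8·e·d·k/l)^l, where e denotes Euler's number exp(1). -/
open Finset

/-- simplex of exponents -/
noncomputable def wsimplex (σ : Type*) [Fintype σ] [DecidableEq σ] (m : ℕ) : Finset (σ → ℕ) :=
  (piAntidiag (univ : Finset (Option σ)) m).image (fun s i => s (some i))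

lemma mem_wsimplex {σ : Type*} [Fintype σ] [DecidableEq σ] {m : ℕ} {s : σ → ℕ} :
    s ∈ wsimplex σ m ↔ ∑ i, s i ≤ m := by
  unfold wsimplex
  simp only [mem_image, mem_piAntidiag, Fintype.sum_option]
  constructor
  · rintro ⟨a, ⟨h, -⟩, rfl⟩
    exact (Nat.le_add_left _ _).trans h.le
  · intro h
    refine ⟨fun o => o.elim (m - ∑ i, s i) s, ⟨?_, by simp⟩, rfl⟩
    simp only [Option.elim]
    omega

lemma card_wsimplex (σ : Type*) [Fintype σ] [DecidableEq σ] (m : ℕ) :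
    (wsimplex σ m).card = (m + Fintype.card σ).choose (Fintype.card σ) := by
  unfold wsimplex
  rw [card_image_of_injOn, ← map_sym_eq_piAntidiag, card_map]
  · have : ((univ : Finset (Option σ)).sym m) = univ := by
      ext x; simp
    rw [this, card_univ, Sym.card_sym_eq_choose, Fintype.card_option]
    have : Fintype.card σ + 1 + m - 1 = m + Fintype.card σ := by omega
    rw [this, ← Nat.choose_symm_add]
  · intro a ha b hb hab
    simp only [mem_coe, mem_piAntidiag, Fintype.sum_option] at ha hb
    have h2 : ∀ i, a (some i) = b (some i) := fun i => congrFun hab i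
    funext o
    cases o with
    | some i => exact h2 i
    | none =>
      have h1 := ha.1
      have h3 := hb.1
      simp only [h2] at h1
      omega

/-- monomial function -/
def wmono {σ ι : Type*} [Fintype σ] [Fintype ι] (s : (σ → ℕ) × (ι → ℕ)) : (σ ⊕ ι → ℝ) → ℝ :=
  fun z => (∏ i, z (Sum.inl i) ^ s.1 i) * ∏ j, z (Sum.inr j) ^ s.2 j

/-- functions of bidegree at most `(a,b)` -/
def wW (σ ι : Type*) [Fintype σ] [Fintype ι] (a b : ℕ) : Submodule ℝ ((σ ⊕ ι → ℝ) → ℝ) :=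
  Submodule.span ℝ (wmono '' {s : (σ → ℕ) × (ι → ℕ) | ∑ i, s.1 i ≤ a ∧ ∑ i, s.2 i ≤ b})

section
variable {σ ι : Type*} [Fintype σ] [Fintype ι]

lemma wW_mono {a b a' b' : ℕ} (ha : a ≤ a') (hb : b ≤ b') : wW σ ι a b ≤ wW σ ι a' b' := by
  apply Submodule.span_mono
  apply Set.image_mono
  rintro s ⟨h1, h2⟩
  exact ⟨h1.trans ha, h2.trans hb⟩

lemma wW_mul {a b a' b' : ℕ} {f g : (σ ⊕ ι → ℝ) → ℝ} (hf : f ∈ wW σ ι a b) (hg : g ∈ wW σ ι a' b') :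
    f * g ∈ wW σ ι (a + a') (b + b') := by
  have h := Submodule.mul_mem_mul hf hg
  unfold wW at h
  rw [Submodule.span_mul_span] at h
  refine Submodule.span_mono ?_ h
  rintro _ ⟨_, ⟨s, hs, rfl⟩, _, ⟨t, ht, rfl⟩, rfl⟩
  refine ⟨s + t, ⟨?_, ?_⟩, ?_⟩
  · simp only [Prod.fst_add, Pi.add_apply, sum_add_distrib]
    exact add_le_add hs.1 ht.1
  · simp only [Prod.snd_add, Pi.add_apply, sum_add_distrib]
    exact add_le_add hs.2 ht.2
  · funext z
    simp only [wmono, Prod.fst_add, Prod.snd_add, Pi.add_apply, Pi.mul_apply, pow_add, prod_mul_distrib]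
    ring

lemma wW_one (a b : ℕ) : (1 : (σ ⊕ ι → ℝ) → ℝ) ∈ wW σ ι a b := by
  apply Submodule.subset_span
  exact ⟨0, by simp, by funext z; simp [wmono]⟩

lemma wW_const (c : ℝ) (a b : ℕ) : (fun _ => c : (σ ⊕ ι → ℝ) → ℝ) ∈ wW σ ι a b := by
  have := Submodule.smul_mem _ c (wW_one (σ := σ) (ι := ι) a b)
  convert this using 1
  funext z; simp

lemma wW_pow {a b : ℕ} {f : (σ ⊕ ι → ℝ) → ℝ} (hf : f ∈ wW σ ι a b) (n : ℕ) :
    f ^ n ∈ wW σ ι (n * a) (n * b) := by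
  induction n with
  | zero => simpa using wW_one 0 0
  | succ n ih =>
    rw [pow_succ, add_mul, add_mul, one_mul, one_mul]
    exact wW_mul ih hf

lemma wW_prod {κ : Type*} (S : Finset κ) (f : κ → (σ ⊕ ι → ℝ) → ℝ) (a b : κ → ℕ)
    (hf : ∀ i ∈ S, f i ∈ wW σ ι (a i) (b i)) :
    (∏ i ∈ S, f i) ∈ wW σ ι (∑ i ∈ S, a i) (∑ i ∈ S, b i) := by
  classical
  induction S using Finset.induction_on with
  | empty => simpa using wW_one 0 0
  | insert i S hi ih =>
    rw [prod_insert hi, sum_insert hi, sum_insert hi]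
    exact wW_mul (hf i (mem_insert_self _ _)) (ih fun j hj => hf j (mem_insert_of_mem hj))

lemma wW_inl [DecidableEq σ] (i : σ) : (fun z => z (Sum.inl i) : (σ ⊕ ι → ℝ) → ℝ) ∈ wW σ ι 1 0 := by
  apply Submodule.subset_span
  refine ⟨(Pi.single i 1, 0), by simp, ?_⟩
  funext z
  simp only [wmono, Pi.zero_apply, pow_zero, prod_const_one, mul_one]
  rw [prod_eq_single i] <;> simp +contextual

lemma wW_inr [DecidableEq ι] (i : ι) : (fun z => z (Sum.inr i) : (σ ⊕ ι → ℝ) → ℝ) ∈ wW σ ι 0 1 := by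
  apply Submodule.subset_span
  refine ⟨(0, Pi.single i 1), by simp, ?_⟩
  funext z
  simp only [wmono, Pi.zero_apply, pow_zero, prod_const_one, one_mul]
  rw [prod_eq_single i] <;> simp +contextual

lemma wW_eval (p : MvPolynomial σ ℝ) {d : ℕ} (hp : p.totalDegree ≤ d) :
    (fun z => MvPolynomial.eval (fun i => z (Sum.inl i)) p : (σ ⊕ ι → ℝ) → ℝ) ∈ wW σ ι d 0 := by
  have : (fun z => MvPolynomial.eval (fun i => z (Sum.inl i)) p : (σ ⊕ ι → ℝ) → ℝ)
      = ∑ s ∈ p.support, p.coeff s • wmono (⇑s, 0) := by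
    funext z
    rw [MvPolynomial.eval_eq']
    simp [wmono]
  rw [this]
  apply Submodule.sum_mem
  intro s hs
  apply Submodule.smul_mem
  apply Submodule.subset_span
  refine ⟨_, ⟨?_, by simp⟩, rfl⟩
  have := MvPolynomial.le_totalDegree hs
  rw [Finsupp.sum_fintype _ _ (by simp)] at this
  exact this.trans hp

lemma wW_eval_pderiv [DecidableEq σ] (p : MvPolynomial σ ℝ) {d : ℕ} (hp : p.totalDegree ≤ d) (a : σ) :
    (fun z => MvPolynomial.eval (fun i => z (Sum.inl i)) (MvPolynomial.pderiv a p) :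
      (σ ⊕ ι → ℝ) → ℝ) ∈ wW σ ι d 0 := by
  apply wW_eval
  conv_lhs => rw [p.as_sum]
  rw [map_sum]
  refine MvPolynomial.totalDegree_finsetSum_le ?_
  intro s hs
  rw [MvPolynomial.pderiv_monomial]
  refine (MvPolynomial.totalDegree_monomial_le _ _).trans ?_
  have := MvPolynomial.le_totalDegree hs
  refine le_trans ?_ (this.trans hp)
  rw [Finsupp.sum_fintype _ _ (by simp), Finsupp.sum_fintype _ _ (by simp)]
  apply sum_le_sum
  intro i _
  simp

lemma wW_finrank [DecidableEq σ] [DecidableEq ι] (a b : ℕ) :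
    Module.Finite ℝ (wW σ ι a b) ∧ Module.finrank ℝ (wW σ ι a b) ≤
      (a + Fintype.card σ).choose (Fintype.card σ) * (b + Fintype.card ι).choose (Fintype.card ι) := by
  classical
  have : wW σ ι a b = Submodule.span ℝ
      (((wsimplex σ a ×ˢ wsimplex ι b).image wmono : Finset ((σ ⊕ ι → ℝ) → ℝ)) :
        Set ((σ ⊕ ι → ℝ) → ℝ)) := by
    unfold wW
    congr 1
    ext f
    simp [mem_wsimplex]
  rw [this]
  refine ⟨inferInstance, ?_⟩
  refine (finrank_span_finset_le_card _).trans ?_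
  refine card_image_le.trans ?_
  rw [card_product, card_wsimplex, card_wsimplex]
end

lemma w_indep_aux {τ : Type*} [Fintype τ] [DecidableEq τ] (S : Finset (τ → ℕ))
    (G : (τ → ℕ) → (τ → ℝ) → ℝ) (hG : ∀ γ, Continuous (G γ)) (H : (τ → ℝ) → (τ → ℝ))
    (hsum : ∀ x, ∑ γ ∈ S, G γ x * ∏ j, H x j ^ γ j = 0) (z : τ → ℝ) (hz : H z = 0)
    (A : (τ → ℝ) →L[ℝ] (τ → ℝ)) (hA : HasFDerivAt H A z) (hsurj : Function.Surjective A) (n : ℕ)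
    (hn : ∀ γ ∈ S, ∑ j, γ j < n → ∀ x, G γ x = 0) :
    ∀ γ ∈ S, ∑ j, γ j = n → G γ z = 0 := by
  have key : ∀ u : τ → ℝ, ∑ γ ∈ S, G γ z * (if ∑ j, γ j < n then 0 else 0 ^ (∑ j, γ j - n)) *
      ∏ j, u j ^ γ j = 0 := by
    intro u
    obtain ⟨ξ, rfl⟩ := hsurj u
    have hq : Filter.Tendsto (fun t : ℝ => t⁻¹ • (H (z + t • ξ))) (nhdsWithin 0 {0}ᶜ) (nhds (A ξ)) := by
      have h1 : HasDerivAt (fun t : ℝ => z + t • ξ) ξ 0 := by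
        simpa using ((hasDerivAt_id (0:ℝ)).smul_const ξ).const_add z
      have h2 : HasDerivAt (fun t : ℝ => H (z + t • ξ)) (A ξ) 0 :=
        HasFDerivAt.comp_hasDerivAt (x := (0:ℝ)) (l := H) (f := fun t : ℝ => z + t • ξ)
          (by simpa using hA) h1
      have := h2.tendsto_slope_zero
      simpa [hz] using this
    have hx : Filter.Tendsto (fun t : ℝ => z + t • ξ) (nhdsWithin 0 {0}ᶜ) (nhds z) := by
      have : Continuous (fun t : ℝ => z + t • ξ) := by fun_prop
      have := this.tendsto 0
      simp only [zero_smul, add_zero] at this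
      exact this.mono_left nhdsWithin_le_nhds
    have hid : Filter.Tendsto (fun t : ℝ => t) (nhdsWithin 0 {0}ᶜ) (nhds 0) :=
      Filter.tendsto_id.mono_left nhdsWithin_le_nhds
    have hlim : Filter.Tendsto (fun t : ℝ => ∑ γ ∈ S, G γ (z + t • ξ) *
        (if ∑ j, γ j < n then 0 else t ^ (∑ j, γ j - n)) *
        ∏ j, (t⁻¹ • (H (z + t • ξ))) j ^ γ j) (nhdsWithin 0 {0}ᶜ)
        (nhds (∑ γ ∈ S, G γ z * (if ∑ j, γ j < n then 0 else 0 ^ (∑ j, γ j - n)) *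
      ∏ j, (A ξ) j ^ γ j)) := by
      apply tendsto_finsetSum
      intro γ _
      refine ((((hG γ).tendsto z).comp hx).mul ?_).mul ?_
      · split_ifs
        · exact tendsto_const_nhds
        · exact hid.pow _
      · apply tendsto_finsetProd
        intro j _
        exact ((tendsto_pi_nhds.1 hq) j).pow _
    refine tendsto_nhds_unique hlim (tendsto_const_nhds.congr' ?_)
    filter_upwards [self_mem_nhdsWithin] with t ht
    have ht0 : t ≠ 0 := ht
    have h0 := hsum (z + t • ξ)
    have : t ^ n * ∑ γ ∈ S, G γ (z + t • ξ) *
        (if ∑ j, γ j < n then 0 else t ^ (∑ j, γ j - n)) *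
        ∏ j, (t⁻¹ • (H (z + t • ξ))) j ^ γ j = 0 := by
      rw [← h0, mul_sum]
      apply sum_congr rfl
      intro γ hγ
      split_ifs with hlt
      · rw [hn γ hγ hlt]; simp
      · have e : t ^ (∑ j, γ j) = t ^ n * t ^ (∑ j, γ j - n) := by
          rw [← pow_add]; congr 1; omega
        have e2 : ∏ j, (t⁻¹ • (H (z + t • ξ))) j ^ γ j
            = (t ^ (∑ j, γ j))⁻¹ * ∏ j, H (z + t • ξ) j ^ γ j := by
          rw [← prod_pow_eq_pow_sum, ← prod_inv_distrib, ← prod_mul_distrib]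
          apply prod_congr rfl
          intro j _
          simp [mul_pow]
        rw [e2, e]
        field_simp
    rcases mul_eq_zero.1 this with h | h
    · exact absurd h (pow_ne_zero _ ht0)
    · exact h.symm
  set P : MvPolynomial τ ℝ := ∑ γ ∈ S, MvPolynomial.monomial (Finsupp.equivFunOnFinite.symm γ)
    (G γ z * (if ∑ j, γ j < n then 0 else 0 ^ (∑ j, γ j - n))) with hP
  have hP0 : P = 0 := by
    apply MvPolynomial.funext
    intro u
    rw [hP, map_sum, map_zero]
    refine Eq.trans ?_ (key u)
    apply sum_congr rfl
    intro γ _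
    rw [MvPolynomial.eval_monomial, Finsupp.prod_fintype _ _ (by simp)]
    rfl
  intro γ hγ hγn
  have hc : P.coeff (Finsupp.equivFunOnFinite.symm γ) = G γ z := by
    rw [hP, MvPolynomial.coeff_sum, sum_eq_single γ]
    · rw [MvPolynomial.coeff_monomial]; simp [hγn]
    · intro b _ hb
      rw [MvPolynomial.coeff_monomial, if_neg]
      simpa using hb
    · exact fun h => absurd hγ h
  rw [← hc, hP0]; simp

lemma wW_continuous {σ ι : Type*} [Fintype σ] [Fintype ι] {a b : ℕ} {f : (σ ⊕ ι → ℝ) → ℝ}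
    (hf : f ∈ wW σ ι a b) : Continuous f := by
  unfold wW at hf
  induction hf using Submodule.span_induction with
  | mem x h =>
    obtain ⟨s, -, rfl⟩ := h
    unfold wmono
    fun_prop
  | zero => exact continuous_const
  | add x y _ _ hx hy => exact hx.add hy
  | smul c x _ hx => exact hx.const_smul c

lemma wW_differentiable {σ ι : Type*} [Fintype σ] [Fintype ι] {a b : ℕ} {f : (σ ⊕ ι → ℝ) → ℝ}
    (hf : f ∈ wW σ ι a b) : Differentiable ℝ f := by
  unfold wW at hf
  induction hf using Submodule.span_induction with
  | mem x h =>
    obtain ⟨s, -, rfl⟩ := h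
    unfold wmono
    fun_prop
  | zero => exact differentiable_const _
  | add x y _ _ hx hy => exact hx.add hy
  | smul c x _ hx => exact hx.const_smul c

lemma w_interp {σ ι : Type*} [Fintype σ] [Fintype ι] [DecidableEq σ] [DecidableEq ι]
    (Z : Finset (σ ⊕ ι → ℝ)) (z : σ ⊕ ι → ℝ) :
    ∃ g ∈ wW σ ι Z.card Z.card, ∀ z' ∈ Z, g z' = if z' = z then 1 else 0 := by
  classical
  have h : ∀ z' : σ ⊕ ι → ℝ, ∃ f ∈ wW σ ι 1 1, f z = 1 ∧ (z' ≠ z → f z' = 0) := by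
    intro z'
    by_cases hzz : z' = z
    · exact ⟨1, wW_one 1 1, rfl, fun h => absurd hzz h⟩
    · obtain ⟨i, hi⟩ := Function.ne_iff.1 hzz
      have hco : (fun x => x i : (σ ⊕ ι → ℝ) → ℝ) ∈ wW σ ι 1 1 := by
        cases i with
        | inl i => exact wW_mono le_rfl zero_le_one (wW_inl i)
        | inr i => exact wW_mono zero_le_one le_rfl (wW_inr i)
      refine ⟨(z i - z' i)⁻¹ • ((fun x => x i) - fun _ => z' i), ?_, ?_, ?_⟩
      · exact Submodule.smul_mem _ _ (Submodule.sub_mem _ hco (wW_const _ _ _))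
      · have : z i - z' i ≠ 0 := sub_ne_zero.2 (Ne.symm hi)
        simp [this]
      · intro _; simp
  choose f hf1 hf2 hf3 using h
  refine ⟨∏ z' ∈ Z, f z', ?_, ?_⟩
  · have := wW_prod Z f (fun _ => 1) (fun _ => 1) (fun i _ => hf1 i)
    simpa using this
  · intro z' hz'
    rw [Finset.prod_apply]
    split_ifs with h
    · subst h
      exact prod_eq_one fun i _ => hf2 i |> fun h => by
        simpa using h
    · exact prod_eq_zero hz' (hf3 z' h)

lemma w_count {σ ι : Type*} [Fintype σ] [Fintype ι] [DecidableEq σ] [DecidableEq ι]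
    (d : ℕ) (H : (σ ⊕ ι → ℝ) → (σ ⊕ ι → ℝ)) (hH : ∀ j, (fun x => H x j) ∈ wW σ ι d 1)
    (Z : Finset (σ ⊕ ι → ℝ)) (hZ : ∀ z ∈ Z, H z = 0)
    (A : (σ ⊕ ι → ℝ) → ((σ ⊕ ι → ℝ) →L[ℝ] (σ ⊕ ι → ℝ)))
    (hA : ∀ z ∈ Z, HasFDerivAt H (A z) z) (hs : ∀ z ∈ Z, Function.Surjective (A z)) (m : ℕ) :
    Z.card * (m + (Fintype.card σ + Fintype.card ι)).choose (Fintype.card σ + Fintype.card ι) ≤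
      ((Z.card + m * d) + Fintype.card σ).choose (Fintype.card σ) *
      ((Z.card + m) + Fintype.card ι).choose (Fintype.card ι) := by
  classical
  choose g hg1 hg2 using fun z => w_interp Z z
  have hmem : ∀ q : Z × wsimplex (σ ⊕ ι) m,
      (g q.1 * ∏ j, (fun x => H x j) ^ (q.2.1 j)) ∈ wW σ ι (Z.card + m * d) (Z.card + m) := by
    intro q
    have hq := mem_wsimplex.1 q.2.2
    have h1 := wW_prod univ (fun j => (fun x => H x j) ^ (q.2.1 j)) (fun j => q.2.1 j * d)
      (fun j => q.2.1 j * 1) (fun j _ => wW_pow (hH j) _)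
    refine wW_mono ?_ ?_ (wW_mul (hg1 q.1) h1)
    · rw [← sum_mul]; gcongr
    · simpa using hq
  set F : Z × wsimplex (σ ⊕ ι) m → wW σ ι (Z.card + m * d) (Z.card + m) := fun q => ⟨_, hmem q⟩ with hF
  have hli : LinearIndependent ℝ F := by
    rw [Fintype.linearIndependent_iff]
    intro c hc
    set c' : (σ ⊕ ι → ℝ) → (σ ⊕ ι → ℕ) → ℝ := fun z γ =>
      if h : z ∈ Z ∧ γ ∈ wsimplex (σ ⊕ ι) m then c (⟨z, h.1⟩, ⟨γ, h.2⟩) else 0 with hc'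
    set G : (σ ⊕ ι → ℕ) → (σ ⊕ ι → ℝ) → ℝ := fun γ x => ∑ z ∈ Z, c' z γ * g z x with hGdef
    have hGz : ∀ γ, ∀ z ∈ Z, G γ z = c' z γ := by
      intro γ z hz
      simp only [hGdef]
      rw [sum_eq_single z]
      · rw [hg2 z z hz]; simp
      · intro b _ hb
        rw [hg2 b z hz, if_neg hb.symm, mul_zero]
      · exact fun h => absurd hz h
    have hsum : ∀ x, ∑ γ ∈ wsimplex (σ ⊕ ι) m, G γ x * ∏ j, H x j ^ γ j = 0 := by
      intro x
      have h1 := congrFun (congrArg Subtype.val hc) x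
      simp only [hF, Submodule.coe_sum, Submodule.coe_smul, Finset.sum_apply, Pi.smul_apply,
        Pi.mul_apply, Finset.prod_apply, Pi.pow_apply, smul_eq_mul, Submodule.coe_zero,
        Pi.zero_apply] at h1
      rw [← h1, Fintype.sum_prod_type, sum_comm, ← sum_coe_sort (wsimplex (σ ⊕ ι) m)]
      apply sum_congr rfl
      intro γ _
      simp only [hGdef]
      rw [sum_mul, ← sum_coe_sort Z]
      apply sum_congr rfl
      intro z _
      simp only [hc']
      rw [dif_pos ⟨z.2, γ.2⟩]
      ring
    have hall : ∀ n, ∀ z ∈ Z, ∀ γ ∈ wsimplex (σ ⊕ ι) m, ∑ j, γ j = n → c' z γ = 0 := by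
      intro n
      induction n using Nat.strong_induction_on with
      | _ n ih =>
        intro z hz γ hγ hγn
        rw [← hGz γ z hz]
        refine w_indep_aux (wsimplex (σ ⊕ ι) m) G ?_ H hsum z (hZ z hz) (A z) (hA z hz) (hs z hz) n
          ?_ γ hγ hγn
        · intro γ
          simp only [hGdef]
          have := fun z => wW_continuous (hg1 z)
          fun_prop
        · intro γ hγ hlt x
          simp only [hGdef]
          apply sum_eq_zero
          intro z hz
          rw [ih _ hlt z hz γ hγ rfl, zero_mul]
    rintro ⟨z, γ⟩
    have := hall _ z z.2 γ γ.2 rfl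
    simp only [hc'] at this
    rw [dif_pos ⟨z.2, γ.2⟩] at this
    exact this
  obtain ⟨hfin, hrank⟩ := wW_finrank (σ := σ) (ι := ι) (Z.card + m * d) (Z.card + m)
  have h1 := hli.fintype_card_le_finrank
  rw [Fintype.card_prod, Fintype.card_coe, Fintype.card_coe, card_wsimplex, Fintype.card_sum] at h1
  exact h1.trans hrank

lemma w_bezout {σ ι : Type*} [Fintype σ] [Fintype ι] [DecidableEq σ] [DecidableEq ι]
    (d : ℕ) (H : (σ ⊕ ι → ℝ) → (σ ⊕ ι → ℝ)) (hH : ∀ j, (fun x => H x j) ∈ wW σ ι d 1)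
    (Z : Finset (σ ⊕ ι → ℝ)) (hZ : ∀ z ∈ Z, H z = 0)
    (A : (σ ⊕ ι → ℝ) → ((σ ⊕ ι → ℝ) →L[ℝ] (σ ⊕ ι → ℝ)))
    (hA : ∀ z ∈ Z, HasFDerivAt H (A z) z) (hs : ∀ z ∈ Z, Function.Surjective (A z)) :
    Z.card ≤ d ^ Fintype.card σ * (Fintype.card σ + Fintype.card ι).choose (Fintype.card σ) := by
  have hm := w_count d H hH Z hZ A hA hs
  generalize Fintype.card σ = l at *
  generalize Fintype.card ι = K at *
  generalize Z.card = N at *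
  have hb : ∀ m : ℕ, 1 ≤ m → (N : ℝ) / (l + K).factorial ≤
      ((N + l : ℝ) / m + d) ^ l / l.factorial * (((N + K : ℝ) / m + 1) ^ K / K.factorial) := by
    intro m hm1
    have hm0 : (0:ℝ) < m := by exact_mod_cast hm1
    have h1 : (N : ℝ) * ((m + (l + K)).choose (l + K) : ℝ) ≤
        ((N + m * d + l).choose l : ℝ) * ((N + m + K).choose K : ℝ) := by exact_mod_cast hm m
    have h2 : ((m : ℝ) ^ (l + K)) / (l + K).factorial ≤ ((m + (l + K)).choose (l + K) : ℝ) := by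
      refine le_trans ?_ (Nat.pow_le_choose (α := ℝ) (l + K) (m + (l + K)))
      gcongr
      omega
    have h3 := Nat.choose_le_pow_div (α := ℝ) l (N + m * d + l)
    have h4 := Nat.choose_le_pow_div (α := ℝ) K (N + m + K)
    have h5 : (N : ℝ) * (((m : ℝ) ^ (l + K)) / (l + K).factorial) ≤
        (((N + m * d + l : ℕ) : ℝ) ^ l / l.factorial) * (((N + m + K : ℕ) : ℝ) ^ K / K.factorial) :=
      calc _ ≤ (N : ℝ) * ((m + (l + K)).choose (l + K) : ℝ) := by gcongr
        _ ≤ _ := h1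
        _ ≤ _ := by gcongr
    have e1 : ((N + m * d + l : ℕ) : ℝ) = m * ((N + l : ℝ) / m + d) := by
      push_cast; field_simp; ring
    have e2 : ((N + m + K : ℕ) : ℝ) = m * ((N + K : ℝ) / m + 1) := by
      push_cast; field_simp; ring
    rw [e1, e2, mul_pow, mul_pow] at h5
    have hpos : (0:ℝ) < (m : ℝ) ^ (l + K) := by positivity
    refine le_of_mul_le_mul_left ?_ hpos
    calc _ = (N : ℝ) * (((m : ℝ) ^ (l + K)) / (l + K).factorial) := by ring
      _ ≤ _ := h5
      _ = _ := by rw [pow_add]; ring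
  have ht : ∀ c : ℝ, Filter.Tendsto (fun m : ℕ => c / (m : ℝ)) Filter.atTop (nhds 0) :=
    fun c => tendsto_const_div_atTop_nhds_zero_nat c
  have hlim : Filter.Tendsto (fun m : ℕ => ((N + l : ℝ) / m + d) ^ l / l.factorial *
      (((N + K : ℝ) / m + 1) ^ K / K.factorial)) Filter.atTop
      (nhds ((0 + (d:ℝ)) ^ l / l.factorial * ((0 + 1) ^ K / K.factorial))) :=
    ((((ht _).add_const _).pow _).div_const _).mul ((((ht _).add_const _).pow _).div_const _)
  have hfin := ge_of_tendsto hlim (Filter.eventually_atTop.2 ⟨1, hb⟩)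
  have hch : ((l + K).choose l : ℝ) * l.factorial * K.factorial = (l + K).factorial := by
    have := Nat.add_choose_mul_factorial_mul_factorial l K
    rw [Nat.choose_symm_add]
    exact_mod_cast this
  have hl0 : (0:ℝ) < l.factorial := by positivity
  have hK0 : (0:ℝ) < K.factorial := by positivity
  have hn0 : (0:ℝ) < (l + K).factorial := by positivity
  rw [div_le_iff₀ hn0, ← hch] at hfin
  have : (N : ℝ) ≤ (d:ℝ) ^ l * ((l + K).choose l : ℝ) := by
    refine hfin.trans (le_of_eq ?_)
    simp only [zero_add, one_pow]
    field_simp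
  exact_mod_cast this

lemma w_deriv {σ : Type*} [DecidableEq σ] (p : MvPolynomial σ ℝ) (x : σ → ℝ) (a : σ) :
    HasDerivAt (fun t => MvPolynomial.eval (Function.update x a t) p)
      (MvPolynomial.eval x (MvPolynomial.pderiv a p)) (x a) := by
  induction p using MvPolynomial.induction_on with
  | C c => simpa using hasDerivAt_const (x a) c
  | add p q hp hq =>
    simp only [map_add]
    exact hp.add hq
  | mul_X p i hp =>
    have hX : HasDerivAt (fun t => Function.update x a t i) (if i = a then 1 else 0) (x a) := by
      by_cases h : i = a
      · subst h
        simp only [Function.update_self, if_true]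
        exact hasDerivAt_id (x i)
      · simpa [h] using hasDerivAt_const (x a) (x i)
    have := hp.mul hX
    simp only [map_mul, MvPolynomial.eval_X, Derivation.leibniz, smul_eq_mul, map_add,
      MvPolynomial.pderiv_X, Function.update_eq_self] at this ⊢
    refine this.congr_deriv ?_
    by_cases h : i = a
    · subst h; simp; ring
    · simp [h]; ring

lemma w_growth {σ : Type*} [Fintype σ] (p : MvPolynomial σ ℝ) :
    ∃ C B : ℝ, 0 ≤ C ∧ 0 ≤ B ∧ ∀ x : σ → ℝ, |MvPolynomial.eval x p| ≤ C * Real.exp (B * ∑ i, |x i|) := by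
  induction p using MvPolynomial.induction_on with
  | C c => exact ⟨|c|, 0, abs_nonneg _, le_rfl, fun x => by simp⟩
  | add p q hp hq =>
    obtain ⟨C, B, hC, hB, h⟩ := hp
    obtain ⟨C', B', hC', hB', h'⟩ := hq
    refine ⟨C + C', B + B', by positivity, by positivity, fun x => ?_⟩
    have hS : 0 ≤ ∑ i, |x i| := sum_nonneg fun i _ => abs_nonneg _
    rw [map_add, add_mul]
    refine (abs_add_le _ _).trans (add_le_add ((h x).trans ?_) ((h' x).trans ?_))
    · gcongr; linarith
    · gcongr; linarith
  | mul_X p i hp =>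
    obtain ⟨C, B, hC, hB, h⟩ := hp
    refine ⟨C, B + 1, hC, by positivity, fun x => ?_⟩
    rw [map_mul, abs_mul, MvPolynomial.eval_X, add_mul, Real.exp_add, ← mul_assoc, one_mul]
    refine mul_le_mul (h x) ?_ (abs_nonneg _) (by positivity)
    have h1 : |x i| ≤ ∑ i, |x i| := single_le_sum (f := fun i => |x i|) (fun i _ => abs_nonneg _) (mem_univ i)
    have := Real.add_one_le_exp (∑ i, |x i|)
    linarith

lemma w_crit {σ ι : Type*} [Fintype σ] [Fintype ι] [DecidableEq σ]
    (P : ι → MvPolynomial σ ℝ) (w : ι → ℝ) (hw : ∀ i, 0 < w i) (v : σ → ℝ) (x₀ : σ → ℝ)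
    (hx₀ : ∀ i, MvPolynomial.eval x₀ (P i) ≠ 0) :
    ∃ x : σ → ℝ, (∀ i, MvPolynomial.eval x (P i) ≠ 0) ∧
      (∀ i, SignType.sign (MvPolynomial.eval x (P i)) = SignType.sign (MvPolynomial.eval x₀ (P i))) ∧
      ∀ a, ∑ i, (w i / MvPolynomial.eval x (P i)) * MvPolynomial.eval x (MvPolynomial.pderiv a (P i))
        - x a = v a := by
  set F : (σ → ℝ) → ℝ := fun x => (∏ i, |MvPolynomial.eval x (P i)| ^ w i) *
    Real.exp (∑ a, (-(x a) ^ 2 / 2 - v a * x a)) with hF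
  have hcP : ∀ i, Continuous fun x => MvPolynomial.eval x (P i) := fun i => MvPolynomial.continuous_eval _
  have hFc : Continuous F := by
    refine Continuous.mul (continuous_finsetProd _ fun i _ => ?_) (by fun_prop)
    exact (hcP i).abs.rpow_const fun x => Or.inr (hw i).le
  set T : Set (σ → ℝ) := {x | ∀ i, 0 ≤ MvPolynomial.eval x₀ (P i) * MvPolynomial.eval x (P i)} with hT
  have hTc : IsClosed T := by
    rw [hT, Set.ofPred_forall]
    exact isClosed_iInter fun i => isClosed_le continuous_const ((hcP i).const_mul _)
  have hx₀T : x₀ ∈ T := fun i => mul_self_nonneg _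
  have hF0 : 0 < F x₀ := by
    refine mul_pos (prod_pos fun i _ => ?_) (Real.exp_pos _)
    exact Real.rpow_pos_of_pos (abs_pos.2 (hx₀ i)) _
  have hdecay : ∃ C : ℝ, ∀ x, F x ≤ C * Real.exp (-‖x‖) := by
    choose C B hC hB h using fun i => w_growth (P i)
    set D := ∑ i, B i * w i with hD
    have hD0 : 0 ≤ D := sum_nonneg fun i _ => mul_nonneg (hB i) (hw i).le
    refine ⟨(∏ i, C i ^ w i) * Real.exp (∑ a, (D + |v a| + 1) ^ 2 / 2), fun x => ?_⟩
    have h1 : ∏ i, |MvPolynomial.eval x (P i)| ^ w i ≤ (∏ i, C i ^ w i) * Real.exp (D * ∑ a, |x a|) := by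
      rw [hD, sum_mul, Real.exp_sum, ← prod_mul_distrib]
      refine prod_le_prod (fun i _ => by positivity) fun i _ => ?_
      refine (Real.rpow_le_rpow (abs_nonneg _) (h i x) (hw i).le).trans (le_of_eq ?_)
      rw [Real.mul_rpow (hC i) (Real.exp_pos _).le, ← Real.exp_mul]
      congr 2; ring
    have hCp : 0 ≤ ∏ i, C i ^ w i := prod_nonneg fun i _ => Real.rpow_nonneg (hC i) _
    calc F x ≤ ((∏ i, C i ^ w i) * Real.exp (D * ∑ a, |x a|)) *
          Real.exp (∑ a, (-(x a) ^ 2 / 2 - v a * x a)) := by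
            simp only [hF]; gcongr
      _ = (∏ i, C i ^ w i) * Real.exp (∑ a, (D * |x a| + (-(x a) ^ 2 / 2 - v a * x a))) := by
            rw [mul_assoc, ← Real.exp_add, sum_add_distrib, mul_sum]
      _ ≤ (∏ i, C i ^ w i) * Real.exp (∑ a, (D + |v a| + 1) ^ 2 / 2 + -‖x‖) := by
            gcongr
            have hn : ‖x‖ ≤ ∑ a, |x a| := by
              rw [pi_norm_le_iff_of_nonneg (sum_nonneg fun i _ => abs_nonneg _)]
              intro a
              exact single_le_sum (f := fun i => |x i|) (fun i _ => abs_nonneg _) (mem_univ a)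
            have : ∑ a, (D * |x a| + (-(x a) ^ 2 / 2 - v a * x a)) ≤
                ∑ a, ((D + |v a| + 1) ^ 2 / 2 - |x a|) := by
              apply sum_le_sum
              intro a _
              have e1 : -(v a * x a) ≤ |v a| * |x a| := by rw [← abs_mul]; exact neg_le_abs _
              have e2 : (x a) ^ 2 = |x a| ^ 2 := (sq_abs _).symm
              rw [e2]
              nlinarith [sq_nonneg (D + |v a| + 1 - |x a|)]
            rw [sum_sub_distrib] at this
            linarith
      _ = _ := by rw [Real.exp_add, mul_assoc]
  obtain ⟨C, hC⟩ := hdecay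
  have hev : ∀ᶠ x in Filter.cocompact (σ → ℝ), F x ≤ F x₀ := by
    have h1 : Filter.Tendsto (fun x : σ → ℝ => C * Real.exp (-‖x‖)) (Filter.cocompact _) (nhds (C * 0)) :=
      ((Real.tendsto_exp_neg_atTop_nhds_zero).comp (tendsto_norm_cocompact_atTop (E := σ → ℝ))).const_mul C
    rw [mul_zero] at h1
    filter_upwards [h1.eventually (gt_mem_nhds hF0)] with x hx
    exact (hC x).trans hx.le
  obtain ⟨x, hxT, hmax⟩ := hFc.continuousOn.exists_isMaxOn' hTc hx₀T (hev.filter_mono inf_le_left)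
  have hFx : 0 < F x := hF0.trans_le (hmax hx₀T)
  have hne : ∀ i, MvPolynomial.eval x (P i) ≠ 0 := by
    intro i hi
    have : F x = 0 := by
      simp only [hF]
      rw [prod_eq_zero (mem_univ i), zero_mul]
      rw [hi, abs_zero, Real.zero_rpow (hw i).ne']
    exact hFx.ne' this
  have hpos : ∀ i, 0 < MvPolynomial.eval x₀ (P i) * MvPolynomial.eval x (P i) := fun i =>
    lt_of_le_of_ne (hxT i) (mul_ne_zero (hx₀ i) (hne i)).symm
  refine ⟨x, hne, fun i => ?_, fun a => ?_⟩
  · rcases lt_or_gt_of_ne (hx₀ i) with h | h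
    · have := neg_of_mul_pos_right (hpos i) h.le
      rw [sign_neg h, sign_neg this]
    · have := (pos_iff_pos_of_mul_pos (hpos i)).1 h
      rw [sign_pos h, sign_pos this]
  · set ψ : ℝ → ℝ := fun t => ∑ i, w i * Real.log (MvPolynomial.eval (Function.update x a t) (P i)) +
      ∑ b, (-(Function.update x a t b) ^ 2 / 2 - v b * Function.update x a t b) with hψ
    have hFψ : ∀ t, (∀ i, MvPolynomial.eval (Function.update x a t) (P i) ≠ 0) →
        F (Function.update x a t) = Real.exp (ψ t) := by
      intro t ht
      simp only [hF, hψ]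
      rw [Real.exp_add]
      congr 1
      rw [Real.exp_sum]
      apply prod_congr rfl
      intro i _
      rw [Real.rpow_def_of_pos (abs_pos.2 (ht i)), Real.log_abs, mul_comm]
    have hupd : Continuous fun t : ℝ => Function.update x a t := by fun_prop
    have hloc : IsLocalMax ψ (x a) := by
      have h1 : ∀ i, ∀ᶠ t in nhds (x a),
          0 < MvPolynomial.eval x₀ (P i) * MvPolynomial.eval (Function.update x a t) (P i) := by
        intro i
        have hc : Continuous fun t =>
          MvPolynomial.eval x₀ (P i) * MvPolynomial.eval (Function.update x a t) (P i) :=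
          ((hcP i).comp hupd).const_mul _
        refine hc.tendsto (x a) |>.eventually (lt_mem_nhds ?_)
        simpa using hpos i
      filter_upwards [Filter.eventually_all.2 h1] with t ht
      have h2 := hmax (show Function.update x a t ∈ T from fun i => (ht i).le)
      have h3 := hFψ t fun i => right_ne_zero_of_mul (ht i).ne'
      have h4 := hFψ (x a) (by simpa using hne)
      rw [Function.update_eq_self] at h4
      simp only [Set.mem_ofPred_eq] at h2
      rw [h3, h4, Real.exp_le_exp] at h2
      exact h2
    have hd : HasDerivAt ψ (∑ i, w i * (MvPolynomial.eval x (MvPolynomial.pderiv a (P i)) /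
        MvPolynomial.eval x (P i)) + (- x a - v a)) (x a) := by
      refine HasDerivAt.add (HasDerivAt.fun_sum fun i _ => ?_) ?_
      · have h1 := (w_deriv (P i) x a).log (by simpa using hne i)
        simp only [Function.update_eq_self] at h1
        exact h1.const_mul _
      · have h2 : HasDerivAt (fun t => ∑ b, (-(Function.update x a t b) ^ 2 / 2 - v b * Function.update x a t b))
            (∑ b, if b = a then (- x a - v a) else 0) (x a) := by
          refine HasDerivAt.fun_sum fun b _ => ?_
          by_cases hb : b = a
          · subst hb
            simp only [Function.update_self, if_true]
            have h5 := ((((hasDerivAt_id (x b)).pow 2).neg).div_const 2).sub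
              ((hasDerivAt_id (x b)).const_mul (v b))
            refine h5.congr_deriv ?_
            simp; ring
          · simp only [hb, if_false, Function.update_of_ne hb]
            exact hasDerivAt_const _ _
        simpa using h2
    have h0 := hloc.hasDerivAt_eq_zero hd
    have : ∑ i, (w i / MvPolynomial.eval x (P i)) * MvPolynomial.eval x (MvPolynomial.pderiv a (P i))
        = ∑ i, w i * (MvPolynomial.eval x (MvPolynomial.pderiv a (P i)) / MvPolynomial.eval x (P i)) := by
      apply sum_congr rfl; intro i _; ring
    rw [this]; linarith

lemma w_strict {σ ι : Type*} [Fintype σ] [Fintype ι] [DecidableEq σ] [DecidableEq ι]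
    (P : ι → MvPolynomial σ ℝ) (d : ℕ) (hd : 1 ≤ d) (hP : ∀ i, (P i).totalDegree ≤ d)
    (X : Finset (σ → ℝ)) (hX : ∀ x ∈ X, ∀ i, MvPolynomial.eval x (P i) ≠ 0)
    (hinj : ∀ x ∈ X, ∀ y ∈ X, (∀ i, SignType.sign (MvPolynomial.eval x (P i)) =
      SignType.sign (MvPolynomial.eval y (P i))) → x = y) :
    X.card ≤ d ^ Fintype.card σ * (Fintype.card σ + Fintype.card ι).choose (Fintype.card σ) := by
  classical
  set H : (σ ⊕ ι → ℝ) → (σ ⊕ ι → ℝ) := fun z => Sum.elim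
    (fun a => ∑ i, z (Sum.inr i) *
      MvPolynomial.eval (fun b => z (Sum.inl b)) (MvPolynomial.pderiv a (P i)) - z (Sum.inl a))
    (fun i => z (Sum.inr i) * MvPolynomial.eval (fun b => z (Sum.inl b)) (P i)) with hH
  have hHW : ∀ j, (fun z => H z j) ∈ wW σ ι d 1 := by
    intro j
    cases j with
    | inl a =>
      have : (fun z => H z (Sum.inl a)) = (∑ i, (fun z : σ ⊕ ι → ℝ => z (Sum.inr i)) *
          (fun z => MvPolynomial.eval (fun b => z (Sum.inl b)) (MvPolynomial.pderiv a (P i)))) -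
          fun z => z (Sum.inl a) := by
        funext z; simp [hH]
      rw [this]
      refine Submodule.sub_mem _ (Submodule.sum_mem _ fun i _ => ?_) (wW_mono hd zero_le_one (wW_inl a))
      simpa using wW_mul (wW_inr i) (wW_eval_pderiv (P i) (hP i) a)
    | inr i =>
      have := wW_mul (wW_inr i) (wW_eval (ι := ι) (P i) (hP i))
      rw [zero_add, add_zero] at this
      exact this
  have hHd : Differentiable ℝ H := by
    rw [differentiable_pi]
    exact fun j => wW_differentiable (hHW j)
  set crit : Set (σ ⊕ ι → ℝ) := {z | (fderiv ℝ H z).det = 0} with hcrit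
  have hnull : MeasureTheory.volume (H '' crit) = 0 :=
    MeasureTheory.addHaar_image_eq_zero_of_det_fderivWithin_eq_zero _
      (fun z _ => (hHd z).hasFDerivAt.hasFDerivWithinAt) (fun z hz => hz)
  obtain ⟨c, hcpos, hcreg⟩ : ∃ c : σ ⊕ ι → ℝ, (∀ i, 0 < c i) ∧ c ∉ H '' crit := by
    by_contra hcon
    push Not at hcon
    have hsub : {c : σ ⊕ ι → ℝ | ∀ i, 0 < c i} ⊆ H '' crit := fun c hc => hcon c hc
    have hopen : IsOpen {c : σ ⊕ ι → ℝ | ∀ i, 0 < c i} := by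
      rw [Set.ofPred_forall]
      exact isOpen_iInter_of_finite fun i => isOpen_lt continuous_const (continuous_apply i)
    have := hopen.measure_pos MeasureTheory.volume ⟨fun _ => 1, fun i => zero_lt_one⟩
    exact this.ne' (MeasureTheory.measure_mono_null hsub hnull)
  have hex : ∀ x : σ → ℝ, ∃ z : σ ⊕ ι → ℝ, x ∈ X → H z = c ∧
      ∀ i, SignType.sign (MvPolynomial.eval (fun b => z (Sum.inl b)) (P i)) =
        SignType.sign (MvPolynomial.eval x (P i)) := by
    intro x
    by_cases hx : x ∈ X
    · obtain ⟨x', h1, h2, h3⟩ := w_crit P (fun i => c (Sum.inr i)) (fun i => hcpos _)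
        (fun a => c (Sum.inl a)) x (hX x hx)
      refine ⟨Sum.elim x' fun i => c (Sum.inr i) / MvPolynomial.eval x' (P i), fun _ => ⟨?_, h2⟩⟩
      funext j
      cases j with
      | inl a => exact h3 a
      | inr i => exact div_mul_cancel₀ _ (h1 i)
    · exact ⟨0, fun h => absurd h hx⟩
  choose ζ hζ using hex
  have hcard : (X.image ζ).card = X.card := by
    apply card_image_of_injOn
    intro x hx y hy hxy
    refine hinj x hx y hy fun i => ?_
    rw [← (hζ x hx).2 i, ← (hζ y hy).2 i, hxy]
  rw [← hcard]
  refine w_bezout d (fun z => H z - c) ?_ (X.image ζ) ?_ (fun z => fderiv ℝ H z) ?_ ?_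
  · intro j
    exact Submodule.sub_mem _ (hHW j) (wW_const (c j) d 1)
  · intro z hz
    obtain ⟨x, hx, rfl⟩ := mem_image.1 hz
    simp [(hζ x hx).1]
  · intro z _
    exact (hHd z).hasFDerivAt.sub_const c
  · intro z hz
    obtain ⟨x, hx, rfl⟩ := mem_image.1 hz
    have hdet : (fderiv ℝ H (ζ x)).det ≠ 0 := fun h => hcreg ⟨ζ x, h, (hζ x hx).1⟩
    have hu : IsUnit (LinearMap.det (fderiv ℝ H (ζ x) : (σ ⊕ ι → ℝ) →ₗ[ℝ] (σ ⊕ ι → ℝ))) :=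
      isUnit_iff_ne_zero.2 hdet
    have := (LinearMap.isUnit_iff_range_eq_top _).1 ((LinearMap.isUnit_iff_isUnit_det _).2 hu)
    exact LinearMap.range_eq_top.1 this

/-- **Warren's theorem (1968).** Given `k` real polynomials in `l` variables, each of total
degree at most `d`, with `d ≥ 1` and `k ≥ l ≥ 1`, the number of distinct sign vectors
`(sgn(p₁(x)), …, sgn(p_k(x))) ∈ {−1,0,1}^k` realized as `x` ranges over `ℝ^l` is at most
`(8·e·d·k/l)^l`. -/
theorem warren_sign_vectors (l k d : ℕ) (hl : 1 ≤ l) (hk : l ≤ k) (hd : 1 ≤ d)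
    (p : Fin k → MvPolynomial (Fin l) ℝ) (hdeg : ∀ i, (p i).totalDegree ≤ d) :
    ((({v : Fin k → SignType |
        ∃ x : Fin l → ℝ, ∀ i, v i = SignType.sign (MvPolynomial.eval x (p i))}).ncard : ℝ)) ≤
      (8 * Real.exp 1 * d * k / l) ^ l := by
  classical
  set V : Set (Fin k → SignType) := {v : Fin k → SignType |
        ∃ x : Fin l → ℝ, ∀ i, v i = SignType.sign (MvPolynomial.eval x (p i))} with hV
  have hfin : V.Finite := Set.toFinite V
  choose! ξ hξ using fun (v : Fin k → SignType) (hv : v ∈ V) => hv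
  have hε : ∃ ε : ℝ, 0 < ε ∧ ∀ v ∈ V, ∀ i, MvPolynomial.eval (ξ v) (p i) ≠ 0 →
      ε < |MvPolynomial.eval (ξ v) (p i)| := by
    have h1 : ∀ᶠ ε : ℝ in nhdsWithin 0 (Set.Ioi 0), ∀ q : (Fin k → SignType) × Fin k,
        MvPolynomial.eval (ξ q.1) (p q.2) ≠ 0 → ε < |MvPolynomial.eval (ξ q.1) (p q.2)| := by
      rw [Filter.eventually_all]
      intro q
      by_cases h : MvPolynomial.eval (ξ q.1) (p q.2) = 0
      · exact Filter.Eventually.of_forall fun _ h' => absurd h h'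
      · have := (gt_mem_nhds (abs_pos.2 h))
        exact (Filter.Eventually.filter_mono nhdsWithin_le_nhds this).mono fun _ h _ => h
    obtain ⟨ε, h2, h3⟩ := (h1.and self_mem_nhdsWithin).exists
    exact ⟨ε, h3, fun v _ i => h2 (v, i)⟩
  obtain ⟨ε, hε0, hε⟩ := hε
  set P : Fin k × Bool → MvPolynomial (Fin l) ℝ := fun q =>
    p q.1 + MvPolynomial.C (if q.2 then ε else -ε) with hPdef
  have hPe : ∀ x q, MvPolynomial.eval x (P q) = MvPolynomial.eval x (p q.1) + (if q.2 then ε else -ε) := by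
    intro x q; simp only [hPdef, map_add, MvPolynomial.eval_C]
  have hPd : ∀ q, (P q).totalDegree ≤ d := by
    intro q
    refine (MvPolynomial.totalDegree_add _ _).trans ?_
    simp [hdeg]
  have hsame : ∀ v ∈ V, ∀ w ∈ V, (∀ q, SignType.sign (MvPolynomial.eval (ξ v) (P q)) =
      SignType.sign (MvPolynomial.eval (ξ w) (P q))) → v = w := by
    intro v hv w hw h
    funext i
    have ht := h (i, true)
    have hf := h (i, false)
    rw [hPe, hPe] at ht hf
    simp only [if_true, Bool.false_eq_true, if_false] at ht hf
    rw [hξ v hv i, hξ w hw i]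
    have h1 := hε v hv i
    have h2 := hε w hw i
    generalize MvPolynomial.eval (ξ v) (p i) = s at *
    generalize MvPolynomial.eval (ξ w) (p i) = t at *
    have key : ∀ s : ℝ, (s ≠ 0 → ε < |s|) →
        (0 < s ∧ SignType.sign (s + -ε) = 1 ∧ SignType.sign (s + ε) = 1) ∨
        (s = 0 ∧ SignType.sign (s + -ε) = -1 ∧ SignType.sign (s + ε) = 1) ∨
        (s < 0 ∧ SignType.sign (s + -ε) = -1 ∧ SignType.sign (s + ε) = -1) := by
      intro s hs
      rcases lt_trichotomy s 0 with h | h | h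
      · have := hs h.ne
        rw [abs_of_neg h] at this
        exact Or.inr (Or.inr ⟨h, sign_neg (by linarith), sign_neg (by linarith)⟩)
      · exact Or.inr (Or.inl ⟨h, sign_neg (by linarith), sign_pos (by linarith)⟩)
      · have := hs h.ne'
        rw [abs_of_pos h] at this
        exact Or.inl ⟨h, sign_pos (by linarith), sign_pos (by linarith)⟩
    rcases key s h1 with ⟨a, b, c⟩ | ⟨a, b, c⟩ | ⟨a, b, c⟩ <;>
    rcases key t h2 with ⟨a', b', c'⟩ | ⟨a', b', c'⟩ | ⟨a', b', c'⟩ <;>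
    rw [b, b'] at hf <;> rw [c, c'] at ht <;>
    first
    | (exfalso; revert hf; decide)
    | (exfalso; revert ht; decide)
    | simp [sign_pos, sign_neg, a, a']
  have hmain := w_strict P d hd hPd (hfin.toFinset.image ξ)
    (by
      intro x hx q
      obtain ⟨v, hv, rfl⟩ := mem_image.1 hx
      have hv' : v ∈ V := hfin.mem_toFinset.1 hv
      rw [hPe]
      intro h0
      have h1 := hε v hv' q.1
      have h2 : MvPolynomial.eval (ξ v) (p q.1) = -(if q.2 then ε else -ε) := by linarith
      rw [h2] at h1
      split_ifs at h1
      · have := h1 (by simpa using hε0.ne')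
        rw [abs_neg, abs_of_pos hε0] at this
        exact lt_irrefl _ this
      · have := h1 (by simpa using hε0.ne')
        rw [neg_neg, abs_of_pos hε0] at this
        exact lt_irrefl _ this)
    (by
      intro x hx y hy h
      obtain ⟨v, hv, rfl⟩ := mem_image.1 hx
      obtain ⟨w, hw, rfl⟩ := mem_image.1 hy
      rw [hsame v (hfin.mem_toFinset.1 hv) w (hfin.mem_toFinset.1 hw) h])
  rw [card_image_of_injOn] at hmain
  swap
  · intro v hv w hw h
    exact hsame v (hfin.mem_toFinset.1 hv) w (hfin.mem_toFinset.1 hw) fun q => by rw [h]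
  rw [Set.ncard_eq_toFinset_card V hfin]
  simp only [Fintype.card_fin, Fintype.card_prod, Fintype.card_bool] at hmain
  have hlR : (1:ℝ) ≤ l := by exact_mod_cast hl
  have hkR : (l:ℝ) ≤ k := by exact_mod_cast hk
  have h1 : ((hfin.toFinset.card : ℕ) : ℝ) ≤ (d:ℝ) ^ l * ((l + k * 2).choose l : ℝ) := by
    exact_mod_cast hmain
  have h2 := Nat.choose_le_pow_div (α := ℝ) l (l + k * 2)
  have h3 : (l:ℝ) ^ l / l.factorial ≤ Real.exp 1 ^ l := by
    have := Real.pow_div_factorial_le_exp (x := (l:ℝ)) (by positivity) l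
    rwa [← Real.exp_one_rpow, Real.rpow_natCast] at this
  calc ((hfin.toFinset.card : ℕ) : ℝ) ≤ (d:ℝ) ^ l * ((l + k * 2).choose l : ℝ) := h1
    _ ≤ (d:ℝ) ^ l * (((l + k * 2 : ℕ) : ℝ) ^ l / l.factorial) := by gcongr
    _ ≤ (d:ℝ) ^ l * ((8 * k : ℝ) ^ l / l.factorial) := by
        gcongr
        push_cast
        linarith
    _ = (8 * d * k / l) ^ l * ((l:ℝ) ^ l / l.factorial) := by
        rw [div_pow, mul_pow, mul_pow, mul_pow]
        field_simp
    _ ≤ (8 * d * k / l) ^ l * Real.exp 1 ^ l := by gcongr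
    _ = (8 * Real.exp 1 * d * k / l) ^ l := by
        rw [← mul_pow]; congr 1; ring
end

section
/- Fix q ≥ 1 and a finite list f_1, …, f_s of real polynomials in 2q variables, each symmetric in the sense that f_t(x, y) = f_t(y, x) for all x, y ∈ ℝ^q, together with sign conditions σ_t ∈ {'≥ 0', '> 0'}. Then there exist constants ε > 0 and C > 0 (depending only on the f_t) such that for every n ≥ 1 there is a natural number m ≤ C·n^{1−ε} and a symmetric function G : {0,1}^m × {0,1}^m → {0,1} with the property: for every tuple of points x_1, …, x_n ∈ ℝ^q there exists F : {1,…,n} → {0,1}^m such that for all i ≠ j, G(F(i), F(j)) = 1 if and only if for every t, f_t(x_i, x_j) satisfies the sign condition σ_t. -/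
open Classical in
theorem sir_decomp {q : ℕ} (p : MvPolynomial (Fin q ⊕ Fin q) ℝ) :
    ∃ φ ψ : (Fin q → ℝ) → p.support → ℝ, ∀ x y,
      MvPolynomial.eval (Sum.elim x y) p = ∑ i, φ x i * ψ y i := by
  refine ⟨fun x d => MvPolynomial.coeff d.1 p * ∏ i, x i ^ (d.1 (Sum.inl i)),
    fun y d => ∏ i, y i ^ (d.1 (Sum.inr i)), fun x y => ?_⟩
  rw [MvPolynomial.eval_eq', ← Finset.sum_coe_sort]
  refine Finset.sum_congr rfl fun d _ => ?_
  rw [Fintype.prod_sum_type]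
  simp [mul_assoc]

open Classical in
theorem sir_vc {X Y ι : Type*} [Fintype ι] (φ : X → ι → ℝ) (ψ : Y → ι → ℝ) (g : X → Y → ℝ)
    (hg : ∀ x y, g x y = ∑ i, φ x i * ψ y i) (b : Bool) {k : ℕ} (a : Fin k → X) (P : Finset Y)
    (T : Finset (Fin k))
    (hT : (P.image (fun y => Finset.univ.filter
      (fun j : Fin k => cond b (0 < g (a j) y) (0 ≤ g (a j) y)))).Shatters T) :
    T.card ≤ Fintype.card ι := by
  by_contra hlt
  have hdep : ¬ LinearIndependent ℝ (fun j : T => φ (a j)) := by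
    intro h
    have := h.fintype_card_le_finrank
    simp at this
    omega
  rw [Fintype.not_linearIndependent_iff] at hdep
  have : ∃ c : T → ℝ, ∑ j, c j • φ (a j) = 0 ∧ ∃ j, 0 < c j := by
    obtain ⟨c, hc, j, hj⟩ := hdep
    rcases lt_or_gt_of_ne hj with h | h
    · refine ⟨fun j => - c j, ?_, j, by simpa using h⟩
      simp only [neg_smul, Finset.sum_neg_distrib, hc, neg_zero]
    · exact ⟨c, hc, j, h⟩
  obtain ⟨c, hc, j0, hj0⟩ := this
  have hsum : ∀ y, ∑ j, c j * g (a j) y = 0 := by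
    intro y
    have h1 : ∀ j : T, c j * g (a j) y = ∑ i, (c j * φ (a j) i) * ψ y i := by
      intro j; rw [hg, Finset.mul_sum]; simp [mul_assoc]
    simp_rw [h1]
    rw [Finset.sum_comm]
    refine Finset.sum_eq_zero fun i _ => ?_
    rw [← Finset.sum_mul]
    have := congrFun hc i
    simp only [Finset.sum_apply, Pi.smul_apply, smul_eq_mul, Pi.zero_apply] at this
    rw [this, zero_mul]
  have key : ∀ p : T → Prop, ∃ y, ∀ j : T, cond b (0 < g (a j) y) (0 ≤ g (a j) y) ↔ p j := by
    intro p
    have hsub : (Finset.univ.filter p).map (Function.Embedding.subtype _) ⊆ T := by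
      intro x hx
      simp at hx
      exact hx.1
    obtain ⟨u, hu, hTu⟩ := hT hsub
    obtain ⟨y, -, rfl⟩ := Finset.mem_image.1 hu
    refine ⟨y, fun j => ?_⟩
    have := Finset.ext_iff.1 hTu j
    simpa using this
  cases b with
  | true =>
    obtain ⟨y, hy⟩ := key (fun j => 0 < c j)
    simp only [cond_true] at hy
    have : 0 < ∑ j, c j * g (a j) y := by
      refine Finset.sum_pos' (fun j _ => ?_) ⟨j0, Finset.mem_univ _, mul_pos hj0 ((hy j0).2 hj0)⟩
      by_cases h : 0 < c j
      · exact (mul_pos h ((hy j).2 h)).le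
      · exact mul_nonneg_of_nonpos_of_nonpos (not_lt.1 h) (not_lt.1 (mt (hy j).1 h))
    exact this.ne' (hsum y)
  | false =>
    obtain ⟨y, hy⟩ := key (fun j => c j ≤ 0)
    simp only [cond_false] at hy
    have : 0 < ∑ j, -(c j * g (a j) y) := by
      refine Finset.sum_pos' (fun j _ => ?_) ⟨j0, Finset.mem_univ _, ?_⟩
      · by_cases h : c j ≤ 0
        · have := mul_nonneg_of_nonpos_of_nonpos h (neg_nonpos.2 ((hy j).2 h))
          linarith
        · have := mul_pos (not_le.1 h) (neg_pos.2 (not_le.1 (mt (hy j).1 h)))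
          linarith
      · have := mul_pos hj0 (neg_pos.2 (not_le.1 (mt (hy j0).1 (not_le.2 hj0))))
        linarith
    rw [Finset.sum_neg_distrib, hsum] at this
    simp at this

theorem sir_choose (k N : ℕ) : ∑ i ∈ Finset.Iic N, k.choose i ≤ (k + 1) ^ N := by
  rw [add_pow, Nat.range_succ_eq_Iic]
  refine Finset.sum_le_sum fun i hi => ?_
  simp at hi
  calc k.choose i ≤ k ^ i := Nat.choose_le_pow _ _
    _ ≤ _ := by simpa using Nat.le_mul_of_pos_right _ (Nat.choose_pos hi)

open Classical in
theorem sir_trace {X Y ι : Type*} [Fintype ι] (φ : X → ι → ℝ) (ψ : Y → ι → ℝ) (g : X → Y → ℝ)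
    (hg : ∀ x y, g x y = ∑ i, φ x i * ψ y i) (b : Bool) {k : ℕ} (a : Fin k → X) (P : Finset Y) :
    (P.image (fun y => Finset.univ.filter
      (fun j : Fin k => cond b (0 < g (a j) y) (0 ≤ g (a j) y)))).card
      ≤ (k + 1) ^ (Fintype.card ι) := by
  refine (Finset.card_le_card_shatterer _).trans (Finset.card_shatterer_le_sum_vcDim.trans ?_)
  rw [Fintype.card_fin]
  refine (sir_choose _ _).trans (Nat.pow_le_pow_right (by omega) ?_)
  refine Finset.sup_le fun T hT => ?_
  exact sir_vc φ ψ g hg b a P T (Finset.mem_shatterer.1 hT)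

open Classical in
theorem sir_count {q s n : ℕ} (f : Fin s → MvPolynomial (Fin q ⊕ Fin q) ℝ) (σ : Fin s → Bool)
    (x : Fin n → (Fin q → ℝ)) (R : Fin n → Fin n → Prop)
    (hR : ∀ i j, R i j ↔ ∀ t : Fin s,
                    cond (σ t) (0 < MvPolynomial.eval (Sum.elim (x i) (x j)) (f t))
                      (0 ≤ MvPolynomial.eval (Sum.elim (x i) (x j)) (f t)))
    {k : ℕ} (a : Fin k → Fin n) (P : Finset (Fin n))
    (hP : ∀ y ∈ P, ∀ z ∈ P, y ≠ z → ∃ j, ¬ (R (a j) y ↔ R (a j) z)) :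
    P.card ≤ (k + 1) ^ (∑ t, (f t).support.card) := by
  let S : Fin s → Fin n → Finset (Fin k) := fun t y => Finset.univ.filter
      (fun j : Fin k => cond (σ t) (0 < MvPolynomial.eval (Sum.elim (x (a j)) (x y)) (f t))
                      (0 ≤ MvPolynomial.eval (Sum.elim (x (a j)) (x y)) (f t)))
  have h1 : P.card ≤ (Fintype.piFinset (fun t => P.image (S t))).card := by
    refine Finset.card_le_card_of_injOn (fun y t => S t y) ?_ ?_
    · intro y hy
      simp only [Finset.mem_coe, Fintype.mem_piFinset] 
      exact fun t => Finset.mem_image_of_mem _ hy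
    · intro y hy z hz hyz
      by_contra hne
      obtain ⟨j, hj⟩ := hP y hy z hz hne
      apply hj
      rw [hR, hR]
      refine forall_congr' fun t => ?_
      have := Finset.ext_iff.1 (congrFun hyz t) j
      simpa [S] using this
  refine h1.trans ?_
  rw [Fintype.card_piFinset, ← Finset.prod_pow_eq_pow_sum]
  refine Finset.prod_le_prod' fun t _ => ?_
  obtain ⟨φ, ψ, h⟩ := sir_decomp (f t)
  have := sir_trace φ (fun y => ψ (x y)) (fun u y => MvPolynomial.eval (Sum.elim u (x y)) (f t))
    (fun u y => h _ _) (σ t) (fun j => x (a j)) P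
  simpa [S] using this

open Classical in
theorem sir_sep {n k D : ℕ} (R : Fin n → Fin n → Prop) (P : Finset (Fin n))
    (hk : n ^ 2 * (n - D) ^ k < n ^ k)
    (hP : ∀ y ∈ P, ∀ z ∈ P, y ≠ z → D < (Finset.univ.filter fun v => ¬ (R v y ↔ R v z)).card) :
    ∃ a : Fin k → Fin n, ∀ y ∈ P, ∀ z ∈ P, y ≠ z → ∃ j, ¬ (R (a j) y ↔ R (a j) z) := by
  by_contra! hcon
  have hsub : (Finset.univ : Finset (Fin k → Fin n)) ⊆ P.offDiag.biUnion
      (fun p => Fintype.piFinset (fun _ => Finset.univ.filter fun v => (R v p.1 ↔ R v p.2))) := by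
    intro a _
    obtain ⟨y, hy, z, hz, hyz, h⟩ := hcon a
    simp only [Finset.mem_biUnion, Finset.mem_offDiag, Fintype.mem_piFinset, Finset.mem_filter]
    exact ⟨(y, z), ⟨hy, hz, hyz⟩, fun j => ⟨Finset.mem_univ _, h j⟩⟩
  have h1 := (Finset.card_le_card hsub).trans (Finset.card_biUnion_le_card_mul _ _ ((n - D) ^ k) ?_)
  · simp only [Finset.card_univ, Fintype.card_pi, Fintype.card_fin, Finset.prod_const] at h1
    have h2 : P.offDiag.card ≤ n ^ 2 := by
      rw [Finset.offDiag_card]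
      have : P.card ≤ n := by simpa using P.card_le_univ
      calc _ ≤ P.card * P.card := Nat.sub_le _ _
        _ ≤ n * n := Nat.mul_le_mul this this
        _ = _ := (sq n).symm
    have := Nat.mul_le_mul_right ((n - D) ^ k) h2
    omega
  · rintro ⟨y, z⟩ hp
    rw [Finset.mem_offDiag] at hp
    rw [Fintype.card_piFinset]
    simp only [Finset.prod_const, Finset.card_univ, Fintype.card_fin]
    refine Nat.pow_le_pow_left ?_ _
    have h3 := hP y hp.1 z hp.2.1 hp.2.2
    have h4 := Finset.card_filter_add_card_filter_not (s := (Finset.univ : Finset (Fin n)))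
      (fun v => (R v y ↔ R v z))
    simp only [Finset.card_univ, Fintype.card_fin] at h4
    omega

open Classical in
theorem sir_reps {n D r : ℕ} (hn : 1 ≤ n) (R : Fin n → Fin n → Prop)
    (hr : ∀ P : Finset (Fin n), (∀ y ∈ P, ∀ z ∈ P, y ≠ z →
      D < (Finset.univ.filter fun v => ¬ (R v y ↔ R v z)).card) → P.card ≤ r) :
    ∃ (u : Fin r → Fin n) (ρ : Fin n → Fin r), ∀ y,
      (Finset.univ.filter fun v => ¬ (R v y ↔ R v (u (ρ y)))).card ≤ D := by
  let Q : Finset (Fin n) → Prop := fun P => ∀ y ∈ P, ∀ z ∈ P, y ≠ z →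
      D < (Finset.univ.filter fun v => ¬ (R v y ↔ R v z)).card
  obtain ⟨P, hPQ, hmax⟩ := Finset.exists_max_image (Finset.univ.filter Q) Finset.card
    ⟨∅, by simp [Q]⟩
  have hQ : Q P := (Finset.mem_filter.1 hPQ).2
  have hrep : ∀ y, ∃ z ∈ P, (Finset.univ.filter fun v => ¬ (R v y ↔ R v z)).card ≤ D := by
    intro y
    by_contra hcon0
    have hcon : ∀ z ∈ P, D < (Finset.univ.filter fun v => ¬ (R v y ↔ R v z)).card :=
      fun z hz => not_le.1 fun h => hcon0 ⟨z, hz, h⟩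
    have hy : y ∉ P := fun hy => by simpa using hcon y hy
    have hQ' : Q (insert y P) := by
      intro w hw z hz hwz
      rw [Finset.mem_insert] at hw hz
      rcases hw with rfl | hw <;> rcases hz with rfl | hz
      · exact absurd rfl hwz
      · exact hcon z hz
      · have := hcon w hw
        rwa [Finset.filter_congr (fun v _ => not_congr (iff_comm (a := R v z) (b := R v w)))] at this
      · exact hQ w hw z hz hwz
    have := hmax _ (Finset.mem_filter.2 ⟨Finset.mem_univ _, hQ'⟩)
    rw [Finset.card_insert_of_notMem hy] at this
    omega
  have hcard := hr P hQ
  let e : P ↪ Fin r := P.equivFin.toEmbedding.trans (Fin.castLEEmb hcard)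
  have : Nonempty P := by
    obtain ⟨z, hz, -⟩ := hrep ⟨0, hn⟩
    exact ⟨⟨z, hz⟩⟩
  choose z hz hzD using hrep
  refine ⟨fun t => (Function.invFun e t : P), fun y => e ⟨z y, hz y⟩, fun y => ?_⟩
  simp only [Function.leftInverse_invFun e.injective _]
  exact hzD y

open Classical in
theorem sir_list {n D : ℕ} (S : Finset (Fin n)) (h : S.card ≤ D) :
    ∃ g : Fin D → Option (Fin n), ∀ v, v ∈ S ↔ ∃ t, g t = some v := by
  refine ⟨fun t => if ht : t.1 < S.card then some (S.equivFin.symm ⟨t.1, ht⟩).1 else none, fun v => ?_⟩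
  constructor
  · intro hv
    refine ⟨⟨(S.equivFin ⟨v, hv⟩).1, lt_of_lt_of_le (Fin.is_lt _) h⟩, ?_⟩
    simp
  · rintro ⟨t, ht⟩
    dsimp only at ht
    split_ifs at ht with h1
    simp only [Option.some.injEq] at ht
    rw [← ht]
    exact Subtype.prop _

open Classical in
theorem sir_encode {q s : ℕ} (f : Fin s → MvPolynomial (Fin q ⊕ Fin q) ℝ)
    (hsymm : ∀ t, ∀ x y : Fin q → ℝ,
      MvPolynomial.eval (Sum.elim x y) (f t) = MvPolynomial.eval (Sum.elim y x) (f t))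
    (σ : Fin s → Bool) {n k D r L m : ℕ} (hn : 1 ≤ n) (hk : n ^ 2 * (n - D) ^ k < n ^ k)
    (hr : r = (k + 1) ^ (∑ t, (f t).support.card)) (hL : n + 1 ≤ 2 ^ L)
    (hm : m = L + 2 * r + L * D) :
    ∃ G : (Fin m → Bool) → (Fin m → Bool) → Bool,
          (∀ a b, G a b = G b a) ∧
          ∀ x : Fin n → (Fin q → ℝ),
            ∃ F : Fin n → (Fin m → Bool),
              ∀ i j : Fin n, i ≠ j →
                (G (F i) (F j) = true ↔
                  ∀ t : Fin s,
                    cond (σ t) (0 < MvPolynomial.eval (Sum.elim (x i) (x j)) (f t))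
                      (0 ≤ MvPolynomial.eval (Sum.elim (x i) (x j)) (f t))) := by
  have hcard : Fintype.card (Fin n × (Fin r → Bool) × Fin r × (Fin D → Option (Fin n))) ≤
      Fintype.card (Fin m → Bool) := by
    simp only [Fintype.card_prod, Fintype.card_pi, Fintype.card_fin, Fintype.card_bool,
      Fintype.card_option, Finset.prod_const, Finset.card_univ]
    calc n * (2 ^ r * (r * (n + 1) ^ D)) ≤ 2 ^ L * (2 ^ r * (2 ^ r * (2 ^ L) ^ D)) := by
          gcongr
          · omega
          · exact Nat.lt_two_pow_self.le
      _ = 2 ^ m := by rw [hm, ← pow_mul]; ring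
  obtain ⟨e⟩ := Function.Embedding.nonempty_of_card_le hcard
  have hr1 : 0 < r := by rw [hr]; positivity
  have : Nonempty (Fin n × (Fin r → Bool) × Fin r × (Fin D → Option (Fin n))) :=
    ⟨(⟨0, hn⟩, fun _ => true, ⟨0, hr1⟩, fun _ => none)⟩
  obtain ⟨d, hd⟩ : ∃ d : (Fin m → Bool) →
      (Fin n × (Fin r → Bool) × Fin r × (Fin D → Option (Fin n))), ∀ l, d (e l) = l :=
    ⟨Function.invFun e, Function.leftInverse_invFun e.injective⟩
  let H : (Fin m → Bool) → (Fin m → Bool) → Prop := fun a b =>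
    ((d a).2.1 (d b).2.2.1 = true ↔ ¬ ∃ t, (d b).2.2.2 t = some (d a).1)
  refine ⟨fun a b => decide (H a b ∨ H b a), fun a b => decide_eq_decide.2 or_comm, fun x => ?_⟩
  obtain ⟨R, hR⟩ : ∃ R : Fin n → Fin n → Prop, ∀ i j, R i j ↔ ∀ t : Fin s,
                    cond (σ t) (0 < MvPolynomial.eval (Sum.elim (x i) (x j)) (f t))
                      (0 ≤ MvPolynomial.eval (Sum.elim (x i) (x j)) (f t)) :=
    ⟨_, fun i j => Iff.rfl⟩
  have hRs : ∀ i j, R i j ↔ R j i := by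
    intro i j
    rw [hR, hR]
    simp only [fun t => hsymm t (x i) (x j)]
  obtain ⟨u, ρ, hu⟩ := sir_reps (r := r) (D := D) hn R (by
    intro P hP
    obtain ⟨a, ha⟩ := sir_sep R P hk hP
    rw [hr]
    exact sir_count f σ x R hR a P ha)
  choose g hg using fun y => sir_list _ (hu y)
  refine ⟨fun v => e (v, fun t => decide (R v (u t)), ρ v, g v), fun i j _ => ?_⟩
  have key : ∀ i j, H (e (i, fun t => decide (R i (u t)), ρ i, g i))
      (e (j, fun t => decide (R j (u t)), ρ j, g j)) ↔ R i j := by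
    intro i j
    simp only [H, hd, ← hg]
    simp
    tauto
  rw [decide_eq_true_iff, key, key, hRs j i, or_self, hR]

theorem sir_params (M : ℕ) : ∃ ε : ℝ, 0 < ε ∧ ∃ C : ℝ, 0 < C ∧ ∀ n : ℕ, 1 ≤ n →
    ∃ k D L : ℕ, n ^ 2 * (n - D) ^ k < n ^ k ∧ n + 1 ≤ 2 ^ L ∧
      ((L + 2 * (k + 1) ^ M + L * D : ℕ) : ℝ) ≤ C * (n : ℝ) ^ ((1 : ℝ) - ε) := by
  obtain ⟨a, ha⟩ : ∃ a : ℝ, a = 1 / (2 * (M + 1)) := ⟨_, rfl⟩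
  have ha0 : 0 < a := by rw [ha]; positivity
  have haM : a * M ≤ 1 / 2 := by
    rw [ha, div_mul_eq_mul_div, div_le_div_iff₀ (by positivity) (by positivity)]; linarith
  have ha1 : a ≤ 1 / 2 := by
    rw [ha, div_le_div_iff₀ (by positivity) (by positivity)]
    have : (0:ℝ) ≤ M := by positivity
    linarith
  have hl2 : 0 < Real.log 2 := Real.log_pos (by norm_num)
  obtain ⟨c1, hc1⟩ : ∃ c : ℝ, c = 4 / a + 3 := ⟨_, rfl⟩
  obtain ⟨c2, hc2⟩ : ∃ c : ℝ, c = 1 / (a / 4) / Real.log 2 + 1 := ⟨_, rfl⟩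
  have hc1p : 0 < c1 := by rw [hc1]; positivity
  have hc2p : 0 < c2 := by rw [hc2]; positivity
  refine ⟨a / 4, by positivity, c2 + 2 * c1 ^ M + 2 * c2, by positivity, fun n hn => ?_⟩
  have hn1 : (1 : ℝ) ≤ n := by exact_mod_cast hn
  have hn0 : (0 : ℝ) < n := by linarith
  have hone : ∀ e : ℝ, 0 ≤ e → 1 ≤ (n : ℝ) ^ e := fun e he => Real.one_le_rpow hn1 he
  obtain ⟨k, hkd⟩ : ∃ k : ℕ, k = ⌈4 / a * (n : ℝ) ^ a⌉₊ + 1 := ⟨_, rfl⟩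
  obtain ⟨D, hDd⟩ : ∃ D : ℕ, D = ⌈(n : ℝ) ^ (1 - a / 2)⌉₊ := ⟨_, rfl⟩
  obtain ⟨L, hLd⟩ : ∃ L : ℕ, L = Nat.log 2 n + 1 := ⟨_, rfl⟩
  have hk1 : 4 / a * (n : ℝ) ^ a + 1 ≤ k := by
    rw [hkd]; push_cast; linarith [Nat.le_ceil (4 / a * (n : ℝ) ^ a)]
  have hk2 : (k : ℝ) + 1 ≤ c1 * (n : ℝ) ^ a := by
    have h1 := Nat.ceil_lt_add_one (show 0 ≤ 4 / a * (n : ℝ) ^ a by positivity)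
    have h2 := hone a ha0.le
    rw [hkd, hc1]; push_cast
    linarith
  have hD1 : (n : ℝ) ^ (1 - a / 2) ≤ D := by rw [hDd]; exact Nat.le_ceil _
  have hD2 : (D : ℝ) ≤ 2 * (n : ℝ) ^ (1 - a / 2) := by
    have h1 := Nat.ceil_lt_add_one (show 0 ≤ (n : ℝ) ^ (1 - a / 2) by positivity)
    have h2 := hone (1 - a / 2) (by linarith)
    rw [hDd]; linarith
  have hL2 : (L : ℝ) ≤ c2 * (n : ℝ) ^ (a / 4) := by
    have h1 : ((2 ^ Nat.log 2 n : ℕ) : ℝ) ≤ n := by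
      exact_mod_cast Nat.pow_log_le_self 2 (by omega)
    have h2 := Real.log_le_log (by positivity) h1
    push_cast at h2
    rw [Real.log_pow] at h2
    have h3 := Real.log_le_rpow_div hn0.le (show 0 < a / 4 by positivity)
    have h4 : (Nat.log 2 n : ℝ) ≤ 1 / (a / 4) / Real.log 2 * (n : ℝ) ^ (a / 4) := by
      have : (Nat.log 2 n : ℝ) ≤ ((n : ℝ) ^ (a / 4) / (a / 4)) / Real.log 2 := by
        rw [le_div_iff₀ hl2]; exact h2.trans h3
      refine this.trans (le_of_eq ?_)
      ring
    have h5 := hone (a / 4) (by linarith)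
    rw [hLd, hc2]; push_cast
    linarith
  refine ⟨k, D, L, ?_, ?_, ?_⟩
  · have e1 : ((n - D : ℕ) : ℝ) ≤ n * Real.exp (-(D / n)) := by
      rcases le_total n D with h | h
      · rw [Nat.sub_eq_zero_of_le h]; simp; positivity
      · rw [Nat.cast_sub h]
        have := Real.add_one_le_exp (-(D / n : ℝ))
        calc (n : ℝ) - D = n * (-(D / n : ℝ) + 1) := by field_simp; ring
          _ ≤ _ := by gcongr
    have e2 : Real.log n * 2 < D / n * k := by
      have h3 := Real.log_le_rpow_div hn0.le (show 0 < a / 2 by positivity)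
      have h5 : (n : ℝ) ^ (-(a / 2)) ≤ D / n := by
        rw [le_div_iff₀ hn0]
        refine le_trans (le_of_eq ?_) hD1
        rw [← Real.rpow_add_one hn0.ne']; ring_nf
      have h6 : 4 / a * (n : ℝ) ^ a < k := by linarith
      calc Real.log n * 2 ≤ (n : ℝ) ^ (a / 2) / (a / 2) * 2 := by gcongr
        _ = (n : ℝ) ^ (-(a / 2)) * (4 / a * (n : ℝ) ^ a) := by
          have : (n : ℝ) ^ (a / 2) = (n : ℝ) ^ (-(a / 2)) * (n : ℝ) ^ a := by
            rw [← Real.rpow_add hn0]; ring_nf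
          rw [this]; field_simp; ring
        _ < (n : ℝ) ^ (-(a / 2)) * k := by gcongr
        _ ≤ _ := by gcongr
    have e3 : (n : ℝ) ^ 2 * ((n - D : ℕ) : ℝ) ^ k < (n : ℝ) ^ k := by
      have hlog : (n : ℝ) ^ 2 = Real.exp (Real.log n * 2) := by
        rw [Real.exp_mul, Real.exp_log hn0]; norm_cast
      calc (n : ℝ) ^ 2 * ((n - D : ℕ) : ℝ) ^ k ≤ n ^ 2 * (n * Real.exp (-(D / n))) ^ k := by gcongr
        _ = n ^ k * Real.exp (Real.log n * 2 - D / n * k) := by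
          rw [hlog, mul_pow, ← Real.exp_nat_mul, sub_eq_add_neg, Real.exp_add]
          ring_nf
        _ < n ^ k * 1 := by
          gcongr
          rw [Real.exp_lt_one_iff]; linarith
        _ = _ := mul_one _
    exact_mod_cast e3
  · rw [hLd]
    exact Nat.lt_pow_succ_log_self (by norm_num) n
  · push_cast
    have b1 : (L : ℝ) ≤ c2 * (n : ℝ) ^ (1 - a / 4) :=
      hL2.trans (by gcongr; linarith)
    have b2 : ((k : ℝ) + 1) ^ M ≤ c1 ^ M * (n : ℝ) ^ (1 - a / 4) := by
      calc ((k : ℝ) + 1) ^ M ≤ (c1 * (n : ℝ) ^ a) ^ M := by gcongr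
        _ = c1 ^ M * (n : ℝ) ^ (a * M) := by
          rw [mul_pow, Real.rpow_mul hn0.le, Real.rpow_natCast]
        _ ≤ _ := by gcongr; linarith
    have b3 : (L : ℝ) * D ≤ 2 * c2 * (n : ℝ) ^ (1 - a / 4) := by
      calc (L : ℝ) * D ≤ (c2 * (n : ℝ) ^ (a / 4)) * (2 * (n : ℝ) ^ (1 - a / 2)) := by gcongr
        _ = 2 * c2 * ((n : ℝ) ^ (a / 4) * (n : ℝ) ^ (1 - a / 2)) := by ring
        _ = _ := by rw [← Real.rpow_add hn0]; ring_nf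
    linarith



/-- **Main theorem.** Every semi-algebraic family of graphs (given by symmetric polynomials
`f t` in `2q` variables together with sign conditions `σ t`, where `σ t = true` means
"`> 0`" and `σ t = false` means "`≥ 0`") admits an implicit representation using
`O(n^{1−ε})` bits per vertex, for some `ε > 0` depending only on the family. -/
theorem semialgebraic_implicit_representation (q s : ℕ) (hq : 1 ≤ q)
    (f : Fin s → MvPolynomial (Fin q ⊕ Fin q) ℝ)
    (hsymm : ∀ t, ∀ x y : Fin q → ℝ,
      MvPolynomial.eval (Sum.elim x y) (f t) = MvPolynomial.eval (Sum.elim y x) (f t))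
    (σ : Fin s → Bool) :
    ∃ ε : ℝ, 0 < ε ∧ ∃ C : ℝ, 0 < C ∧ ∀ n : ℕ, 1 ≤ n →
      ∃ m : ℕ, (m : ℝ) ≤ C * (n : ℝ) ^ ((1 : ℝ) - ε) ∧
        ∃ G : (Fin m → Bool) → (Fin m → Bool) → Bool,
          (∀ a b, G a b = G b a) ∧
          ∀ x : Fin n → (Fin q → ℝ),
            ∃ F : Fin n → (Fin m → Bool),
              ∀ i j : Fin n, i ≠ j →
                (G (F i) (F j) = true ↔
                  ∀ t : Fin s,
                    cond (σ t) (0 < MvPolynomial.eval (Sum.elim (x i) (x j)) (f t))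
                      (0 ≤ MvPolynomial.eval (Sum.elim (x i) (x j)) (f t))) := by
  obtain ⟨ε, hε, C, hC, h⟩ := sir_params (∑ t, (f t).support.card)
  refine ⟨ε, hε, C, hC, fun n hn => ?_⟩
  obtain ⟨k, D, L, hk, hL, hm⟩ := h n hn
  exact ⟨_, hm, sir_encode f hsymm σ hn hk rfl hL rfl⟩
end

section
/- Let Q ≥ 1 and let M be a symmetric Q × Q real matrix. Then there exists a constant C > 0 such that for every n ≥ 2 there is a natural number m ≤ C·n^{log₂(2^Q − 1)/Q} and a symmetric function G : {0,1}^m × {0,1}^m → {0,1} with the property: for every tuple of points x_1, …, x_n ∈ ℝ^Q there exists F : {1,…,n} → {0,1}^m such that for all i ≠ j, G(F(i), F(j)) = 1 if and only if x_iᵀ M x_j ≥ 0. Note that log₂(2^Q − 1)/Q < 1, so m = O(n^{1−ε}) with ε = 1 − log₂(2^Q − 1)/Q > 0. -/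
open Matrix

namespace BFI

lemma card_small_subsets {α : Type*} [DecidableEq α] (A : Finset α) (k : ℕ) :
    (A.powerset.filter (fun B => B.card ≤ k)).card ≤ (A.card + 1) ^ k := by
  classical
  have h : A.powerset.filter (fun B => B.card ≤ k) ⊆
      (Finset.univ : Finset (Fin k → Option A)).image
        (fun g => A.filter (fun a => ∃ i, (g i).map Subtype.val = some a)) := by
    intro B hB
    rw [Finset.mem_filter, Finset.mem_powerset] at hB
    obtain ⟨hBA, hBk⟩ := hB
    rw [Finset.mem_image]
    refine ⟨fun i => if h : (i : ℕ) < B.card then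
      some ⟨(B.equivFin.symm ⟨i, h⟩ : α), hBA (B.equivFin.symm ⟨i, h⟩).2⟩ else none,
      Finset.mem_univ _, ?_⟩
    ext a
    rw [Finset.mem_filter]
    constructor
    · rintro ⟨_, i, hi⟩
      by_cases h : (i : ℕ) < B.card
      · simp [h] at hi
        rw [← hi]
        exact (B.equivFin.symm ⟨i, h⟩).2
      · simp [h] at hi
    · intro ha
      refine ⟨hBA ha, ⟨B.equivFin ⟨a, ha⟩, lt_of_lt_of_le (B.equivFin ⟨a, ha⟩).2 hBk⟩, ?_⟩
      simp
  calc _ ≤ _ := Finset.card_le_card h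
    _ ≤ _ := Finset.card_image_le
    _ = _ := by simp

set_option linter.unusedSectionVars false

variable {ι κ : Type*} [DecidableEq ι] [Fintype κ] [DecidableEq κ]

def unsep (f : κ → ι → Bool) (P : Finset ι) (A : Finset κ) : Finset (ι × ι) :=
  (P ×ˢ P).filter (fun z => z.1 ≠ z.2 ∧ ∀ S ∈ A, f S z.1 = f S z.2)

def sepw (f : κ → ι → Bool) (w : κ → ℝ) (p q : ι) : ℝ :=
  ∑ S, if f S p = f S q then 0 else w S

lemma greedy (f : κ → ι → Bool) (P : Finset ι) (w : κ → ℝ) (hw : ∀ S, 0 ≤ w S) (δ : ℝ)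
    (hδ1 : δ ≤ 1)
    (h : ∀ p ∈ P, ∀ q ∈ P, p ≠ q → δ * ∑ S, w S < sepw f w p q) (s : ℕ) :
    ∃ A : Finset κ, A.card ≤ s ∧ ((unsep f P A).card : ℝ) ≤ (1 - δ) ^ s * (P.card : ℝ) ^ 2 := by
  induction s with
  | zero =>
    refine ⟨∅, by simp, ?_⟩
    have : (unsep f P ∅).card ≤ P.card ^ 2 := by
      rw [sq, ← Finset.card_product]
      exact Finset.card_filter_le _ _
    simp only [pow_zero, one_mul]
    exact_mod_cast this
  | succ s ih =>
    obtain ⟨A, hA, hU⟩ := ih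
    rcases Finset.eq_empty_or_nonempty (unsep f P A) with he | hne
    · refine ⟨A, by omega, ?_⟩
      rw [he]
      have : 0 ≤ 1 - δ := by linarith
      simp only [Finset.card_empty, Nat.cast_zero]
      positivity
    have key : ∃ S, δ * (unsep f P A).card ≤
        (((unsep f P A).filter (fun z => ¬ f S z.1 = f S z.2)).card : ℝ) := by
      by_contra hcon
      push Not at hcon
      have h1 : ∑ z ∈ unsep f P A, (δ * ∑ S, w S) < ∑ z ∈ unsep f P A, sepw f w z.1 z.2 := by
        apply Finset.sum_lt_sum_of_nonempty hne
        intro z hz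
        simp only [unsep, Finset.mem_filter, Finset.mem_product] at hz
        exact h _ hz.1.1 _ hz.1.2 hz.2.1
      have h2 : ∑ z ∈ unsep f P A, sepw f w z.1 z.2 =
          ∑ S, w S * (((unsep f P A).filter (fun z => ¬ f S z.1 = f S z.2)).card : ℝ) := by
        unfold sepw
        rw [Finset.sum_comm]
        refine Finset.sum_congr rfl fun S _ => ?_
        rw [Finset.card_filter, Nat.cast_sum, Finset.mul_sum]
        refine Finset.sum_congr rfl fun z _ => ?_
        by_cases hz : f S z.1 = f S z.2 <;> simp [hz]
      have h3 : ∑ S, w S * (((unsep f P A).filter (fun z => ¬ f S z.1 = f S z.2)).card : ℝ)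
          ≤ ∑ S, w S * (δ * (unsep f P A).card) :=
        Finset.sum_le_sum fun S _ => mul_le_mul_of_nonneg_left (hcon S).le (hw S)
      rw [← Finset.sum_mul] at h3
      rw [Finset.sum_const, nsmul_eq_mul] at h1
      nlinarith
    obtain ⟨S, hS⟩ := key
    refine ⟨insert S A, (Finset.card_insert_le _ _).trans (by omega), ?_⟩
    have h4 : unsep f P (insert S A) = (unsep f P A).filter (fun z => f S z.1 = f S z.2) := by
      ext z
      simp only [unsep, Finset.mem_filter, Finset.mem_insert, forall_eq_or_imp]
      tauto
    have h5 := Finset.card_filter_add_card_filter_not (s := unsep f P A)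
      (fun z => f S z.1 = f S z.2)
    have h6 : (((unsep f P A).filter (fun z => f S z.1 = f S z.2)).card : ℝ) +
      (((unsep f P A).filter (fun z => ¬ f S z.1 = f S z.2)).card : ℝ) = (unsep f P A).card := by
      exact_mod_cast h5
    rw [h4, pow_succ]
    have h7 := mul_le_mul_of_nonneg_left hU (by linarith : 0 ≤ 1 - δ)
    nlinarith

lemma exists_pair (f : κ → ι → Bool) (Q : ℕ)
    (hVC : ∀ A : Finset κ, A.card = Q + 1 →
      ∃ t ⊆ A, ∀ p, A.filter (fun S => f S p = true) ≠ t)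
    (P : Finset ι) (w : κ → ℝ) (hw : ∀ S, 0 ≤ w S) (δ : ℝ)
    (hδ1 : δ ≤ 1) (s : ℕ) (hs : (s + 1) ^ Q < P.card)
    (hd : (1 - δ) ^ s * (P.card : ℝ) ^ 2 < 1) :
    ∃ p ∈ P, ∃ q ∈ P, p ≠ q ∧ sepw f w p q ≤ δ * ∑ S, w S := by
  by_contra hcon
  push Not at hcon
  obtain ⟨A, hA, hU⟩ := greedy f P w hw δ hδ1 hcon s
  have hU0 : unsep f P A = ∅ := by
    rw [← Finset.card_eq_zero]
    have : ((unsep f P A).card : ℝ) < 1 := lt_of_le_of_lt hU hd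
    have : (unsep f P A).card < 1 := by exact_mod_cast this
    omega
  set 𝒜 : Finset (Finset κ) := P.image (fun p => A.filter (fun S => f S p = true)) with h𝒜
  have hc : 𝒜.card = P.card := by
    apply Finset.card_image_of_injOn
    intro p hp q hq hpq
    by_contra hne
    have : (p, q) ∈ unsep f P A := by
      simp only [unsep, Finset.mem_filter, Finset.mem_product]
      refine ⟨⟨hp, hq⟩, hne, fun S hS => ?_⟩
      have := Finset.ext_iff.1 hpq S
      simp only [Finset.mem_filter, hS, true_and] at this
      exact Bool.eq_iff_iff.2 this
    rw [hU0] at this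
    simp at this
  have hsh : 𝒜.shatterer ⊆ A.powerset.filter (fun B => B.card ≤ Q) := by
    intro B hB
    rw [Finset.mem_shatterer] at hB
    rw [Finset.mem_filter, Finset.mem_powerset]
    have hBA : B ⊆ A := by
      obtain ⟨t, ht, hBt⟩ := hB.exists_superset
      rw [h𝒜, Finset.mem_image] at ht
      obtain ⟨p, _, rfl⟩ := ht
      exact hBt.trans (Finset.filter_subset _ _)
    refine ⟨hBA, ?_⟩
    by_contra hlt
    obtain ⟨B', hB', hcard⟩ := Finset.exists_subset_card_eq (show Q + 1 ≤ B.card by omega)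
    obtain ⟨t, ht, hno⟩ := hVC B' hcard
    obtain ⟨u, hu, hut⟩ := hB.mono_right hB' ht
    rw [h𝒜, Finset.mem_image] at hu
    obtain ⟨p, _, rfl⟩ := hu
    apply hno p
    rw [← hut]
    ext S
    simp only [Finset.mem_filter, Finset.mem_inter]
    constructor
    · rintro ⟨h1, h2⟩; exact ⟨h1, hBA (hB' h1), h2⟩
    · rintro ⟨h1, _, h2⟩; exact ⟨h1, h2⟩
  have h1 := 𝒜.card_le_card_shatterer
  have h2 := Finset.card_le_card hsh
  have h3 := card_small_subsets A Q
  have h4 : (A.card + 1) ^ Q ≤ (s + 1) ^ Q := Nat.pow_le_pow_left (by omega) _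
  omega

def ch : List Bool → ℕ
  | [] => 0
  | [_] => 0
  | a :: b :: l => (if a = b then 0 else 1) + ch (b :: l)

lemma ch_insert (L1 L2 : List Bool) (q p : Bool) :
    ch (L1 ++ q :: p :: L2) ≤ ch (L1 ++ q :: L2) + (if p = q then 0 else 2) := by
  induction L1 with
  | nil =>
    cases L2 with
    | nil => cases p <;> cases q <;> simp [ch]
    | cons a l => cases p <;> cases q <;> cases a <;> simp [ch] <;> omega
  | cons a l ih =>
    cases l with
    | nil => simp only [List.nil_append, List.cons_append, ch] at ih ⊢; omega
    | cons b l => simp only [List.cons_append, ch] at ih ⊢; omega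

lemma exists_list (f : κ → ι → Bool) (δ E : ℕ → ℝ) (hE0 : 1 ≤ E 0) (hE1 : 1 ≤ E 1)
    (hE : ∀ r, 1 ≤ r → (1 + 3 * δ (r + 1)) * E r ≤ E (r + 1)) (hEn : ∀ r, 0 ≤ E r)
    (hpair : ∀ (P : Finset ι) (w : κ → ℝ), (∀ S, 0 ≤ w S) → 2 ≤ P.card →
      ∃ p ∈ P, ∃ q ∈ P, p ≠ q ∧ sepw f w p q ≤ δ P.card * ∑ S, w S) (r : ℕ) :
    ∀ (P : Finset ι) (w : κ → ℝ), (∀ S, 0 ≤ w S) → P.card = r →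
      ∃ L : List ι, L.length = r ∧ (∀ p, p ∈ P ↔ p ∈ L) ∧
        ∑ S, w S * 2 ^ ch (L.map (f S)) ≤ E r * ∑ S, w S := by
  induction r with
  | zero =>
    intro P w hw hP
    refine ⟨[], rfl, by simpa [Finset.card_eq_zero, Finset.eq_empty_iff_forall_notMem] using hP, ?_⟩
    simp only [List.map_nil, ch, pow_zero, mul_one]
    exact le_mul_of_one_le_left (Finset.sum_nonneg fun S _ => hw S) hE0
  | succ r ih =>
    intro P w hw hP
    rcases Nat.eq_zero_or_pos r with rfl | hr
    · obtain ⟨a, rfl⟩ := Finset.card_eq_one.1 hP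
      refine ⟨[a], rfl, by simp, ?_⟩
      simp only [List.map_cons, List.map_nil, ch, pow_zero, mul_one]
      exact le_mul_of_one_le_left (Finset.sum_nonneg fun S _ => hw S) hE1
    · obtain ⟨p, hp, q, hq, hpq, hsep⟩ := hpair P w hw (by omega)
      rw [hP] at hsep
      obtain ⟨L, hL, hmem, hsum⟩ := ih (P.erase p)
        (fun S => w S * (if f S p = f S q then 1 else 4))
        (fun S => mul_nonneg (hw S) (by split_ifs <;> norm_num))
        (by rw [Finset.card_erase_of_mem hp]; omega)
      obtain ⟨L1, L2, rfl⟩ := List.append_of_mem ((hmem q).1 (Finset.mem_erase.2 ⟨hpq.symm, hq⟩))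
      refine ⟨L1 ++ q :: p :: L2, by simp at hL ⊢; omega, ?_, ?_⟩
      · intro a
        have := hmem a
        simp only [Finset.mem_erase, List.mem_append, List.mem_cons] at this ⊢
        by_cases hap : a = p
        · subst hap; simp [hp]
        · simp only [hap, false_or, ne_eq, not_false_eq_true, true_and] at this ⊢
          exact this
      · have e1 : ∑ S, w S * (if f S p = f S q then (1 : ℝ) else 4) =
            ∑ S, w S + 3 * sepw f w p q := by
          unfold sepw
          rw [Finset.mul_sum, ← Finset.sum_add_distrib]
          refine Finset.sum_congr rfl fun S _ => ?_
          split_ifs <;> ring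
        have e2 : ∑ S, w S * (2 : ℝ) ^ ch ((L1 ++ q :: p :: L2).map (f S)) ≤
            ∑ S, w S * (if f S p = f S q then (1 : ℝ) else 4) *
              2 ^ ch ((L1 ++ q :: L2).map (f S)) := by
          refine Finset.sum_le_sum fun S _ => ?_
          rw [mul_assoc]
          refine mul_le_mul_of_nonneg_left ?_ (hw S)
          have := ch_insert (L1.map (f S)) (L2.map (f S)) (f S q) (f S p)
          simp only [List.map_append, List.map_cons]
          refine (pow_le_pow_right₀ (by norm_num : (1 : ℝ) ≤ 2) this).trans ?_
          rw [pow_add, mul_comm]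
          split_ifs <;> norm_num
        refine e2.trans (hsum.trans ?_)
        rw [e1]
        have hW : 0 ≤ ∑ S, w S := Finset.sum_nonneg fun S _ => hw S
        calc E r * (∑ S, w S + 3 * sepw f w p q)
            ≤ E r * (∑ S, w S + 3 * (δ (r + 1) * ∑ S, w S)) :=
              mul_le_mul_of_nonneg_left (by linarith) (hEn r)
          _ = ((1 + 3 * δ (r + 1)) * E r) * ∑ S, w S := by ring
          _ ≤ _ := mul_le_mul_of_nonneg_right (hE r hr) hW

def dec (b : Bool) (D : Finset ℕ) : ℕ → Bool
  | 0 => b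
  | t + 1 => xor (dec b D t) (decide (t ∈ D))

lemma exists_dec (l : List Bool) : ∃ b : Bool, ∃ D : Finset ℕ, D ⊆ Finset.range l.length ∧
    D.card ≤ ch l ∧ ∀ t (h : t < l.length), l[t] = dec b D t := by
  induction l with
  | nil => exact ⟨true, ∅, by simp, by simp, by simp⟩
  | cons a l ih =>
    cases l with
    | nil => 
      refine ⟨a, ∅, by simp, by simp, ?_⟩
      intro t h
      simp at h
      subst h
      simp [dec]
    | cons c l =>
      obtain ⟨b, D, hD, hc, hd⟩ := ih
      have hb : b = c := (hd 0 (by simp)).symm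
      subst hb
      refine ⟨a, D.image Nat.succ ∪ (if a = b then ∅ else {0}), ?_, ?_, ?_⟩
      · intro t ht
        rw [Finset.mem_union, Finset.mem_image] at ht
        rw [Finset.mem_range]
        rcases ht with ⟨u, hu, rfl⟩ | ht
        · have := Finset.mem_range.1 (hD hu)
          simp at this ⊢; omega
        · split_ifs at ht
          · simp at ht
          · simp at ht; subst ht; simp
      · refine (Finset.card_union_le _ _).trans ?_
        have := Finset.card_image_le (s := D) (f := Nat.succ)
        simp only [ch]
        split_ifs <;> simp <;> omega
      · have hsh : ∀ t, dec a (D.image Nat.succ ∪ (if a = b then ∅ else {0})) (t + 1) = dec b D t := by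
          intro t
          induction t with
          | zero => cases a <;> cases b <;> simp [dec]
          | succ t ih =>
            rw [dec, ih, dec]
            congr 2
            split_ifs <;> simp
        intro t h
        cases t with
        | zero => simp [dec]
        | succ t => 
          rw [hsh, ← hd t (by simpa using h)]
          simp

/-- combinatorial core -/
lemma core (n c m : ℕ) (hm : n * (2 * (n + 1) ^ c) ≤ 2 ^ m) :
    ∃ G : (Fin m → Bool) → (Fin m → Bool) → Bool,
      (∀ a b, G a b = G b a) ∧
      ∀ f : Fin n → Fin n → Bool, (∀ i j, f i j = f j i) →
        (∃ L : List (Fin n), L.length = n ∧ (∀ p, p ∈ L) ∧ ∀ S, ch (L.map (f S)) ≤ c) →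
        ∃ F : Fin n → (Fin m → Bool), ∀ i j, G (F i) (F j) = f i j := by
  classical
  let X := (Finset.range n).powerset.filter (fun B => B.card ≤ c)
  have hX : X.card ≤ (n + 1) ^ c := by simpa using card_small_subsets (Finset.range n) c
  let T := Fin n × Bool × X
  have hT : Fintype.card T ≤ Fintype.card (Fin m → Bool) := by
    simp only [T, Fintype.card_prod, Fintype.card_fin, Fintype.card_bool, Fintype.card_coe,
      Fintype.card_fun]
    refine le_trans ?_ hm
    gcongr
  obtain ⟨e⟩ := Function.Embedding.nonempty_of_card_le hT
  refine ⟨fun a b => decide (∃ u v : T, e u = a ∧ e v = b ∧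
    (dec u.2.1 u.2.2 v.1 = true ∨ dec v.2.1 v.2.2 u.1 = true)), ?_, ?_⟩
  · intro a b
    rw [decide_eq_decide]
    constructor <;> rintro ⟨u, v, h1, h2, h3⟩ <;> exact ⟨v, u, h2, h1, h3.symm⟩
  · rintro f hf ⟨L, hL, hmem, hch⟩
    have hlt : ∀ i, L.idxOf i < n := fun i => by
      have := List.idxOf_lt_length_of_mem (hmem i); omega
    choose b D hD hc hd using fun S => exists_dec (L.map (f S))
    let lab : Fin n → T := fun i => (⟨L.idxOf i, hlt i⟩, b i, ⟨D i, by
      simp only [X, Finset.mem_filter, Finset.mem_powerset]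
      refine ⟨by simpa [hL] using hD i, (hc i).trans (hch i)⟩⟩)
    have hdec : ∀ i j, dec (b i) (D i) (L.idxOf j) = f i j := by
      intro i j
      rw [← hd i (L.idxOf j) (by simpa [hL] using hlt j)]
      simp
    refine ⟨fun i => e (lab i), fun i j => ?_⟩
    rw [Bool.eq_iff_iff, decide_eq_true_iff]
    constructor
    · rintro ⟨u, v, h1, h2, h3⟩
      rw [e.injective h1, e.injective h2] at h3
      simp only [lab, hdec] at h3
      rw [hf j i] at h3
      tauto
    · intro h
      refine ⟨_, _, rfl, rfl, Or.inl ?_⟩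
      simpa only [lab, hdec] using h

lemma vc (Q n : ℕ) (x a : Fin n → Fin Q → ℝ) (f : Fin n → Fin n → Bool)
    (hf : ∀ S p, f S p = true ↔ 0 ≤ x p ⬝ᵥ a S) (A : Finset (Fin n)) (hA : A.card = Q + 1) :
    ∃ t ⊆ A, ∀ p, A.filter (fun S => f S p = true) ≠ t := by
  classical
  have hdep : ∃ g : Fin n → ℝ, ∑ S ∈ A, g S • a S = 0 ∧ ∃ S ∈ A, g S < 0 := by
    have h : ¬ LinearIndependent ℝ (fun S : A => a S) := by
      intro h
      have := h.fintype_card_le_finrank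
      simp [hA] at this
    rw [Fintype.not_linearIndependent_iff] at h
    obtain ⟨g, hg, S, hS⟩ := h
    let g' : Fin n → ℝ := fun i => if h : i ∈ A then g ⟨i, h⟩ else 0
    have hg' : ∑ S ∈ A, g' S • a S = 0 := by
      rw [← hg, ← Finset.sum_coe_sort A]
      refine Finset.sum_congr rfl fun i _ => ?_
      simp [g']
    have hgS : g' S = g S := by simp [g']
    rcases lt_or_gt_of_ne hS with h | h
    · exact ⟨g', hg', S, S.2, by rwa [hgS]⟩
    · refine ⟨fun i => - g' i, ?_, S, S.2, by show - g' S < 0; rw [hgS]; linarith⟩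
      simp only [neg_smul, Finset.sum_neg_distrib, hg', neg_zero]
  obtain ⟨g, hg, S, hS, hgS⟩ := hdep
  refine ⟨A.filter (fun S => 0 ≤ g S), Finset.filter_subset _ _, fun p hp => ?_⟩
  have h0 : ∑ S ∈ A, g S * (x p ⬝ᵥ a S) = 0 := by
    have := congrArg (fun v => x p ⬝ᵥ v) hg
    simpa [dotProduct_sum, dotProduct_smul] using this
  have hiff : ∀ S ∈ A, (0 ≤ x p ⬝ᵥ a S ↔ 0 ≤ g S) := by
    intro S hS
    have := Finset.ext_iff.1 hp S
    simpa [hS, hf] using this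
  have : 0 < ∑ S ∈ A, g S * (x p ⬝ᵥ a S) := by
    apply Finset.sum_pos'
    · intro i hi
      by_cases h : 0 ≤ g i
      · exact mul_nonneg h ((hiff i hi).2 h)
      · have := mt (hiff i hi).1 h
        push Not at this h
        exact (mul_pos_of_neg_of_neg h this).le
    · refine ⟨S, hS, ?_⟩
      have := mt (hiff S hS).1 (not_le.2 hgS)
      exact mul_pos_of_neg_of_neg hgS (not_le.1 this)
  linarith

lemma delta (Q : ℕ) (hQ : 1 ≤ Q) (θ : ℝ) (hθ : 0 < θ) (hθQ : θ < 1 / Q) :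
    ∃ K : ℝ, 1 ≤ K ∧ ∀ r : ℕ, 2 ≤ r → 1 ≤ K * (r : ℝ) ^ (-θ) ∨
      ∃ s : ℕ, (s + 1) ^ Q < r ∧ (1 - K * (r : ℝ) ^ (-θ)) ^ s * (r : ℝ) ^ 2 < 1 := by
  have hβ : 0 < 1 / (Q : ℝ) - θ := by linarith
  have e1 := (isLittleO_log_rpow_atTop hβ).bound (show (0 : ℝ) < 1 / 8 by norm_num)
  have e2 := (tendsto_rpow_atTop hβ).eventually_gt_atTop 8
  have e3 := (tendsto_natCast_atTop_atTop (R := ℝ)).eventually (e1.and e2)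
  obtain ⟨N, hN⟩ := Filter.eventually_atTop.1 e3
  refine ⟨(N + 1 : ℝ) ^ θ, Real.one_le_rpow (by linarith [N.cast_nonneg (α := ℝ)]) hθ.le, ?_⟩
  intro r hr
  have hr0 : (0 : ℝ) < r := by positivity
  have hr1 : (1 : ℝ) < r := by exact_mod_cast hr
  by_cases hle : 1 ≤ (N + 1 : ℝ) ^ θ * (r : ℝ) ^ (-θ)
  · exact Or.inl hle
  right
  have hNr : N ≤ r := by
    by_contra hlt
    push Not at hlt
    apply hle
    rw [Real.rpow_neg hr0.le, ← div_eq_mul_inv, one_le_div (by positivity)]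
    refine Real.rpow_le_rpow hr0.le ?_ hθ.le
    have : (r : ℝ) < N := by exact_mod_cast hlt
    linarith
  obtain ⟨h1, h2⟩ := hN r hNr
  rw [Real.norm_of_nonneg (Real.log_nonneg hr1.le), Real.norm_of_nonneg (by positivity)] at h1
  have hQ0 : (0 : ℝ) < Q := by exact_mod_cast hQ
  set y : ℝ := (r : ℝ) ^ (1 / (Q : ℝ)) with hy
  have hy1 : 1 < y := Real.one_lt_rpow hr1 (by positivity)
  have hceil : 2 ≤ ⌈y⌉₊ := Nat.lt_ceil.2 (by simpa using hy1)
  have hyQ : y ^ Q = r := by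
    rw [hy, ← Real.rpow_natCast, ← Real.rpow_mul hr0.le]
    field_simp
    simp
  obtain ⟨s, hs⟩ : ∃ s, ⌈y⌉₊ = s + 2 := ⟨⌈y⌉₊ - 2, by omega⟩
  have hs1 : (s : ℝ) + 1 < y := by
    have : s + 1 < ⌈y⌉₊ := by omega
    simpa using Nat.lt_ceil.1 this
  have hs2 : y ≤ (s : ℝ) + 2 := by
    have := Nat.le_ceil y
    rw [hs] at this
    simpa using this
  refine ⟨s, ?_, ?_⟩
  · have : ((s : ℝ) + 1) ^ Q < r := by
      rw [← hyQ]
      exact pow_lt_pow_left₀ hs1 (by positivity) (by omega)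
    exact_mod_cast this
  · push Not at hle
    have hK : 1 ≤ (N + 1 : ℝ) ^ θ := Real.one_le_rpow (by linarith [N.cast_nonneg (α := ℝ)]) hθ.le
    set d := (N + 1 : ℝ) ^ θ * (r : ℝ) ^ (-θ)
    have hd : (r : ℝ) ^ (-θ) ≤ d := le_mul_of_one_le_left (by positivity) hK
    have hz1 : (r : ℝ) ^ (-θ) ≤ 1 := Real.rpow_le_one_of_one_le_of_nonpos hr1.le (by linarith)
    have hz0 : 0 < (r : ℝ) ^ (-θ) := by positivity
    have hzy : (r : ℝ) ^ (-θ) * y = (r : ℝ) ^ (1 / (Q : ℝ) - θ) := by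
      rw [hy, ← Real.rpow_add hr0]; ring_nf
    have hds : 2 * Real.log r < d * s := by
      have : (r : ℝ) ^ (-θ) * (y - 2) ≤ d * s := by
        calc _ ≤ (r : ℝ) ^ (-θ) * s := mul_le_mul_of_nonneg_left (by linarith) hz0.le
          _ ≤ _ := mul_le_mul_of_nonneg_right hd (by positivity)
      nlinarith
    have h3 : (1 - d) ^ s ≤ Real.exp (-(d * s)) := by
      have : 1 - d ≤ Real.exp (-d) := by linarith [Real.add_one_le_exp (-d)]
      refine (pow_le_pow_left₀ (by linarith) this s).trans ?_
      rw [← Real.exp_nat_mul]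
      apply le_of_eq; ring_nf
    have h4 : (r : ℝ) ^ 2 = Real.exp (2 * Real.log r) := by
      rw [mul_comm, Real.exp_mul, Real.exp_log hr0]; norm_cast
    rw [h4]
    calc _ ≤ Real.exp (-(d * s)) * Real.exp (2 * Real.log r) :=
          mul_le_mul_of_nonneg_right h3 (Real.exp_pos _).le
      _ = Real.exp (-(d * s) + 2 * Real.log r) := (Real.exp_add _ _).symm
      _ < 1 := by rw [Real.exp_lt_one_iff]; linarith

lemma crossing (Q : ℕ) (hQ : 1 ≤ Q) (θ : ℝ) (hθ : 0 < θ) (hθQ : θ < 1 / Q) (hθ1 : θ < 1) :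
    ∃ K : ℝ, 0 < K ∧ ∀ n : ℕ, 2 ≤ n → ∀ f : Fin n → Fin n → Bool,
      (∀ A : Finset (Fin n), A.card = Q + 1 →
        ∃ t ⊆ A, ∀ p, A.filter (fun S => f S p = true) ≠ t) →
      ∃ L : List (Fin n), L.length = n ∧ (∀ p, p ∈ L) ∧
        ∀ S, (ch (L.map (f S)) : ℝ) * Real.log 2 ≤ Real.log n + K * (n : ℝ) ^ (1 - θ) := by
  obtain ⟨K, hK, hd⟩ := delta Q hQ θ hθ hθQ
  have hρ : 0 < 1 - θ := by linarith
  refine ⟨3 * K / (1 - θ), by positivity, fun n hn f hVC => ?_⟩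
  obtain ⟨L, hL, hmem, hsum⟩ := exists_list f (fun r => K * (r : ℝ) ^ (-θ))
    (fun r => Real.exp (3 * K / (1 - θ) * (r : ℝ) ^ (1 - θ)))
    (Real.one_le_exp (by positivity)) (Real.one_le_exp (by positivity))
    (by
      intro r hr
      have hr0 : (0 : ℝ) < r := by exact_mod_cast hr
      have hr1 : (0 : ℝ) < (r : ℝ) + 1 := by linarith
      have hb : (r : ℝ) ^ (1 - θ) ≤ ((r : ℝ) + 1) ^ (1 - θ) - (1 - θ) * ((r : ℝ) + 1) ^ (-θ) := by
        have h := rpow_one_add_le_one_add_mul_self (s := -1 / ((r : ℝ) + 1))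
          (by rw [le_div_iff₀ hr1]; linarith) hρ.le (by linarith)
        have e : 1 + -1 / ((r : ℝ) + 1) = r / (r + 1) := by field_simp; ring
        rw [e, Real.div_rpow hr0.le hr1.le, div_le_iff₀ (by positivity)] at h
        refine h.trans (le_of_eq ?_)
        have e2 : ((r : ℝ) + 1) ^ (-θ) = ((r : ℝ) + 1) ^ (1 - θ) / (r + 1) := by
          rw [show -θ = (1 - θ) - 1 by ring, Real.rpow_sub_one hr1.ne']
        rw [e2]; ring
      have h1 : 1 + 3 * (K * ((r + 1 : ℕ) : ℝ) ^ (-θ)) ≤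
          Real.exp (3 * (K * ((r + 1 : ℕ) : ℝ) ^ (-θ))) := by
        linarith [Real.add_one_le_exp (3 * (K * ((r + 1 : ℕ) : ℝ) ^ (-θ)))]
      refine (mul_le_mul_of_nonneg_right h1 (Real.exp_pos _).le).trans ?_
      rw [← Real.exp_add]
      apply Real.exp_le_exp.2
      push_cast
      have hc : 0 < 3 * K / (1 - θ) := by positivity
      have := mul_le_mul_of_nonneg_left hb hc.le
      have e3 : 3 * K / (1 - θ) * ((1 - θ) * ((r : ℝ) + 1) ^ (-θ)) =
          3 * (K * ((r : ℝ) + 1) ^ (-θ)) := by field_simp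
      linarith [mul_sub (3 * K / (1 - θ)) (((r : ℝ) + 1) ^ (1 - θ))
        ((1 - θ) * ((r : ℝ) + 1) ^ (-θ))])
    (fun r => (Real.exp_pos _).le)
    (by
      intro P w hw hP
      by_cases h1 : 1 ≤ K * (P.card : ℝ) ^ (-θ)
      · obtain ⟨p, hp, q, hq, hpq⟩ := Finset.one_lt_card.1 hP
        refine ⟨p, hp, q, hq, hpq, ?_⟩
        have hW : 0 ≤ ∑ S, w S := Finset.sum_nonneg fun S _ => hw S
        refine le_trans ?_ (le_mul_of_one_le_left hW h1)
        refine Finset.sum_le_sum fun S _ => ?_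
        split_ifs
        · exact hw S
        · exact le_rfl
      · obtain ⟨s, hs, hs'⟩ := (hd P.card hP).resolve_left h1
        exact exists_pair f Q hVC P w hw _ (not_le.1 h1).le s hs hs')
    n Finset.univ (fun _ => 1) (fun _ => zero_le_one) (by simp)
  refine ⟨L, hL, fun p => (hmem p).1 (Finset.mem_univ _), fun S => ?_⟩
  have hn0 : (0 : ℝ) < n := by positivity
  have h1 : (2 : ℝ) ^ ch (L.map (f S)) ≤ Real.exp (3 * K / (1 - θ) * (n : ℝ) ^ (1 - θ)) * n := by
    have := Finset.single_le_sum (f := fun S => (1 : ℝ) * 2 ^ ch (L.map (f S)))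
      (fun _ _ => by positivity) (Finset.mem_univ S)
    simp only [Finset.sum_const, Finset.card_univ, Fintype.card_fin, nsmul_eq_mul, mul_one] at hsum
    simp only [one_mul] at this hsum
    exact this.trans hsum
  have h2 := Real.log_le_log (by positivity) h1
  rw [Real.log_pow, Real.log_mul (Real.exp_pos _).ne' hn0.ne', Real.log_exp] at h2
  linarith

end BFI

theorem bilinear_form_implicit_representation (Q : ℕ) (hQ : 1 ≤ Q)
    (M : Matrix (Fin Q) (Fin Q) ℝ) (hM : M.IsSymm) :
    ∃ C : ℝ, 0 < C ∧ ∀ n : ℕ, 2 ≤ n →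
      ∃ m : ℕ, (m : ℝ) ≤ C * (n : ℝ) ^ (Real.logb 2 ((2 : ℝ) ^ Q - 1) / Q) ∧
        ∃ G : (Fin m → Bool) → (Fin m → Bool) → Bool,
          (∀ a b, G a b = G b a) ∧
          ∀ x : Fin n → (Fin Q → ℝ),
            ∃ F : Fin n → (Fin m → Bool),
              ∀ i j : Fin n, i ≠ j →
                (G (F i) (F j) = true ↔ 0 ≤ x i ⬝ᵥ M.mulVec (x j)) := by
  classical
  rcases Nat.eq_or_lt_of_le hQ with rfl | hQ2
  · refine ⟨2, by norm_num, fun n hn => ⟨2, ?_, ?_⟩⟩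
    · norm_num
    let sg : (Fin 2 → Bool) → ℝ := fun a => if a 0 then (if a 1 then 0 else 1) else -1
    refine ⟨fun a b => decide (0 ≤ M 0 0 * (sg a * sg b)), ?_, ?_⟩
    · intro a b
      simp only [mul_comm (sg a)]
    · intro x
      refine ⟨fun i => ![decide (0 ≤ x i 0), decide (x i 0 ≤ 0)], fun i j _ => ?_⟩
      rw [decide_eq_true_iff]
      have hsg : ∀ i, ∃ c : ℝ, 0 < c ∧
          x i 0 = c * sg ![decide (0 ≤ x i 0), decide (x i 0 ≤ 0)] := by
        intro i
        rcases lt_trichotomy (x i 0) 0 with h | h | h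
        · exact ⟨-(x i 0), by linarith, by simp [sg, h]⟩
        · exact ⟨1, by norm_num, by simp [sg, h]⟩
        · exact ⟨x i 0, h, by simp [sg, h, h.le]⟩
      obtain ⟨c, hc, h1⟩ := hsg i
      obtain ⟨d, hd, h2⟩ := hsg j
      have : x i ⬝ᵥ M.mulVec (x j) = (c * d) *
          (M 0 0 * (sg ![decide (0 ≤ x i 0), decide (x i 0 ≤ 0)] *
            sg ![decide (0 ≤ x j 0), decide (x j 0 ≤ 0)])) := by
        simp only [dotProduct, mulVec, Finset.univ_unique, Fin.default_eq_zero,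
          Finset.sum_singleton, Fin.isValue]
        conv_lhs => rw [h1, h2]
        ring
      rw [this]
      exact (mul_nonneg_iff_of_pos_left (mul_pos hc hd)).symm
  set α : ℝ := Real.logb 2 ((2 : ℝ) ^ Q - 1) / Q with hα
  have hQ0 : (0 : ℝ) < Q := by positivity
  have h4 : (4 : ℝ) ≤ 2 ^ Q := by
    calc (4 : ℝ) = 2 ^ 2 := by norm_num
      _ ≤ _ := pow_le_pow_right₀ (by norm_num) hQ2
  have hα1 : α < 1 := by
    rw [hα, div_lt_one hQ0, Real.logb_lt_iff_lt_rpow (by norm_num) (by linarith), Real.rpow_natCast]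
    linarith
  have hα2 : 1 - 1 / (Q : ℝ) < α := by
    rw [hα, lt_div_iff₀ hQ0, Real.lt_logb_iff_rpow_lt (by norm_num) (by linarith)]
    have : (1 - 1 / (Q : ℝ)) * Q = Q - 1 := by field_simp
    rw [this, Real.rpow_sub_one (by norm_num), Real.rpow_natCast]
    linarith
  obtain ⟨θ, hθ1, hθ2⟩ := exists_between (show 1 - α < 1 / (Q : ℝ) by linarith)
  have hQ1 : 1 / (Q : ℝ) < 1 := by
    rw [div_lt_one hQ0]; exact_mod_cast hQ2
  have hθ0 : 0 < θ := by linarith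
  obtain ⟨K, hK, hcross⟩ := BFI.crossing Q hQ θ hθ0 hθ2 (by linarith)
  have hρ : 0 < 1 - θ := by linarith
  set ε := α - (1 - θ) with hε
  have hε0 : 0 < ε := by linarith
  have hl2 : 0 < Real.log 2 := Real.log_pos (by norm_num)
  set K1 : ℝ := (1 / (1 - θ) + K) / Real.log 2 + 1 with hK1
  set K2 : ℝ := 1 / ε / Real.log 2 + 1 with hK2
  have hK1p : 0 < K1 := by positivity
  have hK2p : 0 < K2 := by positivity
  refine ⟨K2 * K1 + 1, by positivity, fun n hn => ?_⟩
  have hn0 : (0 : ℝ) < n := by positivity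
  have hn1 : (1 : ℝ) ≤ n := by exact_mod_cast (by omega : 1 ≤ n)
  set c := ⌊(Real.log n + K * (n : ℝ) ^ (1 - θ)) / Real.log 2⌋₊ with hc
  refine ⟨(Nat.log 2 n + 1) * (c + 1) + 1, ?_, ?_⟩
  · have hlog0 : 0 ≤ Real.log n := Real.log_nonneg hn1
    have hp1 : 1 ≤ (n : ℝ) ^ (1 - θ) := Real.one_le_rpow hn1 hρ.le
    have hp2 : 1 ≤ (n : ℝ) ^ ε := Real.one_le_rpow hn1 hε0.le
    have hp3 : 1 ≤ (n : ℝ) ^ α := Real.one_le_rpow hn1 (by linarith)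
    have hc1 : (c : ℝ) + 1 ≤ K1 * (n : ℝ) ^ (1 - θ) := by
      have h1 : (c : ℝ) ≤ (Real.log n + K * (n : ℝ) ^ (1 - θ)) / Real.log 2 :=
        Nat.floor_le (by positivity)
      have h2 := Real.log_le_rpow_div hn0.le hρ
      have h3 : (Real.log n + K * (n : ℝ) ^ (1 - θ)) / Real.log 2 ≤
          ((n : ℝ) ^ (1 - θ) / (1 - θ) + K * (n : ℝ) ^ (1 - θ)) / Real.log 2 := by gcongr
      have h4 : ((n : ℝ) ^ (1 - θ) / (1 - θ) + K * (n : ℝ) ^ (1 - θ)) / Real.log 2 =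
        (1 / (1 - θ) + K) / Real.log 2 * (n : ℝ) ^ (1 - θ) := by ring
      rw [hK1, add_mul]
      linarith
    have hl1 : (Nat.log 2 n : ℝ) + 1 ≤ K2 * (n : ℝ) ^ ε := by
      have h1 : (Nat.log 2 n : ℝ) ≤ Real.log n / Real.log 2 := by
        have := Real.natLog_le_logb n 2
        simpa [Real.logb] using this
      have h2 := Real.log_le_rpow_div hn0.le hε0
      have h3 : Real.log n / Real.log 2 ≤ ((n : ℝ) ^ ε / ε) / Real.log 2 := by gcongr
      have h4 : ((n : ℝ) ^ ε / ε) / Real.log 2 = 1 / ε / Real.log 2 * (n : ℝ) ^ ε := by ring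
      rw [hK2, add_mul]
      linarith
    push_cast
    have hmul : ((Nat.log 2 n : ℝ) + 1) * ((c : ℝ) + 1) ≤ K2 * K1 * (n : ℝ) ^ α := by
      calc _ ≤ (K2 * (n : ℝ) ^ ε) * (K1 * (n : ℝ) ^ (1 - θ)) :=
            mul_le_mul hl1 hc1 (by positivity) (by positivity)
        _ = K2 * K1 * ((n : ℝ) ^ ε * (n : ℝ) ^ (1 - θ)) := by ring
        _ = _ := by rw [← Real.rpow_add hn0, hε]; ring_nf
    rw [add_mul]
    linarith
  · have hm : n * (2 * (n + 1) ^ c) ≤ 2 ^ ((Nat.log 2 n + 1) * (c + 1) + 1) := by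
      have hlt : n + 1 ≤ 2 ^ (Nat.log 2 n + 1) := Nat.lt_pow_succ_log_self (by norm_num) n
      calc n * (2 * (n + 1) ^ c) ≤ (n + 1) * (2 * (n + 1) ^ c) := by gcongr; omega
        _ = (n + 1) ^ (c + 1) * 2 := by ring
        _ ≤ (2 ^ (Nat.log 2 n + 1)) ^ (c + 1) * 2 := by gcongr
        _ = _ := by rw [← pow_mul, ← pow_succ]
    obtain ⟨G, hG, h⟩ := BFI.core n c _ hm
    refine ⟨G, hG, fun x => ?_⟩
    have hsymm : ∀ i j, x i ⬝ᵥ M.mulVec (x j) = x j ⬝ᵥ M.mulVec (x i) := by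
      intro i j
      rw [dotProduct_mulVec, ← mulVec_transpose, hM.eq, dotProduct_comm]
    let f : Fin n → Fin n → Bool := fun S p => decide (0 ≤ x p ⬝ᵥ M.mulVec (x S))
    obtain ⟨L, hL, hmem, hch⟩ := hcross n hn f
      (fun A hA => BFI.vc Q n x (fun S => M.mulVec (x S)) f (fun S p => by simp [f]) A hA)
    obtain ⟨F, hF⟩ := h f (fun i j => by simp only [f]; rw [hsymm])
      ⟨L, hL, hmem, fun S => Nat.le_floor (by rw [le_div_iff₀ hl2]; exact hch S)⟩
    refine ⟨F, fun i j _ => ?_⟩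
    rw [hF, hsymm]
    simp [f]
end

section
/- There exists a constant C > 0 such that for every n ≥ 2 there is a natural number m ≤ C·n^{log₂(15)/4} and a symmetric function G : {0,1}^m × {0,1}^m → {0,1} with the property: for every tuple of points p_1, …, p_n ∈ ℝ² there exists F : {1,…,n} → {0,1}^m such that for all i ≠ j, G(F(i), F(j)) = 1 if and only if the Euclidean distance from p_i to p_j is at most 2. (Note log₂(15)/4 ≈ 0.976723 < 1.) -/
theorem udg_vc {n : ℕ} (p : Fin n → EuclideanSpace ℝ (Fin 2)) (U : Finset (Fin n))
    (hU : ∀ V ⊆ U, ∃ x, ∀ r ∈ U, (dist (p r) (p x) ≤ 2 ↔ r ∈ V)) : U.card ≤ 4 := by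
  classical
  by_contra hc
  push Not at hc
  let f : (U → ℝ) →ₗ[ℝ] (Fin 4 → ℝ) :=
    { toFun := fun l => ![∑ r, l r, ∑ r, l r * p r 0, ∑ r, l r * p r 1,
        ∑ r, l r * ((p r 0)^2 + (p r 1)^2)]
      map_add' := by
        intro a b
        ext i
        fin_cases i <;> simp [add_mul, Finset.sum_add_distrib]
      map_smul' := by
        intro c a
        ext i
        fin_cases i <;> simp [Finset.mul_sum, mul_assoc] }
  have hker : LinearMap.ker f ≠ ⊥ := f.ker_ne_bot_of_finrank_lt (by simpa using hc)
  obtain ⟨l, hl, hl0⟩ := (Submodule.ne_bot_iff _).1 hker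
  rw [LinearMap.mem_ker] at hl
  have h0 : ∑ r, l r = 0 := by simpa [f] using congrFun hl 0
  have h1 : ∑ r, l r * p r 0 = 0 := by simpa [f] using congrFun hl 1
  have h2 : ∑ r, l r * p r 1 = 0 := by simpa [f] using congrFun hl 2
  have h3 : ∑ r, l r * ((p r 0)^2 + (p r 1)^2) = 0 := by simpa [f] using congrFun hl 3
  obtain ⟨x, hx⟩ := hU (U.filter (fun r => ∃ h : r ∈ U, 0 < l ⟨r, h⟩)) (Finset.filter_subset _ _)
  have key : ∑ r : U, l r * (4 - ((p r 0 - p x 0)^2 + (p r 1 - p x 1)^2)) = 0 := by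
    have : ∀ r : U, l r * (4 - ((p r 0 - p x 0)^2 + (p r 1 - p x 1)^2)) =
        l r * (4 - (p x 0)^2 - (p x 1)^2) + (l r * p r 0) * (2 * p x 0) + (l r * p r 1) * (2 * p x 1)
          - l r * ((p r 0)^2 + (p r 1)^2) := by intro r; ring
    simp_rw [this]
    rw [Finset.sum_sub_distrib, Finset.sum_add_distrib, Finset.sum_add_distrib, ← Finset.sum_mul,
      ← Finset.sum_mul, ← Finset.sum_mul, h0, h1, h2, h3]
    ring
  have hd : ∀ r : U, (0 ≤ 4 - ((p r 0 - p x 0)^2 + (p r 1 - p x 1)^2) ↔ 0 < l r) := by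
    intro r
    have := hx r r.2
    rw [EuclideanSpace.dist_eq, Real.sqrt_le_left (by norm_num)] at this
    simp only [Fin.sum_univ_two, Real.dist_eq, sq_abs, Finset.mem_filter] at this
    rw [← sub_nonneg] at this
    constructor
    · intro h
      obtain ⟨_, _, h'⟩ := this.1 (by linarith)
      exact h'
    · intro h
      have := this.2 ⟨r.2, r.2, h⟩
      linarith
  have hnn : ∀ r : U, 0 ≤ l r * (4 - ((p r 0 - p x 0)^2 + (p r 1 - p x 1)^2)) := by
    intro r
    by_cases h : 0 < l r
    · exact mul_nonneg h.le ((hd r).2 h)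
    · have := mt (hd r).1 h
      exact mul_nonneg_of_nonpos_of_nonpos (not_lt.1 h) (not_le.1 this).le
  have hz := (Finset.sum_eq_zero_iff_of_nonneg (fun r _ => hnn r)).1 key
  have hl1 : ∀ r : U, 0 ≤ l r := by
    intro r
    by_contra h
    push Not at h
    have h4 := mt (hd r).1 (not_lt.2 h.le)
    rcases mul_eq_zero.1 (hz r (Finset.mem_univ _)) with h5 | h5
    · linarith
    · linarith
  have := (Finset.sum_eq_zero_iff_of_nonneg (fun r _ => hl1 r)).1 h0
  exact hl0 (funext fun r => this r (Finset.mem_univ _))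

theorem traces {α : Type*} [DecidableEq α] (B : α → α → Bool)
    (hB : ∀ U : Finset α, (∀ V ⊆ U, ∃ x, ∀ r ∈ U, (B r x = true ↔ r ∈ V)) → U.card ≤ 4)
    (S T : Finset α) (h : ∀ x ∈ S, ∀ y ∈ S, x ≠ y → ∃ r ∈ T, B r x ≠ B r y) :
    S.card ≤ (T.card + 1) ^ 4 := by
  let g : α → Finset α := fun x => T.filter (fun r => B r x = true)
  have hinj : Set.InjOn g S := by
    intro x hx y hy hxy
    by_contra hne
    obtain ⟨r, hr, hr'⟩ := h x hx y hy hne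
    have := congrArg (fun s => r ∈ s) hxy
    simp only [g, Finset.mem_filter, hr, true_and, eq_iff_iff] at this
    exact hr' (Bool.eq_iff_iff.2 this)
  rw [← Finset.card_image_of_injOn hinj]
  refine (Finset.card_le_card_shatterer _).trans ?_
  have hsub : (S.image g).shatterer ⊆ (Finset.range 5).biUnion (fun k => T.powersetCard k) := by
    intro U hU
    rw [Finset.mem_shatterer] at hU
    have hUT : U ⊆ T := by
      obtain ⟨t, ht, hUt⟩ := hU.exists_superset
      obtain ⟨x, _, rfl⟩ := Finset.mem_image.1 ht
      exact hUt.trans (Finset.filter_subset _ _)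
    have hc : U.card ≤ 4 := by
      apply hB
      intro V hV
      obtain ⟨t, ht, hUt⟩ := hU hV
      obtain ⟨x, _, rfl⟩ := Finset.mem_image.1 ht
      refine ⟨x, fun r hr => ?_⟩
      rw [← hUt]
      simp [g, hr, hUT hr]
    simp only [Finset.mem_biUnion, Finset.mem_range, Finset.mem_powersetCard]
    exact ⟨U.card, by omega, hUT, rfl⟩
  refine (Finset.card_le_card hsub).trans (Finset.card_biUnion_le.trans ?_)
  simp only [Finset.card_powersetCard]
  calc ∑ k ∈ Finset.range 5, T.card.choose k ≤ ∑ k ∈ Finset.range 5, T.card ^ k :=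
        Finset.sum_le_sum (fun k _ => Nat.choose_le_pow _ _)
    _ ≤ _ := by
      simp only [Finset.sum_range_succ, Finset.sum_range_zero]
      ring_nf
      nlinarith [Nat.zero_le T.card]

theorem greedy {α : Type*} [DecidableEq α] [Fintype α] (B : α → α → Bool) (w : α → ℝ)
    (hw : ∀ r, 0 < w r) (S : Finset α) (δ : ℝ) (hδ1 : δ ≤ 1)
    (h : ∀ x ∈ S, ∀ y ∈ S, x ≠ y → δ * ∑ r, w r ≤ ∑ r, if B r x ≠ B r y then w r else 0)
    (hne : Nonempty α) (s : ℕ) :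
    ∃ T : Finset α, T.card ≤ s ∧
      ((S.offDiag.filter (fun q => ∀ r ∈ T, B r q.1 = B r q.2)).card : ℝ) ≤
        (1 - δ) ^ s * (S.card : ℝ) ^ 2 := by
  induction s with
  | zero =>
    refine ⟨∅, by simp, ?_⟩
    simp only [Finset.notMem_empty, false_imp_iff, implies_true, Finset.filter_true, pow_zero, one_mul]
    rw [Finset.offDiag_card]
    have : S.card * S.card - S.card ≤ S.card ^ 2 := by rw [sq]; omega
    exact_mod_cast this
  | succ s ih =>
    obtain ⟨T, hT, hU⟩ := ih
    set U := S.offDiag.filter (fun q => ∀ r ∈ T, B r q.1 = B r q.2) with hUdef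
    have hsum : ∑ r, w r * (δ * (U.card : ℝ)) ≤
        ∑ r, w r * ((U.filter (fun q => B r q.1 ≠ B r q.2)).card : ℝ) := by
      have e1 : ∀ r, w r * ((U.filter (fun q => B r q.1 ≠ B r q.2)).card : ℝ) =
          ∑ q ∈ U, if B r q.1 ≠ B r q.2 then w r else 0 := by
        intro r
        rw [← Finset.sum_filter, Finset.sum_const, nsmul_eq_mul, mul_comm]
      simp_rw [e1]
      rw [Finset.sum_comm, ← Finset.sum_mul]
      have : ∑ q ∈ U, δ * ∑ r, w r ≤ ∑ q ∈ U, ∑ r, if B r q.1 ≠ B r q.2 then w r else 0 := by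
        apply Finset.sum_le_sum
        intro q hq
        have := (Finset.mem_filter.1 hq).1
        rw [Finset.mem_offDiag] at this
        exact h _ this.1 _ this.2.1 this.2.2
      rw [Finset.sum_const, nsmul_eq_mul] at this
      linarith
    obtain ⟨r, _, hr⟩ := Finset.exists_le_of_sum_le Finset.univ_nonempty hsum
    have hr' := le_of_mul_le_mul_left hr (hw r)
    refine ⟨insert r T, (Finset.card_insert_le _ _).trans (by omega), ?_⟩
    have hsplit : S.offDiag.filter (fun q => ∀ r' ∈ insert r T, B r' q.1 = B r' q.2) =
        U.filter (fun q => ¬ (B r q.1 ≠ B r q.2)) := by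
      ext q
      simp only [hUdef, Finset.mem_filter, Finset.forall_mem_insert, not_not]
      tauto
    rw [hsplit]
    have hc := Finset.card_filter_add_card_filter_not (s := U) (fun q => B r q.1 ≠ B r q.2)
    have hc' : ((U.filter (fun q => B r q.1 ≠ B r q.2)).card : ℝ) +
      ((U.filter (fun q => ¬ (B r q.1 ≠ B r q.2))).card : ℝ) = U.card := by exact_mod_cast hc
    have h3 : (1 - δ) * (U.card : ℝ) ≤ (1 - δ) * ((1 - δ) ^ s * (S.card : ℝ) ^ 2) :=
      mul_le_mul_of_nonneg_left hU (by linarith)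
    rw [pow_succ]
    linarith

theorem good_pair {α : Type*} [DecidableEq α] [Fintype α] (B : α → α → Bool)
    (hB : ∀ U : Finset α, (∀ V ⊆ U, ∃ x, ∀ r ∈ U, (B r x = true ↔ r ∈ V)) → U.card ≤ 4)
    (w : α → ℝ) (hw : ∀ r, 0 < w r) (S : Finset α) (hS : 2 ≤ S.card) :
    ∃ x ∈ S, ∃ y ∈ S, x ≠ y ∧ (∑ r, if B r x ≠ B r y then w r else 0) ≤
      32 * (S.card : ℝ) ^ (-(1/8) : ℝ) * ∑ r, w r := by
  set m : ℝ := (S.card : ℝ) with hm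
  have hm2 : 2 ≤ m := by rw [hm]; exact_mod_cast hS
  set t : ℝ := m ^ (1/8 : ℝ) with ht
  have ht0 : 0 < t := by positivity
  have htinv : m ^ (-(1/8) : ℝ) = t⁻¹ := by rw [Real.rpow_neg (by linarith)]
  have ht8 : t ^ 8 = m := by
    rw [ht, ← Real.rpow_natCast, ← Real.rpow_mul (by linarith)]; norm_num
  rw [htinv]
  by_contra hcon
  push Not at hcon
  have hne : Nonempty α := by
    obtain ⟨x, _⟩ := Finset.card_pos.1 (by omega : 0 < S.card)
    exact ⟨x⟩
  have hle : ∀ x y, (∑ r, if B r x ≠ B r y then w r else 0) ≤ ∑ r, w r := by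
    intro x y
    apply Finset.sum_le_sum
    intro r _
    split_ifs
    · exact le_rfl
    · exact (hw r).le
  have hW : 0 < ∑ r, w r := Finset.sum_pos (fun r _ => hw r) Finset.univ_nonempty
  have hδ : 32 * t⁻¹ < 1 := by
    obtain ⟨x, hx, y, hy, hxy⟩ := Finset.one_lt_card.1 (by omega : 1 < S.card)
    have := (hcon x hx y hy hxy).trans_le (hle x y)
    by_contra h
    push Not at h
    nlinarith
  have ht32 : 32 < t := by
    rw [← div_eq_mul_inv, div_lt_one ht0] at hδ
    exact hδ
  obtain ⟨T, hT, hU⟩ := greedy B w hw S (32 * t⁻¹) hδ.le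
    (fun x hx y hy hxy => (hcon x hx y hy hxy).le) hne (⌈t^2⌉₊ - 2)
  set s := ⌈t^2⌉₊ - 2 with hs
  have hceil := Nat.le_ceil (t^2)
  have hceil2 := Nat.ceil_lt_add_one (a := t^2) (by positivity)
  have h2 : 2 ≤ ⌈t^2⌉₊ := by
    have : (2:ℝ) ≤ ⌈t^2⌉₊ := by nlinarith
    exact_mod_cast this
  have hsr : (s : ℝ) = (⌈t^2⌉₊ : ℝ) - 2 := by
    rw [hs, Nat.cast_sub h2]; norm_num
  have hlt1 : (1 - 32 * t⁻¹) ^ s * m ^ 2 < 1 := by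
    have a1 : (1 - 32 * t⁻¹) ≤ Real.exp (-(32 * t⁻¹)) := Real.one_sub_le_exp_neg _
    have a2 : (1 - 32 * t⁻¹) ^ s ≤ Real.exp (-(32 * t⁻¹) * s) := by
      rw [mul_comm _ (s : ℝ), Real.exp_nat_mul]
      exact pow_le_pow_left₀ (by linarith) a1 s
    have a3 : m ^ 2 = Real.exp (16 * Real.log t) := by
      rw [← ht8, ← pow_mul]
      rw [show (16 : ℝ) = ((16:ℕ):ℝ) by norm_num, Real.exp_nat_mul, Real.exp_log ht0]
    calc (1 - 32 * t⁻¹) ^ s * m ^ 2 ≤ Real.exp (-(32 * t⁻¹) * s) * m ^ 2 := by gcongr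
      _ = Real.exp (-(32 * t⁻¹) * s + 16 * Real.log t) := by rw [a3, Real.exp_add]
      _ < 1 := by
        rw [Real.exp_lt_one_iff]
        have b1 := Real.log_le_sub_one_of_pos ht0
        have b2 : 16 * t ≤ 32 * t⁻¹ * s := by
          have : t^2/2 ≤ s := by nlinarith
          calc 16 * t = 32 * t⁻¹ * (t^2/2) := by field_simp; ring
            _ ≤ _ := by gcongr
        linarith
  have hz : (S.offDiag.filter (fun q => ∀ r ∈ T, B r q.1 = B r q.2)).card = 0 := by
    have := hU.trans_lt hlt1
    have : (S.offDiag.filter (fun q => ∀ r ∈ T, B r q.1 = B r q.2)).card < 1 := by exact_mod_cast this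
    omega
  rw [Finset.card_eq_zero, Finset.filter_eq_empty_iff] at hz
  have htr := traces B hB S T (by
    intro x hx y hy hxy
    have := @hz (x, y) (Finset.mem_offDiag.2 ⟨hx, hy, hxy⟩)
    push Not at this
    exact this)
  have h5 : m ≤ ((T.card : ℝ) + 1) ^ 4 := by rw [hm]; exact_mod_cast htr
  have h6 : (T.card : ℝ) ≤ s := by exact_mod_cast hT
  have h7 : (T.card : ℝ) + 1 < t^2 := by linarith
  have h8 : ((T.card : ℝ) + 1)^4 < (t^2)^4 := pow_lt_pow_left₀ h7 (by positivity) (by norm_num)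
  rw [← pow_mul] at h8
  norm_num at h8
  linarith

def altCount : Bool → List Bool → ℕ
  | _, [] => 0
  | a, b :: l => (if a ≠ b then 1 else 0) + altCount b l

theorem altCount_insert (y x : Bool) (l₂ l₁ : List Bool) : ∀ a : Bool,
    altCount a (l₁ ++ y :: x :: l₂) ≤
      altCount a (l₁ ++ y :: l₂) + 2 * (if x ≠ y then 1 else 0) := by
  induction l₁ with
  | nil =>
    intro a
    cases l₂ with
    | nil => cases a <;> cases x <;> cases y <;> simp [altCount]
    | cons b l => cases a <;> cases x <;> cases y <;> cases b <;> simp [altCount] <;> omega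
  | cons b l ih =>
    intro a
    have := ih b
    simp only [List.cons_append, altCount]
    omega

theorem altCount_code (l : List Bool) : ∀ a : Bool, ∃ c : List ℕ, c.length = altCount a l ∧
    (∀ t ∈ c, t < l.length) ∧
    ∀ (i : ℕ) (hi : i < l.length), l[i] = (a ^^ decide (Odd (c.countP (fun t => decide (t ≤ i))))) := by
  induction l with
  | nil => intro a; exact ⟨[], by simp [altCount]⟩
  | cons b l ih =>
    intro a
    obtain ⟨c, hc, hlt, hi⟩ := ih b
    have e0 : (c.map Nat.succ).countP (fun t => decide (t ≤ 0)) = 0 := by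
      simp [List.countP_eq_zero]
    have e1 : ∀ i, (c.map Nat.succ).countP (fun t => decide (t ≤ i + 1)) =
        c.countP (fun t => decide (t ≤ i)) := by
      intro i
      rw [List.countP_map]
      congr 1
      ext t
      simp
    by_cases hab : a = b
    · subst hab
      refine ⟨c.map Nat.succ, by simp [altCount, hc], ?_, ?_⟩
      · intro t ht
        obtain ⟨u, hu, rfl⟩ := List.mem_map.1 ht
        have := hlt u hu
        simp; omega
      · intro i h
        cases i with
        | zero => rw [e0]; simp
        | succ i => rw [e1]; simpa using hi i (by simpa using h)
    · refine ⟨0 :: c.map Nat.succ, by simp [altCount, hc, hab]; omega, ?_, ?_⟩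
      · intro t ht
        rcases List.mem_cons.1 ht with rfl | ht
        · simp
        obtain ⟨u, hu, rfl⟩ := List.mem_map.1 ht
        have := hlt u hu
        simp; omega
      · intro i h
        have hb : b = !a := by cases a <;> cases b <;> simp_all
        cases i with
        | zero => rw [List.countP_cons, e0]; simp [hb]
        | succ i =>
          rw [List.countP_cons, e1]
          have := hi i (by simpa using h)
          simp only [List.getElem_cons_succ, this, hb, Nat.zero_le, decide_true, if_true,
            Nat.odd_add_one]
          cases a <;> simp [← Nat.not_even_iff_odd]

theorem step_bound (m : ℕ) (hm : 1 ≤ m) :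
    40 * (m : ℝ) ^ (7/8 : ℝ) + 32 * ((m + 1 : ℕ) : ℝ) ^ (-(1/8) : ℝ) ≤
      40 * ((m + 1 : ℕ) : ℝ) ^ (7/8 : ℝ) := by
  set x : ℝ := ((m + 1 : ℕ) : ℝ) with hx
  have hx2 : 2 ≤ x := by rw [hx]; exact_mod_cast (by omega : 2 ≤ m + 1)
  have hmx : (m : ℝ) = x * (1 + (-(1/x))) := by
    rw [hx]; push_cast; field_simp; ring
  have h1x : 1 / x ≤ 1 := by rw [div_le_one (by linarith)]; linarith
  have hb := rpow_one_add_le_one_add_mul_self (s := -(1/x)) (by linarith) (p := 7/8)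
    (by norm_num) (by norm_num)
  rw [hmx, Real.mul_rpow (by linarith) (by linarith)]
  have e : x ^ (7/8 : ℝ) = x * x ^ (-(1/8) : ℝ) := by
    nth_rewrite 2 [← Real.rpow_one x]
    rw [← Real.rpow_add (by linarith)]; norm_num
  have hp : 0 < x ^ (-(1/8) : ℝ) := by positivity
  have h2 : x ^ (7/8 : ℝ) * (1 + -(1/x)) ^ (7/8 : ℝ) ≤ x ^ (7/8 : ℝ) * (1 + 7/8 * -(1/x)) := by
    gcongr
  have h3 : x ^ (7/8 : ℝ) * (1 + 7/8 * -(1/x)) = x ^ (7/8 : ℝ) - 7/8 * x ^ (-(1/8) : ℝ) := by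
    rw [e]; field_simp; ring
  linarith

theorem low_crossing {α : Type*} [DecidableEq α] [Fintype α] (B : α → α → Bool)
    (hB : ∀ U : Finset α, (∀ V ⊆ U, ∃ x, ∀ r ∈ U, (B r x = true ↔ r ∈ V)) → U.card ≤ 4)
    (m : ℕ) (hm : 1 ≤ m) : ∀ (S : Finset α), S.card = m → ∀ w : α → ℝ, (∀ r, 0 < w r) →
    ∃ L : List α, L.Nodup ∧ (∀ x, x ∈ L ↔ x ∈ S) ∧ ∃ κ : α → ℕ,
      (∀ r, altCount false (L.map (B r)) ≤ 1 + 2 * κ r) ∧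
      ∑ r, w r * 2 ^ κ r ≤ (∑ r, w r) * Real.exp (40 * (m : ℝ) ^ (7/8 : ℝ)) := by
  induction m, hm using Nat.le_induction with
  | base =>
    intro S hS w hw
    obtain ⟨x, rfl⟩ := Finset.card_eq_one.1 hS
    refine ⟨[x], by simp, by simp, fun _ => 0, ?_, ?_⟩
    · intro r
      simp only [List.map_cons, List.map_nil, altCount]
      split_ifs <;> simp
    · simp only [pow_zero, mul_one]
      have hW : 0 ≤ ∑ r, w r := Finset.sum_nonneg (fun r _ => (hw r).le)
      have : 1 ≤ Real.exp (40 * ((1 : ℕ) : ℝ) ^ (7/8 : ℝ)) := Real.one_le_exp (by positivity)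
      nlinarith
  | succ m hm ih =>
    intro S hS w hw
    obtain ⟨x, hx, y, hy, hxy, hsep⟩ := good_pair B hB w hw S (by omega)
    rw [hS] at hsep
    obtain ⟨L, hL, hLS, κ, hκ, hsum⟩ := ih (S.erase x) (by rw [Finset.card_erase_of_mem hx]; omega)
      (fun r => w r * (if B r x ≠ B r y then 2 else 1))
      (fun r => mul_pos (hw r) (by split_ifs <;> norm_num))
    have hyL : y ∈ L := (hLS y).2 (Finset.mem_erase.2 ⟨hxy.symm, hy⟩)
    have hxL : x ∉ L := fun h => by simpa using (hLS x).1 h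
    obtain ⟨l₁, l₂, rfl⟩ := List.append_of_mem hyL
    have hperm : (l₁ ++ y :: x :: l₂).Perm (x :: (l₁ ++ y :: l₂)) := by
      have h1 : (l₁ ++ y :: x :: l₂).Perm (l₁ ++ x :: y :: l₂) := List.Perm.append_left _ (List.Perm.swap _ _ _)
      exact h1.trans List.perm_middle
    refine ⟨l₁ ++ y :: x :: l₂, ?_, ?_, fun r => κ r + (if B r x ≠ B r y then 1 else 0), ?_, ?_⟩
    · rw [hperm.nodup_iff]
      exact List.nodup_cons.2 ⟨hxL, hL⟩
    · intro z
      rw [hperm.mem_iff, List.mem_cons, hLS, Finset.mem_erase]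
      by_cases hz : z = x
      · subst hz; simp [hx]
      · simp [hz]
    · intro r
      have h1 := altCount_insert (B r y) (B r x) (l₂.map (B r)) (l₁.map (B r)) false
      have h2 := hκ r
      simp only [List.map_append, List.map_cons] at h2 ⊢
      omega
    · have e : ∀ r, w r * 2 ^ (κ r + (if B r x ≠ B r y then 1 else 0)) =
          (w r * (if B r x ≠ B r y then 2 else 1)) * 2 ^ κ r := by
        intro r
        split_ifs
        · rw [pow_succ]; ring
        · ring
      simp_rw [e]
      refine hsum.trans ?_
      have e2 : ∑ r, w r * (if B r x ≠ B r y then (2:ℝ) else 1) =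
          ∑ r, w r + ∑ r, if B r x ≠ B r y then w r else 0 := by
        rw [← Finset.sum_add_distrib]
        apply Finset.sum_congr rfl
        intro r _
        split_ifs <;> ring
      rw [e2]
      have hW : 0 ≤ ∑ r, w r := Finset.sum_nonneg (fun r _ => (hw r).le)
      set d := 32 * ((m + 1 : ℕ) : ℝ) ^ (-(1/8) : ℝ)
      have h3 : ∑ r, w r + (∑ r, if B r x ≠ B r y then w r else 0) ≤ (∑ r, w r) * Real.exp d := by
        have := Real.add_one_le_exp d
        nlinarith
      calc _ ≤ (∑ r, w r) * Real.exp d * Real.exp (40 * (m : ℝ) ^ (7/8 : ℝ)) := by gcongr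
        _ = (∑ r, w r) * Real.exp (40 * (m : ℝ) ^ (7/8 : ℝ) + d) := by
          rw [mul_assoc, ← Real.exp_add, add_comm]
        _ ≤ _ := by
          gcongr
          exact step_bound m hm

def decodeRow {n K : ℕ} (a b : Fin n × List.Vector (Fin (n + 1)) K) : Bool :=
  decide (Odd (a.2.toList.countP (fun t : Fin (n + 1) => decide ((t : ℕ) ≤ (b.1 : ℕ)))))

theorem labels_exist {n K : ℕ} (hn : 2 ≤ n) (B : Fin n → Fin n → Bool)
    (hB : ∀ U : Finset (Fin n), (∀ V ⊆ U, ∃ x, ∀ r ∈ U, (B r x = true ↔ r ∈ V)) → U.card ≤ 4)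
    (hK : 170 * (n : ℝ) ^ (7/8 : ℝ) ≤ K) :
    ∃ f : Fin n → Fin n × List.Vector (Fin (n + 1)) K, ∀ i j, decodeRow (f i) (f j) = B i j := by
  obtain ⟨L, hL, hLS, κ, hκ, hsum⟩ := low_crossing B hB n (by omega) Finset.univ (by simp)
    (fun _ => 1) (by simp)
  have hlen : L.length = n := by
    have h1 : L.toFinset = Finset.univ := by ext x; simp [hLS]
    have h2 := List.toFinset_card_of_nodup hL
    rw [h1] at h2
    simpa using h2.symm
  have hn1 : (1 : ℝ) ≤ n := by exact_mod_cast (by omega : 1 ≤ n)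
  have hP : 1 ≤ (n : ℝ) ^ (7/8 : ℝ) := Real.one_le_rpow hn1 (by norm_num)
  have hκK : ∀ r, altCount false (L.map (B r)) ≤ K := by
    intro r
    refine (hκ r).trans ?_
    have h1 : (2 : ℝ) ^ κ r ≤ n * Real.exp (40 * (n : ℝ) ^ (7/8 : ℝ)) := by
      have h2 : (2 : ℝ) ^ κ r ≤ ∑ r, (1 : ℝ) * 2 ^ κ r := by
        simp only [one_mul]
        exact Finset.single_le_sum (f := fun r => (2 : ℝ) ^ κ r) (fun _ _ => by positivity)
          (Finset.mem_univ r)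
      refine h2.trans (hsum.trans (le_of_eq ?_))
      simp
    have h2 := Real.log_le_log (by positivity) h1
    rw [Real.log_pow, Real.log_mul (by positivity) (by positivity), Real.log_exp] at h2
    have h3 := Real.log_le_rpow_div (x := (n : ℝ)) (by linarith) (ε := 7/8) (by norm_num)
    have h4 := Real.log_two_gt_d9
    have h5 : (κ r : ℝ) * (1/2) ≤ κ r * Real.log 2 := by gcongr; linarith
    have h6 : ((1 + 2 * κ r : ℕ) : ℝ) ≤ K := by
      push_cast
      have : (n : ℝ) ^ (7/8 : ℝ) / (7/8) = 8/7 * (n : ℝ) ^ (7/8 : ℝ) := by ring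
      rw [this] at h3
      linarith
    exact_mod_cast h6
  have hcode : ∀ r, ∃ v : List.Vector (Fin (n + 1)) K, ∀ x,
      decide (Odd (v.toList.countP (fun t : Fin (n + 1) => decide ((t : ℕ) ≤ L.idxOf x)))) = B r x := by
    intro r
    obtain ⟨c, hc, hlt, hi⟩ := altCount_code (L.map (B r)) false
    have hcK := hκK r
    rw [← hc] at hcK
    refine ⟨⟨c.map (Fin.ofNat (n + 1)) ++ List.replicate (K - c.length) (Fin.last n), by simp; omega⟩, ?_⟩
    intro x
    have hx : L.idxOf x < L.length := List.idxOf_lt_length_iff.2 ((hLS x).2 (Finset.mem_univ _))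
    have h1 := hi (L.idxOf x) (by simpa using hx)
    simp only [List.getElem_map, List.getElem_idxOf, Bool.false_bne, Bool.false_xor] at h1
    rw [h1]
    rw [List.Vector.toList_mk, List.countP_append, List.countP_map]
    have e1 : (List.replicate (K - c.length) (Fin.last n)).countP
        (fun t : Fin (n + 1) => decide ((t : ℕ) ≤ L.idxOf x)) = 0 := by
      rw [List.countP_eq_zero]
      intro t ht
      rw [List.eq_of_mem_replicate ht]
      simp; omega
    have e2 : c.countP ((fun t : Fin (n + 1) => decide ((t : ℕ) ≤ L.idxOf x)) ∘ Fin.ofNat (n + 1)) =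
        c.countP (fun t => decide (t ≤ L.idxOf x)) := by
      apply List.countP_congr
      intro t ht
      have := hlt t ht
      rw [List.length_map] at this
      simp [Nat.mod_eq_of_lt (by omega : t < n + 1)]
    rw [e1, e2, add_zero]
  choose v hv using hcode
  refine ⟨fun i => (⟨L.idxOf i, ?_⟩, v i), fun i j => hv i j⟩
  refine lt_of_lt_of_eq ?_ hlen
  exact List.idxOf_lt_length_iff.2 ((hLS i).2 (Finset.mem_univ _))

/-- Unit disk graphs (vertices are centers `p_i ∈ ℝ²`, with an edge when
`|p_i − p_j| ≤ 2`) admit implicit representations with `m ≤ C·n^{log₂(15)/4}` bits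
per vertex. -/
theorem unit_disk_implicit_representation :
    ∃ C : ℝ, 0 < C ∧ ∀ n : ℕ, 2 ≤ n →
      ∃ m : ℕ, (m : ℝ) ≤ C * (n : ℝ) ^ (Real.logb 2 15 / 4) ∧
        ∃ G : (Fin m → Bool) → (Fin m → Bool) → Bool,
          (∀ a b, G a b = G b a) ∧
          ∀ p : Fin n → EuclideanSpace ℝ (Fin 2),
            ∃ F : Fin n → (Fin m → Bool),
              ∀ i j : Fin n, i ≠ j →
                (G (F i) (F j) = true ↔ dist (p i) (p j) ≤ 2) := by
  classical
  refine ⟨172 * 33, by norm_num, fun n hn => ?_⟩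
  have hn1 : (1 : ℝ) ≤ n := by exact_mod_cast (by omega : 1 ≤ n)
  have hP : 1 ≤ (n : ℝ) ^ (7/8 : ℝ) := Real.one_le_rpow hn1 (by norm_num)
  have hQ : 1 ≤ (n : ℝ) ^ (1/16 : ℝ) := Real.one_le_rpow hn1 (by norm_num)
  set K := ⌈170 * (n : ℝ) ^ (7/8 : ℝ)⌉₊ with hKdef
  have hK : 170 * (n : ℝ) ^ (7/8 : ℝ) ≤ K := Nat.le_ceil _
  have hK2 : (K : ℝ) < 170 * (n : ℝ) ^ (7/8 : ℝ) + 1 := Nat.ceil_lt_add_one (by positivity)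
  set b := Nat.log 2 n + 1 with hb
  have hbn : n + 1 ≤ 2 ^ b := Nat.lt_pow_succ_log_self (by norm_num) n
  have hbr : (b : ℝ) ≤ 33 * (n : ℝ) ^ (1/16 : ℝ) := by
    have h1 : (Nat.log 2 n : ℝ) ≤ Real.logb 2 n := Real.natLog_le_logb n 2
    rw [Real.logb, le_div_iff₀ (Real.log_pos (by norm_num))] at h1
    have h3 := Real.log_le_rpow_div (x := (n : ℝ)) (by linarith) (ε := 1/16) (by norm_num)
    have h4 := Real.log_two_gt_d9
    have h5 : (Nat.log 2 n : ℝ) * (1/2) ≤ Nat.log 2 n * Real.log 2 := by gcongr; linarith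
    have : (n : ℝ) ^ (1/16 : ℝ) / (1/16) = 16 * (n : ℝ) ^ (1/16 : ℝ) := by ring
    rw [this] at h3
    rw [hb]; push_cast
    linarith
  have hexp : (15/16 : ℝ) ≤ Real.logb 2 15 / 4 := by
    have : (15/4 : ℝ) ≤ Real.logb 2 15 := by
      rw [Real.le_logb_iff_rpow_le (by norm_num) (by norm_num)]
      apply le_of_pow_le_pow_left₀ (n := 4) (by norm_num) (by norm_num)
      rw [← Real.rpow_natCast, ← Real.rpow_mul (by norm_num)]
      norm_num
    linarith
  have hcard : Fintype.card (Fin n × List.Vector (Fin (n + 1)) K) ≤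
      Fintype.card (Fin ((K + 1) * b) → Bool) := by
    rw [Fintype.card_prod, card_vector]
    simp only [Fintype.card_fin, Fintype.card_fun, Fintype.card_bool]
    calc n * (n + 1) ^ K ≤ (n + 1) * (n + 1) ^ K := Nat.mul_le_mul_right _ (by omega)
      _ = (n + 1) ^ (K + 1) := by ring
      _ ≤ (2 ^ b) ^ (K + 1) := Nat.pow_le_pow_left hbn _
      _ = _ := by rw [← pow_mul, mul_comm]
  obtain ⟨e⟩ := Function.Embedding.nonempty_of_card_le hcard
  haveI : Nonempty (Fin n × List.Vector (Fin (n + 1)) K) :=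
    ⟨(⟨0, by omega⟩, List.Vector.replicate K 0)⟩
  let g := Function.invFun e
  have hg : ∀ x, g (e x) = x := Function.leftInverse_invFun e.injective
  refine ⟨(K + 1) * b, ?_, fun x y => decodeRow (g x) (g y) && decodeRow (g y) (g x), ?_, ?_⟩
  · push_cast
    calc ((K : ℝ) + 1) * b ≤ (172 * (n : ℝ) ^ (7/8 : ℝ)) * (33 * (n : ℝ) ^ (1/16 : ℝ)) := by
          gcongr
          linarith
      _ = 172 * 33 * (n : ℝ) ^ (15/16 : ℝ) := by
          rw [show (15/16 : ℝ) = 7/8 + 1/16 by norm_num, Real.rpow_add (by linarith)]; ring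
      _ ≤ _ := by gcongr
  · intro a c
    exact Bool.and_comm _ _
  · intro p
    obtain ⟨f, hf⟩ := labels_exist hn (fun r x => decide (dist (p r) (p x) ≤ 2))
      (fun U hU => udg_vc p U (by simpa using hU)) hK
    refine ⟨fun i => e (f i), fun i j _ => ?_⟩
    simp only [hg, hf]
    rw [dist_comm (p j) (p i)]
    simp
end

section
/- There exists a constant C > 0 such that for every n ≥ 2 there is a natural number m ≤ C·n^{log₂(31)/5} and a symmetric function G : {0,1}^m × {0,1}^m → {0,1} with the property: for every tuple of pairs (p_1, r_1), …, (p_n, r_n) with p_i ∈ ℝ² and r_i ∈ ℝ, r_i > 0, there exists F : {1,…,n} → {0,1}^m such that for all i ≠ j, G(F(i), F(j)) = 1 if and only if the Euclidean distance from p_i to p_j is at most r_i + r_j. (Note log₂(31)/5 ≈ 0.990839 < 1.) -/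
open Finset

namespace DiskRep

lemma card_small {α : Type*} [DecidableEq α] (R : Finset α) (t : ℕ) :
    #{s ∈ R.powerset | #s ≤ t} ≤ (#R + 1) ^ t := by
  induction t with
  | zero =>
    rw [pow_zero, Finset.card_le_one]
    intro a ha b hb
    simp at ha hb
    rw [ha.2, hb.2]
  | succ t ih =>
    have hsub : ({s ∈ R.powerset | #s ≤ t + 1} : Finset (Finset α)) ⊆
        (({s ∈ R.powerset | #s ≤ t} : Finset (Finset α)) ×ˢ insertNone R).image
          (fun q => q.2.elim q.1 (fun a => insert a q.1)) := by
      intro s hs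
      rw [mem_filter, mem_powerset] at hs
      rw [mem_image]
      rcases s.eq_empty_or_nonempty with rfl | ⟨a, ha⟩
      · exact ⟨(∅, none), by simp, rfl⟩
      · refine ⟨(s.erase a, some a), ?_, ?_⟩
        · rw [mem_product, mem_filter, mem_powerset, card_erase_of_mem ha]
          refine ⟨⟨(erase_subset _ _).trans hs.1, by have := hs.2; omega⟩, ?_⟩
          simpa using hs.1 ha
        · simp [insert_erase ha]
    calc _ ≤ _ := card_le_card hsub
      _ ≤ _ := card_image_le
      _ ≤ _ := by
        rw [card_product, card_insertNone, pow_succ]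
        exact Nat.mul_le_mul_right _ ih

/-- shatter bound for sign matrices of rank 5 -/
lemma shatter_bound {ι α : Type*} [DecidableEq ι] (M : ι → α → Bool)
    (a : ι → Fin 5 → ℝ) (b : α → Fin 5 → ℝ)
    (hM : ∀ i x, M i x = true ↔ ∑ k, a i k * b x k ≤ 0)
    (R : Finset ι) (P : Finset α)
    (hP : ∀ x ∈ P, ∀ y ∈ P, (∀ r ∈ R, M r x = M r y) → x = y) :
    #P ≤ (#R + 1) ^ 5 := by
  classical
  set A : Finset (Finset ι) := P.image (fun x => {r ∈ R | M r x = true}) with hA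
  have h1 : #P = #A := by
    rw [hA, card_image_of_injOn]
    intro x hx y hy hxy
    apply hP x hx y hy
    intro r hr
    have := Finset.ext_iff.1 hxy r
    simp [hr] at this
    exact this
  rw [h1]
  refine (card_le_card_shatterer A).trans (le_trans (card_le_card ?_) (card_small R 5))
  intro s hs
  rw [mem_shatterer] at hs
  rw [mem_filter, mem_powerset]
  constructor
  · obtain ⟨u, hu, hsu⟩ := hs.exists_superset
    obtain ⟨x, -, rfl⟩ := mem_image.1 hu
    exact hsu.trans (filter_subset _ _)
  by_contra hcard
  push Not at hcard
  have hld : ¬ LinearIndependent ℝ (fun i : s => a i) := by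
    intro h
    have := h.fintype_card_le_finrank
    simp at this
    omega
  rw [Fintype.not_linearIndependent_iff] at hld
  obtain ⟨g, hg, i0, hi0⟩ := hld
  have key : ∀ g : s → ℝ, ∑ i, g i • a i = 0 → (∃ i, g i < 0) → False := by
    intro g hg ⟨i1, hi1⟩
    obtain ⟨u, hu, hsu⟩ := hs (t := (univ.filter (fun i : s => 0 ≤ g i)).map
      (Function.Embedding.subtype _)) (by
        intro i hi
        simp at hi
        exact hi.1)
    obtain ⟨x, -, rfl⟩ := mem_image.1 hu
    have hmem : ∀ i : s, M i x = true ↔ 0 ≤ g i := by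
      intro i
      have := Finset.ext_iff.1 hsu i
      have hR : (i : ι) ∈ R := by
        obtain ⟨u, hu, hsu⟩ := hs.exists_superset
        obtain ⟨x, -, rfl⟩ := mem_image.1 hu
        exact (filter_subset _ _) (hsu i.2)
      simpa [hR] using this
    have hz : ∑ i, g i * ∑ k, a i k * b x k = 0 := by
      have : ∑ i, g i * ∑ k, a i k * b x k = ∑ k, (∑ i, g i • a i) k * b x k := by
        simp only [Finset.sum_apply, Pi.smul_apply, smul_eq_mul, mul_sum, sum_mul]
        rw [sum_comm]
        simp only [mul_assoc]
      rw [this, hg]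
      simp
    have hneg : ∑ i, g i * ∑ k, a i k * b x k < 0 := by
      have hlt : ∀ i, g i < 0 → g i * ∑ k, a i k * b x k < 0 := by
        intro i hi
        have : ¬ ∑ k, a i k * b x k ≤ 0 := by
          rw [← hM, hmem]; linarith
        exact mul_neg_of_neg_of_pos hi (by linarith)
      apply Finset.sum_neg' _ ⟨i1, mem_univ _, hlt i1 hi1⟩
      intro i _
      rcases lt_or_ge (g i) 0 with h | h
      · exact (hlt i h).le
      · exact mul_nonpos_of_nonneg_of_nonpos h ((hM _ _).1 ((hmem i).2 h))
    linarith
  rcases lt_or_gt_of_ne hi0 with h | h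
  · exact key g hg ⟨i0, h⟩
  · refine key (fun i => - g i) ?_ ⟨i0, by simpa using h⟩
    simp only [neg_smul, sum_neg_distrib, hg, neg_zero]

lemma greedy {ι α : Type*} [Fintype ι] [Nonempty ι] [DecidableEq ι] [DecidableEq α]
    (M : ι → α → Bool) (w : ι → ℝ) (hw : ∀ i, 0 < w i)
    (P : Finset α) (δ : ℝ) (hδ1 : δ ≤ 1)
    (h : ∀ x ∈ P, ∀ y ∈ P, x ≠ y → δ * ∑ i, w i ≤ ∑ i, if M i x = M i y then 0 else w i)
    (m : ℕ) : ∃ R : Finset ι, #R ≤ m ∧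
      (#{q ∈ P.offDiag | ∀ r ∈ R, M r q.1 = M r q.2} : ℝ) ≤ (#P : ℝ) ^ 2 * (1 - δ) ^ m := by
  induction m with
  | zero =>
    refine ⟨∅, by simp, ?_⟩
    have : #P.offDiag ≤ #P ^ 2 := by rw [offDiag_card, sq]; omega
    have h2 : (#P.offDiag : ℝ) ≤ (#P : ℝ) ^ 2 := by exact_mod_cast this
    simpa only [notMem_empty, false_implies, implies_true, filter_true, pow_zero, mul_one] using h2
  | succ m ih =>
    obtain ⟨R, hR, hU⟩ := ih
    set U := ({q ∈ P.offDiag | ∀ r ∈ R, M r q.1 = M r q.2} : Finset (α × α)) with hUd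
    have h1 : ∑ i, w i * (δ * #U) ≤ ∑ i, w i * (#{q ∈ U | ¬ M i q.1 = M i q.2} : ℝ) := by
      calc ∑ i, w i * (δ * #U) = ∑ q ∈ U, δ * ∑ i, w i := by
            rw [sum_const, ← sum_mul, nsmul_eq_mul]; ring
        _ ≤ ∑ q ∈ U, ∑ i, if M i q.1 = M i q.2 then 0 else w i := by
            apply sum_le_sum
            intro q hq
            have := mem_offDiag.1 (mem_filter.1 hq).1
            exact h _ this.1 _ this.2.1 this.2.2
        _ = _ := by
            rw [sum_comm]
            apply sum_congr rfl
            intro i _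
            rw [card_filter]
            push_cast
            rw [mul_sum]
            apply sum_congr rfl
            intro q _
            by_cases hh : M i q.1 = M i q.2 <;> simp [hh]
    obtain ⟨i, -, hi⟩ := exists_le_of_sum_le (univ_nonempty) h1
    have hi' := le_of_mul_le_mul_left hi (hw i)
    refine ⟨insert i R, (card_insert_le _ _).trans (by omega), ?_⟩
    have h2 : ({q ∈ P.offDiag | ∀ r ∈ insert i R, M r q.1 = M r q.2} : Finset (α × α)) =
        {q ∈ U | M i q.1 = M i q.2} := by
      ext q
      simp only [hUd, mem_filter, forall_mem_insert]
      tauto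
    rw [h2]
    have h3 := card_filter_add_card_filter_not (s := U) (fun q => M i q.1 = M i q.2)
    have h4 : (#{q ∈ U | M i q.1 = M i q.2} : ℝ) + #{q ∈ U | ¬ M i q.1 = M i q.2} = #U := by
      exact_mod_cast h3
    calc (#{q ∈ U | M i q.1 = M i q.2} : ℝ) ≤ #U * (1 - δ) := by linarith
      _ ≤ (#P : ℝ) ^ 2 * (1 - δ) ^ m * (1 - δ) := by gcongr
      _ = _ := by ring

/-- the short edge lemma -/
lemma short_edge {ι α : Type*} [Fintype ι] [Nonempty ι] [DecidableEq ι] [DecidableEq α]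
    (M : ι → α → Bool)
    (hsh : ∀ (R : Finset ι) (P : Finset α),
      (∀ x ∈ P, ∀ y ∈ P, (∀ r ∈ R, M r x = M r y) → x = y) → #P ≤ (#R + 1) ^ 5)
    (w : ι → ℝ) (hw : ∀ i, 0 < w i)
    (P : Finset α) (hP : 2 ≤ #P) :
    ∃ x ∈ P, ∃ y ∈ P, x ≠ y ∧ (∑ i, if M i x = M i y then 0 else w i) ≤
      100 * (#P : ℝ) ^ (-(1 / 10) : ℝ) * ∑ i, w i := by
  by_contra hcon
  push Not at hcon
  set k : ℝ := (#P : ℝ) with hk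
  have hk2 : (2 : ℝ) ≤ k := by rw [hk]; exact_mod_cast hP
  set s : ℝ := k ^ (1 / 10 : ℝ) with hs
  have hs0 : 0 < s := by positivity
  have hsk : s ^ 10 = k := by
    rw [hs, ← Real.rpow_natCast, ← Real.rpow_mul (by linarith)]; norm_num
  have hsi : k ^ (-(1 / 10) : ℝ) = s⁻¹ := by rw [Real.rpow_neg (by linarith)]
  rw [hsi] at hcon
  have hW : 0 < ∑ i, w i := sum_pos (fun i _ => hw i) univ_nonempty
  have hs100 : 100 < s := by
    by_contra hle
    push Not at hle
    obtain ⟨x, hx, y, hy, hxy⟩ := Finset.one_lt_card.1 (show 1 < #P by omega)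
    have h1 := hcon x hx y hy hxy
    have h2 : (∑ i, if M i x = M i y then 0 else w i) ≤ ∑ i, w i := by
      apply sum_le_sum
      intro i _
      have := (hw i).le
      split_ifs <;> simp [this]
    have h3 : 1 ≤ 100 * s⁻¹ := by
      rw [← div_eq_mul_inv, le_div_iff₀ hs0]; linarith
    nlinarith
  obtain ⟨m, hm1, hm2⟩ : ∃ m : ℕ, (m : ℝ) + 1 < s ^ 2 ∧ s ^ 2 / 2 ≤ m := by
    refine ⟨⌊s ^ 2 - 2⌋₊, ?_, ?_⟩
    · have := Nat.floor_le (show 0 ≤ s ^ 2 - 2 by nlinarith)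
      linarith
    · have := Nat.lt_floor_add_one (s ^ 2 - 2)
      nlinarith
  have hδ1 : 100 * s⁻¹ ≤ 1 := by
    rw [← div_eq_mul_inv, div_le_iff₀ hs0]; linarith
  obtain ⟨R, hR, hU⟩ := greedy M w hw P (100 * s⁻¹) hδ1
    (fun x hx y hy hxy => (hcon x hx y hy hxy).le) m
  have hlt : k ^ 2 * (1 - 100 * s⁻¹) ^ m < 1 := by
    have h1 : (1 - 100 * s⁻¹) ^ m ≤ Real.exp (-(50 * s)) := by
      calc (1 - 100 * s⁻¹) ^ m ≤ (Real.exp (-(100 * s⁻¹))) ^ m := by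
            apply pow_le_pow_left₀ (by linarith)
            have := Real.add_one_le_exp (-(100 * s⁻¹)); linarith
        _ = Real.exp (-(100 * s⁻¹) * m) := by rw [← Real.exp_nat_mul]; ring_nf
        _ ≤ _ := by
            apply Real.exp_le_exp.2
            have : 100 * s⁻¹ * (s ^ 2 / 2) ≤ 100 * s⁻¹ * m := by gcongr
            have h5 : 100 * s⁻¹ * (s ^ 2 / 2) = 50 * s := by field_simp; ring
            linarith
    have h2 : s < Real.exp s := by linarith [Real.add_one_le_exp s]
    have h3 : k ^ 2 < Real.exp (50 * s) := by
      calc k ^ 2 = s ^ 20 := by rw [← hsk]; ring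
        _ < (Real.exp s) ^ 20 := by gcongr
        _ = Real.exp (20 * s) := by rw [← Real.exp_nat_mul]; norm_num
        _ ≤ _ := Real.exp_le_exp.2 (by linarith)
    calc k ^ 2 * (1 - 100 * s⁻¹) ^ m ≤ k ^ 2 * Real.exp (-(50 * s)) := by gcongr
      _ < Real.exp (50 * s) * Real.exp (-(50 * s)) := by gcongr
      _ = 1 := by rw [← Real.exp_add]; simp
  have hU0 : #{q ∈ P.offDiag | ∀ r ∈ R, M r q.1 = M r q.2} = 0 := by
    have := hU.trans_lt hlt
    have h5 : #{q ∈ P.offDiag | ∀ r ∈ R, M r q.1 = M r q.2} < 1 := by exact_mod_cast this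
    omega
  have hPle := hsh R P (by
    intro x hx y hy hr
    by_contra hxy
    rw [card_eq_zero] at hU0
    have : (x, y) ∈ ({q ∈ P.offDiag | ∀ r ∈ R, M r q.1 = M r q.2} : Finset (α × α)) := by
      rw [mem_filter, mem_offDiag]; exact ⟨⟨hx, hy, hxy⟩, hr⟩
    rw [hU0] at this
    simp at this)
  have h6 : k ≤ ((m : ℝ) + 1) ^ 5 := by
    have : #P ≤ (m + 1) ^ 5 := hPle.trans (by gcongr)
    rw [hk]; exact_mod_cast this
  have h7 : ((m : ℝ) + 1) ^ 5 < (s ^ 2) ^ 5 := by gcongr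
  have : (s ^ 2) ^ 5 = k := by rw [← hsk]; ring
  linarith

/-- number of changes in a list -/
def cross : List Bool → ℕ
  | [] => 0
  | [_] => 0
  | a :: b :: l => (if a = b then 0 else 1) + cross (b :: l)

lemma cross_insert (l1 l2 : List Bool) (x y : Bool) :
    cross (l1 ++ y :: x :: l2) ≤ cross (l1 ++ y :: l2) + 2 * (if x = y then 0 else 1) := by
  induction l1 with
  | nil =>
    cases l2 with
    | nil => cases x <;> cases y <;> simp [cross]
    | cons z l2 => cases x <;> cases y <;> cases z <;> simp [cross] <;> omega
  | cons a l1 ih =>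
    cases l1 with
    | nil => simp only [List.cons_append, List.nil_append, cross] at ih ⊢; omega
    | cons b l1 => simp only [List.cons_append, cross] at ih ⊢; omega

lemma low_cross {ι α : Type*} [Fintype ι] [Nonempty ι] [DecidableEq ι] [DecidableEq α]
    (M : ι → α → Bool)
    (hsh : ∀ (R : Finset ι) (P : Finset α),
      (∀ x ∈ P, ∀ y ∈ P, (∀ r ∈ R, M r x = M r y) → x = y) → #P ≤ (#R + 1) ^ 5)
    (k : ℕ) : ∀ (w : ι → ℝ), (∀ i, 0 < w i) → ∀ (P : Finset α), #P = k + 1 →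
    ∃ L : List α, L.length = k + 1 ∧ (∀ x ∈ P, x ∈ L) ∧
      ∑ i, w i * 2 ^ (cross (L.map (M i))) ≤
        (∑ i, w i) * Real.exp (∑ j ∈ range k, 300 * ((j : ℝ) + 2) ^ (-(1 / 10) : ℝ)) := by
  induction k with
  | zero =>
    intro w hw P hP
    obtain ⟨x, rfl⟩ := card_eq_one.1 hP
    exact ⟨[x], by simp, by simp, by simp [cross]⟩
  | succ k ih =>
    intro w hw P hP
    obtain ⟨x, hx, y, hy, hxy, hle⟩ := short_edge M hsh w hw P (by omega)
    set δ : ℝ := 100 * (#P : ℝ) ^ (-(1 / 10) : ℝ) with hδ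
    obtain ⟨L, hlen, hmem, hL⟩ := ih (fun i => w i * 4 ^ (if M i x = M i y then 0 else 1))
      (fun i => by have := hw i; positivity) (P.erase x) (by rw [card_erase_of_mem hx]; omega)
    obtain ⟨l1, l2, rfl⟩ := List.append_of_mem (hmem y (mem_erase.2 ⟨hxy.symm, hy⟩))
    refine ⟨l1 ++ y :: x :: l2, ?_, ?_, ?_⟩
    · simp at hlen ⊢; omega
    · intro z hz
      by_cases hzx : z = x
      · simp [hzx]
      · have := hmem z (mem_erase.2 ⟨hzx, hz⟩)
        simp at this ⊢
        tauto
    · have hW : 0 < ∑ i, w i := sum_pos (fun i _ => hw i) univ_nonempty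
      have h1 : (∑ i, w i * 4 ^ (if M i x = M i y then 0 else 1)) ≤
          (∑ i, w i) * Real.exp (3 * δ) := by
        calc (∑ i, w i * 4 ^ (if M i x = M i y then 0 else 1))
            = ∑ i, w i + 3 * ∑ i, (if M i x = M i y then 0 else w i) := by
              rw [mul_sum, ← sum_add_distrib]
              apply sum_congr rfl
              intro i _
              split_ifs <;> ring
          _ ≤ (∑ i, w i) * (3 * δ + 1) := by linarith
          _ ≤ _ := by gcongr; exact Real.add_one_le_exp _
      calc ∑ i, w i * 2 ^ (cross ((l1 ++ y :: x :: l2).map (M i)))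
          ≤ ∑ i, (w i * 4 ^ (if M i x = M i y then 0 else 1)) *
              2 ^ (cross ((l1 ++ y :: l2).map (M i))) := by
            apply sum_le_sum
            intro i _
            rw [mul_assoc]
            apply mul_le_mul_of_nonneg_left _ (hw i).le
            have := cross_insert (l1.map (M i)) (l2.map (M i)) (M i x) (M i y)
            simp only [List.map_append, List.map_cons]
            calc (2 : ℝ) ^ _ ≤ 2 ^ _ := pow_le_pow_right₀ (by norm_num) this
              _ = _ := by rw [pow_add, pow_mul]; norm_num [mul_comm]
        _ ≤ _ := hL
        _ ≤ (∑ i, w i) * Real.exp (3 * δ) *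
            Real.exp (∑ j ∈ range k, 300 * ((j : ℝ) + 2) ^ (-(1 / 10) : ℝ)) := by gcongr
        _ = _ := by
            rw [mul_assoc, ← Real.exp_add, sum_range_succ, hδ, hP]
            congr 2
            push_cast
            rw [show (k : ℝ) + 1 + 1 = k + 2 by ring]
            ring

/-- lists of length `n + 1` with head `b` and at most `t` changes -/
def pats : ℕ → Bool → ℕ → Finset (List Bool)
  | 0, b, _ => {[b]}
  | n + 1, b, 0 => (pats n b 0).image (List.cons b)
  | n + 1, b, t + 1 => (pats n b (t + 1) ∪ pats n (!b) t).image (List.cons b)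

lemma mem_pats (n : ℕ) : ∀ (b : Bool) (t : ℕ) (l : List Bool), l.length = n →
    cross (b :: l) ≤ t → b :: l ∈ pats n b t := by
  induction n with
  | zero => intro b t l hl _; simp at hl; simp [pats, hl]
  | succ n ih =>
    intro b t l hl hc
    cases l with
    | nil => simp at hl
    | cons c l =>
      simp at hl
      simp only [cross] at hc
      by_cases hbc : b = c
      · subst hbc
        simp at hc
        have := ih b t l hl hc
        cases t with
        | zero => simpa [pats] using this
        | succ t => simp [pats, this]
      · have hc' : c = !b := by cases b <;> cases c <;> simp_all
        simp [hbc] at hc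
        cases t with
        | zero => omega
        | succ t =>
          have := ih c t l hl (by omega)
          subst hc'
          simp [pats, this]

lemma card_pats (n : ℕ) : ∀ (b : Bool) (t : ℕ), #(pats n b t) ≤ (n + 1) ^ t := by
  induction n with
  | zero => intro b t; simp [pats]
  | succ n ih =>
    intro b t
    cases t with
    | zero => exact card_image_le.trans (by simpa using ih b 0)
    | succ t =>
      refine card_image_le.trans ((card_union_le _ _).trans ?_)
      calc _ ≤ (n + 1) ^ (t + 1) + (n + 1) ^ t := add_le_add (ih _ _) (ih _ _)
        _ = (n + 1) ^ t * (n + 1 + 1) := by ring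
        _ ≤ (n + 1 + 1) ^ t * (n + 1 + 1) := by gcongr; omega
        _ = _ := by ring

lemma sum_bound (k : ℕ) :
    ∑ j ∈ range k, ((j : ℝ) + 2) ^ (-(1 / 10) : ℝ) ≤ (10 / 9) * ((k : ℝ) + 1) ^ (9 / 10 : ℝ) := by
  induction k with
  | zero => simp; norm_num
  | succ k ih =>
    rw [sum_range_succ]
    push_cast
    set x : ℝ := (k : ℝ) + 2 with hx
    have hx0 : 0 < x := by positivity
    have hx1 : 1 ≤ x := by rw [hx]; linarith [Nat.cast_nonneg (α := ℝ) k]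
    have e1 : (k : ℝ) + 1 + 1 = x := by rw [hx]; ring
    have e2 : (k : ℝ) + 1 = x * (1 + -(1 / x)) := by field_simp; rw [hx]; ring
    rw [e1]
    have h1x : 1 / x ≤ 1 := by rw [div_le_one hx0]; exact hx1
    have hb := rpow_one_add_le_one_add_mul_self (s := -(1 / x)) (by linarith)
      (p := 9 / 10) (by norm_num) (by norm_num)
    have h3 : ((k : ℝ) + 1) ^ (9 / 10 : ℝ) ≤ x ^ (9 / 10 : ℝ) * (1 + 9 / 10 * -(1 / x)) := by
      rw [e2, Real.mul_rpow hx0.le (by linarith)]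
      gcongr
    have h4 : x ^ (-(1 / 10) : ℝ) = x ^ (9 / 10 : ℝ) * (1 / x) := by
      rw [show (-(1 / 10) : ℝ) = 9 / 10 - 1 by norm_num, Real.rpow_sub_one hx0.ne']
      ring
    rw [h4]
    nlinarith


lemma exponent_le : (99 / 100 : ℝ) ≤ Real.logb 2 31 / 5 := by
  rw [le_div_iff₀ (by norm_num), Real.le_logb_iff_rpow_le (by norm_num) (by norm_num)]
  refine le_of_pow_le_pow_left₀ (n := 20) (by norm_num) (by norm_num) ?_
  rw [← Real.rpow_natCast, ← Real.rpow_mul (by norm_num)]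
  norm_num

lemma size_bound (n : ℕ) (hn : 2 ≤ n) :
    ((1 + Nat.clog 2 n * (⌊1000 * (n : ℝ) ^ (9 / 10 : ℝ)⌋₊ + 1) : ℕ) : ℝ) ≤
      20021 * (n : ℝ) ^ (Real.logb 2 31 / 5) := by
  have hn1 : (1 : ℝ) ≤ n := by exact_mod_cast (by omega : 1 ≤ n)
  set X : ℝ := (n : ℝ) ^ (9 / 10 : ℝ) with hX
  set y : ℝ := (n : ℝ) ^ (9 / 100 : ℝ) with hy
  have hX1 : 1 ≤ X := Real.one_le_rpow hn1 (by norm_num)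
  have hy1 : 1 ≤ y := Real.one_le_rpow hn1 (by norm_num)
  have hXy : X * y ≤ (n : ℝ) ^ (Real.logb 2 31 / 5) := by
    rw [hX, hy, ← Real.rpow_add (by linarith)]
    apply Real.rpow_le_rpow_of_exponent_le hn1
    refine le_trans (by norm_num) exponent_le
  have hl : (Nat.clog 2 n : ℝ) ≤ 20 * y := by
    have h1 := Nat.pow_pred_clog_lt_self (b := 2) (by norm_num) (x := n) (by omega)
    have h2 : ((2 : ℝ) ^ (Nat.clog 2 n - 1)) ≤ n := by exact_mod_cast h1.le
    have h3 := Real.log_le_log (by positivity) h2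
    rw [Real.log_pow] at h3
    have h4 : (Nat.clog 2 n : ℝ) ≤ ((Nat.clog 2 n - 1 : ℕ) : ℝ) + 1 := by
      exact_mod_cast (by omega : Nat.clog 2 n ≤ (Nat.clog 2 n - 1) + 1)
    have h5 := Real.log_le_rpow_div (x := n) (by linarith) (ε := 9 / 100) (by norm_num)
    have h6 := Real.log_two_gt_d9
    rw [← hy] at h5
    have h7 : 0 ≤ ((Nat.clog 2 n - 1 : ℕ) : ℝ) := by positivity
    have h8 : ((Nat.clog 2 n - 1 : ℕ) : ℝ) * 0.69 ≤ y / (9 / 100) := by nlinarith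
    linarith
  have hf := Nat.floor_le (show 0 ≤ 1000 * X by linarith)
  push_cast
  calc (1 : ℝ) + Nat.clog 2 n * (⌊1000 * X⌋₊ + 1) ≤ 1 + 20 * y * (1000 * X + X) := by
        gcongr
    _ ≤ 20021 * (X * y) := by nlinarith
    _ ≤ _ := by gcongr

lemma ordering (n : ℕ) (hn : 2 ≤ n) (M : Fin n → Fin n → Bool)
    (hsh : ∀ (R : Finset (Fin n)) (P : Finset (Fin n)),
      (∀ x ∈ P, ∀ y ∈ P, (∀ r ∈ R, M r x = M r y) → x = y) → #P ≤ (#R + 1) ^ 5) :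
    ∃ L : List (Fin n), L.length = n ∧ (∀ x, x ∈ L) ∧
      ∀ i, cross (L.map (M i)) ≤ ⌊1000 * (n : ℝ) ^ (9 / 10 : ℝ)⌋₊ := by
  obtain ⟨k, rfl⟩ : ∃ k, n = k + 1 := ⟨n - 1, by omega⟩
  obtain ⟨L, hlen, hmem, hL⟩ := low_cross M hsh k (fun _ => 1) (fun _ => one_pos) univ (by simp)
  refine ⟨L, hlen, fun x => hmem x (mem_univ x), fun i => Nat.le_floor ?_⟩
  have hn1 : (1 : ℝ) ≤ ((k + 1 : ℕ) : ℝ) := by exact_mod_cast (by omega : 1 ≤ k + 1)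
  set N : ℝ := ((k + 1 : ℕ) : ℝ) with hN
  set X : ℝ := N ^ (9 / 10 : ℝ) with hX
  set c := cross (L.map (M i)) with hc
  have h1 : (2 : ℝ) ^ c ≤ N * Real.exp (400 * X) := by
    calc (2 : ℝ) ^ c ≤ ∑ i, 1 * (2 : ℝ) ^ (cross (L.map (M i))) := by
          simp only [one_mul]
          exact single_le_sum (f := fun i => (2 : ℝ) ^ (cross (L.map (M i))))
            (fun i _ => by positivity) (mem_univ i)
      _ ≤ _ := hL
      _ ≤ _ := by
          have hs := sum_bound k
          rw [← mul_sum]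
          have : (∑ i : Fin (k + 1), (1 : ℝ)) = N := by simp [hN]
          rw [this]
          have e : (k : ℝ) + 1 = N := by rw [hN]; push_cast; ring
          rw [e, ← hX] at hs
          have hX0 : 0 ≤ X := by positivity
          refine mul_le_mul_of_nonneg_left (Real.exp_le_exp.2 ?_) (by linarith)
          linarith
  have h2 := Real.log_le_log (by positivity) h1
  rw [Real.log_pow, Real.log_mul (by linarith) (Real.exp_ne_zero _), Real.log_exp] at h2
  have h5 := Real.log_le_rpow_div (x := N) (by linarith) (ε := 9 / 10) (by norm_num)
  have h6 := Real.log_two_gt_d9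
  rw [← hX] at h5
  have hX0 : 0 ≤ X := by positivity
  have h7 : (0 : ℝ) ≤ c := by positivity
  have h8 : (c : ℝ) * 0.69 ≤ c * Real.log 2 := by gcongr; linarith
  linarith

lemma disk_matrix {n : ℕ} (p : Fin n → EuclideanSpace ℝ (Fin 2)) (r : Fin n → ℝ)
    (hr : ∀ i, 0 < r i) (R P : Finset (Fin n))
    (h : ∀ x ∈ P, ∀ y ∈ P, (∀ i ∈ R, decide (dist (p i) (p x) ≤ r i + r x) =
      decide (dist (p i) (p y) ≤ r i + r y)) → x = y) : #P ≤ (#R + 1) ^ 5 := by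
  refine shatter_bound (fun i x => decide (dist (p i) (p x) ≤ r i + r x))
    (fun i => ![p i 0, p i 1, r i, p i 0 ^ 2 + p i 1 ^ 2 - r i ^ 2, 1])
    (fun i => ![-2 * p i 0, -2 * p i 1, -2 * r i, 1, p i 0 ^ 2 + p i 1 ^ 2 - r i ^ 2])
    ?_ R P h
  intro i x
  have h1 := hr i
  have h2 := hr x
  rw [decide_eq_true_iff, EuclideanSpace.dist_eq, Real.sqrt_le_left (by linarith)]
  simp only [Fin.sum_univ_succ, Real.dist_eq, sq_abs]
  simp
  constructor <;> intro h <;> nlinarith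

end DiskRep

/-- Disk graphs (vertices are closed disks in the plane with centers `p_i ∈ ℝ²` and radii
`r_i > 0`, with an edge when `|p_i − p_j| ≤ r_i + r_j`) admit implicit representations
with `m ≤ C·n^{log₂(31)/5}` bits per vertex. -/
theorem disk_implicit_representation :
    ∃ C : ℝ, 0 < C ∧ ∀ n : ℕ, 2 ≤ n →
      ∃ m : ℕ, (m : ℝ) ≤ C * (n : ℝ) ^ (Real.logb 2 31 / 5) ∧
        ∃ G : (Fin m → Bool) → (Fin m → Bool) → Bool,
          (∀ a b, G a b = G b a) ∧
          ∀ (p : Fin n → EuclideanSpace ℝ (Fin 2)) (r : Fin n → ℝ), (∀ i, 0 < r i) →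
            ∃ F : Fin n → (Fin m → Bool),
              ∀ i j : Fin n, i ≠ j →
                (G (F i) (F j) = true ↔ dist (p i) (p j) ≤ r i + r j) := by
  classical
  refine ⟨20021, by norm_num, fun n hn => ⟨_, DiskRep.size_bound n hn, ?_⟩⟩
  set t := ⌊1000 * (n : ℝ) ^ (9 / 10 : ℝ)⌋₊ with ht
  set m := 1 + Nat.clog 2 n * (t + 1) with hm
  let S : Finset (List Bool) := DiskRep.pats (n - 1) true t ∪ DiskRep.pats (n - 1) false t
  have hcard : Fintype.card (Fin n × S) ≤ Fintype.card (Fin m → Bool) := by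
    have h1 : #S ≤ n ^ t + n ^ t := by
      have e : n - 1 + 1 = n := by omega
      have h1 := DiskRep.card_pats (n - 1) true t
      have h2 := DiskRep.card_pats (n - 1) false t
      rw [e] at h1 h2
      exact (card_union_le _ _).trans (add_le_add h1 h2)
    have h2 : n ≤ 2 ^ Nat.clog 2 n := Nat.le_pow_clog (by norm_num) n
    simp only [Fintype.card_prod, Fintype.card_fin, Fintype.card_coe, Fintype.card_fun,
      Fintype.card_bool]
    calc n * #S ≤ n * (n ^ t + n ^ t) := by gcongr
      _ = 2 * n ^ (t + 1) := by ring
      _ ≤ 2 * (2 ^ Nat.clog 2 n) ^ (t + 1) := by gcongr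
      _ = 2 ^ m := by rw [← pow_mul, hm, pow_add 2 1, pow_one]
  obtain ⟨e⟩ := Function.Embedding.nonempty_of_card_le hcard
  refine ⟨fun a b => decide (∃ u v : Fin n × S, e u = a ∧ e v = b ∧
    u.2.1.getD v.1 false = true ∧ v.2.1.getD u.1 false = true), ?_, ?_⟩
  · intro a b
    apply decide_eq_decide.2
    constructor
    · rintro ⟨u, v, h1, h2, h3, h4⟩
      exact ⟨v, u, h2, h1, h4, h3⟩
    · rintro ⟨u, v, h1, h2, h3, h4⟩
      exact ⟨v, u, h2, h1, h4, h3⟩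
  intro p r hr
  set M : Fin n → Fin n → Bool := fun i x => decide (dist (p i) (p x) ≤ r i + r x) with hM
  obtain ⟨L, hlen, hmem, hL⟩ := DiskRep.ordering n hn M (DiskRep.disk_matrix p r hr)
  have hpos : ∀ i, ∃ q : Fin n, L[(q : ℕ)]? = some i := by
    intro i
    obtain ⟨q, hq, h⟩ := List.getElem_of_mem (hmem i)
    exact ⟨⟨q, hlen ▸ hq⟩, by simp [hq, h]⟩
  choose pos hpos using hpos
  have hS : ∀ i, L.map (M i) ∈ S := by
    intro i
    have h1 := hL i
    cases L with
    | nil => simp at hlen; omega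
    | cons x l =>
      simp only [List.map_cons] at h1 ⊢
      have := DiskRep.mem_pats (n - 1) (M i x) t (l.map (M i))
        (by simp at hlen ⊢; omega) h1
      apply mem_union.2
      cases hb : M i x
      · rw [hb] at this; exact Or.inr this
      · rw [hb] at this; exact Or.inl this
  have hget : ∀ i j, (L.map (M i)).getD (pos j) false = M i j := by
    intro i j
    simp [List.getD_eq_getElem?_getD, hpos]
  refine ⟨fun i => e (pos i, ⟨L.map (M i), hS i⟩), ?_⟩
  intro i j _
  rw [decide_eq_true_iff]
  constructor
  · rintro ⟨u, v, h1, h2, h3, -⟩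
    have h1 := e.injective h1
    have h2 := e.injective h2
    subst h1 h2
    simp only [hget] at h3
    simpa [hM] using h3
  · intro h
    refine ⟨_, _, rfl, rfl, ?_, ?_⟩
    · simp only [hget]
      simpa [hM] using h
    · simp only [hget]
      simpa [hM, dist_comm, add_comm] using h
end

section
/- Let x and y be complex numbers, and let p and q be nonzero polynomials with integer coefficients such that p(x) = 0 and q(y) = 0. Let a be the leading coefficient of p and b the leading coefficient of q. Then there exists a nonzero polynomial r with integer coefficients, of degree at most deg(p)·deg(q), such that r(a·b·(x − y)) = 0. -/
/-- If `x, y ∈ ℂ` are roots of nonzero integer polynomials `p, q` with leading coefficients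
`a, b` respectively, then there is a nonzero integer polynomial `r` of degree at most
`deg(p)·deg(q)` with `r(a·b·(x − y)) = 0`. -/
theorem difference_is_algebraic (x y : ℂ) (p q : Polynomial ℤ) (hp : p ≠ 0) (hq : q ≠ 0)
    (hx : Polynomial.aeval x p = 0) (hy : Polynomial.aeval y q = 0) :
    ∃ r : Polynomial ℤ, r ≠ 0 ∧ r.natDegree ≤ p.natDegree * q.natDegree ∧
      Polynomial.aeval ((p.leadingCoeff : ℂ) * (q.leadingCoeff : ℂ) * (x - y)) r = 0 := by
  have key : ∀ (w : ℂ) (f : Polynomial ℤ), f ≠ 0 → Polynomial.aeval w f = 0 →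
      IsIntegral ℚ w ∧ (minpoly ℚ w).natDegree ≤ f.natDegree := by
    intro w f hf hw
    have h0 : f.map (algebraMap ℤ ℚ) ≠ 0 :=
      (Polynomial.map_ne_zero_iff (algebraMap ℤ ℚ).injective_int).2 hf
    have h1 : Polynomial.aeval w (f.map (algebraMap ℤ ℚ)) = 0 := by
      rw [Polynomial.aeval_map_algebraMap, hw]
    refine ⟨IsAlgebraic.isIntegral ⟨_, h0, h1⟩, ?_⟩
    refine (Polynomial.natDegree_le_of_dvd (minpoly.dvd ℚ w h1) h0).trans ?_
    exact Polynomial.natDegree_map_le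
  obtain ⟨ix, dx⟩ := key x p hp hx
  obtain ⟨iy, dy⟩ := key y q hq hy
  generalize hz : (p.leadingCoeff : ℂ) * (q.leadingCoeff : ℂ) * (x - y) = z
  let Kx := IntermediateField.adjoin ℚ {x}
  let Ky := IntermediateField.adjoin ℚ {y}
  have : FiniteDimensional ℚ Kx := IntermediateField.adjoin.finiteDimensional ix
  have : FiniteDimensional ℚ Ky := IntermediateField.adjoin.finiteDimensional iy
  have hxL : x ∈ Kx ⊔ Ky :=
    (le_sup_left : Kx ≤ Kx ⊔ Ky) (IntermediateField.mem_adjoin_simple_self ℚ x)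
  have hyL : y ∈ Kx ⊔ Ky :=
    (le_sup_right : Ky ≤ Kx ⊔ Ky) (IntermediateField.mem_adjoin_simple_self ℚ y)
  have hzL : z ∈ Kx ⊔ Ky := by
    rw [← hz]
    exact mul_mem (mul_mem (intCast_mem _ _) (intCast_mem _ _)) (sub_mem hxL hyL)
  have : FiniteDimensional ℚ ↥(Kx ⊔ Ky) := IntermediateField.finiteDimensional_sup Kx Ky
  have hd : (minpoly ℚ z).natDegree ≤ p.natDegree * q.natDegree := by
    have h1 := minpoly.natDegree_le (A := ℚ) (⟨z, hzL⟩ : ↥(Kx ⊔ Ky))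
    have h2 : minpoly ℚ (⟨z, hzL⟩ : ↥(Kx ⊔ Ky)) = minpoly ℚ z :=
      (minpoly.algebraMap_eq (algebraMap ↥(Kx ⊔ Ky) ℂ).injective
        (⟨z, hzL⟩ : ↥(Kx ⊔ Ky))).symm
    rw [h2] at h1
    refine h1.trans ((IntermediateField.finrank_sup_le Kx Ky).trans ?_)
    have ex : Module.finrank ℚ Kx = _ := IntermediateField.adjoin.finrank ix
    have ey : Module.finrank ℚ Ky = _ := IntermediateField.adjoin.finrank iy
    rw [ex, ey]
    exact Nat.mul_le_mul dx dy
  have iz : IsIntegral ℚ z := by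
    have := (IsIntegral.of_finite ℚ (⟨z, hzL⟩ : ↥(Kx ⊔ Ky))).map (Kx ⊔ Ky).val
    exact this
  refine ⟨IsLocalization.integerNormalization (nonZeroDivisors ℤ) (minpoly ℚ z),
    mt IsFractionRing.integerNormalization_eq_zero_iff.mp (minpoly.ne_zero iz), ?_,
    IsLocalization.integerNormalization_aeval_eq_zero _ _ (minpoly.aeval ℚ z)⟩
  refine le_trans ?_ hd
  rw [Polynomial.natDegree_eq_support_max']
  · exact Polynomial.le_natDegree_of_mem_supp _
      (IsLocalization.integerNormalization_support _ _ (Finset.max'_mem _ _))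
  · exact mt IsFractionRing.integerNormalization_eq_zero_iff.mp (minpoly.ne_zero iz)
end
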